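/- arXiv:1403.5673 — 3 statements merged into one kernel-verified Lean document; each statement's English description precedes it below -/
import Mathlib

section
/- Let F be a field of characteristic 0 and let R be a finitely generated F-algebra that satisfies the Capelli identity C_m for some m. Then the nil radical of R is nilpotent: the sum N of all nil two-sided ideals of R is itself a nil ideal and there exists an integer s with N^s = 0. (Razmyslov's theorem.) -/
/-!
Polynomials that alternate in as many variables as the Capelli polynomial `C_n` behave like
determinants of `n × n` matrices. If `C_{n+1}` vanishes on `R`, then multiplying the alternating
variables of `C_n` in turn by `a` and summing up defines a trace of `a`, and in characteristic `0`
these traces satisfy a Cayley–Hamilton identity on the multiples of `C_n`. Multiplying by values of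
`C_n` makes the traces commute with each other and with right multiplication. By a Shirshov-type
argument, which rests on the Nagata–Higman theorem, they generate an algebra of finite type, hence a
noetherian one.

The trace of a nilpotent element is nilpotent, so modulo the nilradical of the algebra of traces the
Cayley–Hamilton identity reads `x ^ n = 0` on a nil subalgebra `N`, and the Nagata–Higman theorem
bounds the products of elements of `N`. As that nilradical is nilpotent, `J * J * N ^ d * J = 0` for
some `d`, where `J` is the ideal generated by the values of `C_n`. Since `R ⧸ J` satisfies `C_n`,
induction puts a power of `N` into `J`.
-/

open Finset Polynomial

namespace Razmyslov

section Interpolation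

variable {F A : Type*} [CommRing F] [Ring A] [Algebra F A]

variable (F) in
theorem algebraMap_inv_smul_succ_nsmul [Algebra ℚ F] (k : ℕ) (a : A) :
    algebraMap ℚ F (k + 1 : ℕ)⁻¹ • (k + 1) • a = a := by
  rw [← Nat.cast_smul_eq_nsmul F, smul_smul, ← map_natCast (algebraMap ℚ F), ← map_mul,
    inv_mul_cancel₀ (by positivity), map_one, one_smul]

variable (F) in
/-- Evaluation of polynomials at a natural number. Since `t` is central, this is multiplicative
even over a noncommutative ring. -/
noncomputable def evalNatCast (t : ℕ) : A[X] →ₐ[F] A where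
  __ := eval₂RingHom' (RingHom.id A) (t : A) fun a => Nat.commute_cast a t
  commutes' _ := eval₂_C _ _

@[simp]
theorem evalNatCast_C (t : ℕ) (a : A) : evalNatCast F t (C a) = a :=
  eval_C

@[simp]
theorem evalNatCast_X (t : ℕ) : evalNatCast F t (X : A[X]) = t :=
  eval_X

theorem evalNatCast_eq_sum_range (t : ℕ) (p : A[X]) :
    evalNatCast F t p = ∑ j ∈ range (p.natDegree + 1), t ^ j • p.coeff j := by
  refine (eval_eq_sum_range (p := p) (t : A)).trans (sum_congr rfl fun j _ => ?_)
  rw [← Nat.cast_pow, ← Nat.cast_comm, ← nsmul_eq_mul]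

theorem coeff_mem_of_forall_evalNatCast_mem [Algebra ℚ F] {G : Submodule F A} {p : A[X]}
    (hp : ∀ t, evalNatCast F t p ∈ G) (k : ℕ) : p.coeff k ∈ G := by
  obtain hk | hk := lt_or_ge p.natDegree k
  · simp [coeff_eq_zero_of_natDegree_lt hk]
  let n := p.natDegree + 1
  let k' : Fin n := ⟨k, Nat.lt_succ_of_le hk⟩
  let V : Matrix (Fin n) (Fin n) ℚ := Matrix.vandermonde fun i => (i : ℚ)
  have hdet : IsUnit V.det := (Matrix.det_vandermonde_ne_zero_iff.2
    (Nat.cast_injective.comp Fin.val_injective)).isUnit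
  have heval (i : Fin n) : evalNatCast F i p = ∑ j : Fin n, algebraMap ℚ F (V i j) • p.coeff j := by
    rw [evalNatCast_eq_sum_range, ← Fin.sum_univ_eq_sum_range fun j => (i : ℕ) ^ j • p.coeff j]
    refine sum_congr rfl fun j _ => ?_
    have hV : algebraMap ℚ F (V i j) = (((i : ℕ) ^ (j : ℕ) : ℕ) : F) := by
      simp [V, Matrix.vandermonde_apply]
    rw [hV, Nat.cast_smul_eq_nsmul]
  have hcoeff : p.coeff k = ∑ i : Fin n, algebraMap ℚ F (V⁻¹ k' i) • evalNatCast F i p := by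
    simp_rw [heval, smul_sum, smul_smul, ← map_mul]
    rw [sum_comm]
    simp_rw [← sum_smul, ← map_sum, ← Matrix.mul_apply, Matrix.nonsing_inv_mul V hdet]
    rw [sum_eq_single k' (fun j _ hj => by simp [Matrix.one_apply_ne' hj]) (by simp)]
    simp [k']
  rw [hcoeff]
  exact sum_mem fun i _ => G.smul_mem _ (hp i)

end Interpolation

section NagataHigman

section Monoid

variable {M σ : Type*} [Monoid M] [SetLike σ M] {s : σ} {x g : M}

theorem pow_mul_mem (hx : ∀ g ∈ s, x * g ∈ s) (hg : g ∈ s) (n : ℕ) : x ^ n * g ∈ s := by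
  induction n with
  | zero => simpa
  | succ n ih => simpa only [pow_succ', mul_assoc] using hx _ ih

theorem mul_pow_mem (hx : ∀ g ∈ s, g * x ∈ s) (hg : g ∈ s) (n : ℕ) : g * x ^ n ∈ s := by
  induction n with
  | zero => simpa
  | succ n ih => simpa only [pow_succ, mul_assoc] using hx _ ih

theorem pow_succ_mem [MulMemClass σ M] (hx : x ∈ s) (n : ℕ) : x ^ (n + 1) ∈ s := by
  simpa only [pow_succ] using pow_mul_mem (fun _ hg => mul_mem hx hg) hx n

end Monoid

variable {F A : Type*} [CommRing F] [Ring A] [Algebra F A]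

theorem coeff_one_C_add_C_mul_X_pow_succ (x y : A) (k : ℕ) :
    ((C x + C y * X) ^ (k + 1)).coeff 1 = ∑ p ∈ antidiagonal k, x ^ p.1 * y * x ^ p.2 := by
  have hcoeff_zero (n : ℕ) : ((C x + C y * X) ^ n).coeff 0 = x ^ n := by
    induction n with
    | zero => simp
    | succ n ih => simp [pow_succ, mul_coeff_zero, ih]
  induction k with
  | zero => simp
  | succ k ih =>
    rw [pow_succ', mul_coeff_one, ih, hcoeff_zero, Nat.antidiagonal_succ]
    simp [mul_sum, mul_assoc, pow_succ', add_comm]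

/-- `Absorbs S G` says that the submodule `G` is stable under left and right multiplication by the
nonunital subalgebra `S`. -/
structure Absorbs (S : NonUnitalSubalgebra F A) (G : Submodule F A) : Prop where
  mul_mem_left {s g : A} (hs : s ∈ S) (hg : g ∈ G) : s * g ∈ G
  mul_mem_right {s g : A} (hs : s ∈ S) (hg : g ∈ G) : g * s ∈ G

variable [Algebra ℚ F] {S : NonUnitalSubalgebra F A} {G : Submodule F A} {k : ℕ}

theorem sum_antidiagonal_pow_mul_mul_pow_mem (hG : ∀ x ∈ S, x ^ (k + 1) ∈ G)
    {x y : A} (hx : x ∈ S) (hy : y ∈ S) :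
    ∑ p ∈ antidiagonal k, x ^ p.1 * y * x ^ p.2 ∈ G := by
  rw [← coeff_one_C_add_C_mul_X_pow_succ]
  refine coeff_mem_of_forall_evalNatCast_mem (fun t => ?_) 1
  have heval : evalNatCast F t ((C x + C y * X) ^ (k + 1)) = (x + t • y) ^ (k + 1) := by
    simp [Nat.cast_comm]
  rw [heval]
  exact hG _ (add_mem hx (nsmul_mem hy t))

-- Higman's trick: linearize `x ^ (k + 1)` at `c * z ^ j`, multiply by `z ^ (k - j)` and sum over
-- `j`. Grouped by the power of `x` on the right, the sum consists of linearizations of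
-- `z ^ (k + 1)` at that power, except where the power is `x ^ 0 = 1`, which contributes
-- `(k + 1) • x ^ k * c * z ^ k`.
theorem pow_mul_mul_pow_mem (hS : Absorbs S G) (hG : ∀ x ∈ S, x ^ (k + 1) ∈ G) {x c z : A}
    (hx : x ∈ S) (hc : c ∈ S) (hz : z ∈ S) : x ^ k * c * z ^ k ∈ G := by
  have hcz (j : ℕ) : c * z ^ j ∈ S := mul_pow_mem (fun g hg => mul_mem hg hz) hc j
  have hxc (i : ℕ) : x ^ i * c ∈ S := pow_mul_mem (fun g hg => mul_mem hx hg) hc i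
  have hdouble : ∑ p ∈ antidiagonal k,
      x ^ p.1 * c * ∑ q ∈ antidiagonal k, z ^ q.1 * x ^ p.2 * z ^ q.2 ∈ G := by
    have := G.sum_mem (t := antidiagonal k) fun q _ =>
      mul_pow_mem (fun g hg => hS.mul_mem_right hz hg)
        (sum_antidiagonal_pow_mul_mul_pow_mem hG hx (hcz q.1)) q.2
    simp_rw [sum_mul, mul_sum, mul_assoc] at this ⊢
    rwa [sum_comm]
  have hinner (p : ℕ × ℕ) (hp : p ≠ (k, 0)) (hpk : p ∈ antidiagonal k) :
      x ^ p.1 * c * ∑ q ∈ antidiagonal k, z ^ q.1 * x ^ p.2 * z ^ q.2 ∈ G := by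
    obtain ⟨i, _ | j⟩ := p
    · simp_all
    · exact hS.mul_mem_left (hxc i)
        (sum_antidiagonal_pow_mul_mul_pow_mem hG hz (pow_succ_mem hx j))
  rw [← sum_erase_add _ _ (show (k, 0) ∈ antidiagonal k by simp)] at hdouble
  have hmain := (G.add_mem_iff_right (sum_mem fun p hp =>
    hinner p (ne_of_mem_erase hp) (mem_of_mem_erase hp))).1 hdouble
  have hmul : ∑ q ∈ antidiagonal k, z ^ q.1 * x ^ 0 * z ^ q.2 = (k + 1) • z ^ k := by
    rw [sum_congr rfl fun q hq => by rw [pow_zero, mul_one, ← pow_add, mem_antidiagonal.1 hq],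
      sum_const, Nat.card_antidiagonal]
  simpa only [hmul, mul_smul_comm, algebraMap_inv_smul_succ_nsmul] using
    G.smul_mem (algebraMap ℚ F (k + 1 : ℕ)⁻¹) hmain

theorem mul_mul_le_of_pow_succ_mem {P : Submodule F A} (hS : Absorbs S G)
    (hP : ∀ G' : Submodule F A, Absorbs S G' → (∀ x ∈ S, x ^ k ∈ G') → P ≤ G')
    (hG : ∀ x ∈ S, x ^ (k + 1) ∈ G) : P * S.toSubmodule * P ≤ G := by
  let G₁ : Submodule F A := ⨅ c ∈ S, ⨅ z ∈ S, G.comap (LinearMap.mulRight F (c * z ^ k))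
  let G₂ : Submodule F A := ⨅ w ∈ P, ⨅ c ∈ S, G.comap (LinearMap.mulLeft F (w * c))
  have mem_G₁ {g : A} : g ∈ G₁ ↔ ∀ c ∈ S, ∀ z ∈ S, g * (c * z ^ k) ∈ G := by
    simp [G₁, mul_assoc]
  have mem_G₂ {g : A} : g ∈ G₂ ↔ ∀ w ∈ P, ∀ c ∈ S, w * (c * g) ∈ G := by
    simp [G₂]
  have hP₁ : P ≤ G₁ := by
    refine hP G₁ ⟨fun {s g} hs hg => ?_, fun {s g} hs hg => ?_⟩ fun x hx => ?_ <;>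
      refine mem_G₁.2 fun c hc z hz => ?_
    · exact mul_assoc s g _ ▸ hS.mul_mem_left hs (mem_G₁.1 hg c hc z hz)
    · simpa only [mul_assoc] using mem_G₁.1 hg (s * c) (mul_mem hs hc) z hz
    · exact mul_assoc (x ^ k) c _ ▸ pow_mul_mul_pow_mem hS hG hx hc hz
  have hP₂ : P ≤ G₂ := by
    refine hP G₂ ⟨fun {s g} hs hg => ?_, fun {s g} hs hg => ?_⟩ fun z hz => ?_ <;>
      refine mem_G₂.2 fun w hw c hc => ?_
    · exact mul_assoc c s g ▸ mem_G₂.1 hg w hw (c * s) (mul_mem hc hs)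
    · simpa only [mul_assoc] using hS.mul_mem_right hs (mem_G₂.1 hg w hw c hc)
    · exact mem_G₁.1 (hP₁ hw) c hc z hz
  rw [mul_assoc]
  refine Submodule.mul_le.2 fun w hw v hv => ?_
  induction hv using Submodule.mul_induction_on' with
  | mem_mul_mem c hc g hg => exact mem_G₂.1 (hP₂ hg) w hw c hc
  | add v₁ _ v₂ _ h₁ h₂ => simpa only [mul_add] using add_mem h₁ h₂

/-- The **Nagata–Higman theorem**, relative to a submodule `G` absorbing `S`. -/
theorem nagata_higman (n : ℕ) (hS : Absorbs S G) (hG : ∀ x ∈ S, x ^ n ∈ G) :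
    S.toSubmodule ^ (2 ^ n - 1) ≤ G := by
  induction n generalizing G with
  | zero => simpa using hG 0 S.zero_mem
  | succ k ih =>
    have hexp : 2 ^ (k + 1) - 1 = (2 ^ k - 1) + 1 + (2 ^ k - 1) := by
      have := Nat.one_le_two_pow (n := k)
      lia
    rw [hexp, pow_add, pow_succ]
    exact mul_mul_le_of_pow_succ_mem hS (fun _ => ih) hG

end NagataHigman

section EsymmOfPsum

variable {F C C' : Type*} [CommRing F] [Algebra ℚ F] [Ring C] [Algebra F C] [Ring C']
  [Algebra F C']

variable (F) in
/-- The elementary symmetric functions with prescribed power sums `p 1, p 2, …`, computed by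
Newton's identities. The value `p 0` is never used. -/
def esymmOfPsum (p : ℕ → C) : ℕ → C
  | 0 => 1
  | k + 1 => algebraMap ℚ F (k + 1 : ℕ)⁻¹ •
      ∑ i : Fin (k + 1), (-1) ^ (k + i : ℕ) * esymmOfPsum p i * p (k + 1 - i)

theorem esymmOfPsum_zero (p : ℕ → C) : esymmOfPsum F p 0 = 1 := by
  rw [esymmOfPsum]

theorem esymmOfPsum_succ (p : ℕ → C) (k : ℕ) :
    esymmOfPsum F p (k + 1) = algebraMap ℚ F (k + 1 : ℕ)⁻¹ •
      ∑ i ∈ range (k + 1), (-1) ^ (k + i) * esymmOfPsum F p i * p (k + 1 - i) := by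
  rw [esymmOfPsum,
    ← Fin.sum_univ_eq_sum_range fun i => (-1) ^ (k + i) * esymmOfPsum F p i * p (k + 1 - i)]

theorem map_esymmOfPsum (f : C →ₐ[F] C') (p : ℕ → C) (k : ℕ) :
    f (esymmOfPsum F p k) = esymmOfPsum F (fun j => f (p j)) k := by
  induction k using Nat.strong_induction_on with
  | _ k ih =>
    cases k with
    | zero => simp [esymmOfPsum_zero]
    | succ k =>
      simp only [esymmOfPsum_succ, map_smul, map_sum, map_mul, map_pow, map_neg, map_one]
      exact congrArg _ (sum_congr rfl fun i hi => by rw [ih i (mem_range.1 hi)])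

theorem esymmOfPsum_mem {S : Subalgebra F C} {p : ℕ → C} (hp : ∀ j, 1 ≤ j → p j ∈ S) (k : ℕ) :
    esymmOfPsum F p k ∈ S := by
  induction k using Nat.strong_induction_on with
  | _ k ih =>
    cases k with
    | zero => simpa only [esymmOfPsum_zero] using S.one_mem
    | succ k =>
      rw [esymmOfPsum_succ]
      refine S.smul_mem (sum_mem fun i hi => ?_) _
      have hi := mem_range.1 hi
      exact mul_mem (mul_mem (pow_mem (neg_mem S.one_mem) _) (ih i hi)) (hp _ (by lia))

theorem esymmOfPsum_succ_mem_ideal {I : Ideal C} {p : ℕ → C}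
    (hp : ∀ j, 1 ≤ j → p j ∈ I) (k : ℕ) : esymmOfPsum F p (k + 1) ∈ I := by
  rw [esymmOfPsum_succ]
  exact Submodule.smul_of_tower_mem I _
    (sum_mem fun i hi => I.mul_mem_left _ (hp _ (by have := mem_range.1 hi; lia)))

theorem esymmOfPsum_psum (σ : Type*) [Fintype σ] (k : ℕ) :
    esymmOfPsum F (MvPolynomial.psum σ F) k = MvPolynomial.esymm σ F k := by
  induction k using Nat.strong_induction_on with
  | _ k ih =>
    cases k with
    | zero => simp [esymmOfPsum_zero]
    | succ k =>
      have newton := MvPolynomial.mul_esymm_eq_sum σ F (k + 1)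
      rw [sum_filter, Nat.sum_antidiagonal_eq_sum_range_succ_mk, sum_range_succ, if_neg (by simp),
        add_zero, sum_congr rfl fun i hi => if_pos (mem_range.1 hi)] at newton
      rw [esymmOfPsum_succ, ← algebraMap_inv_smul_succ_nsmul F k (MvPolynomial.esymm σ F (k + 1)),
        nsmul_eq_mul, newton, mul_sum]
      refine congrArg _ (sum_congr rfl fun i hi => ?_)
      rw [ih i (mem_range.1 hi), pow_add, pow_add]
      ring

variable {M M' : Type*} [AddCommGroup M] [Module F M] [AddCommGroup M'] [Module F M']

omit [Algebra ℚ F] in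
theorem map_neg_one_pow_apply (f : M →ₗ[F] M') (k : ℕ) (m : M) :
    f (((-1) ^ k : Module.End F M) m) = ((-1) ^ k : Module.End F M') (f m) := by
  obtain hk | hk := k.even_or_odd <;> simp [hk.neg_one_pow]

theorem map_esymmOfPsum_apply {f : M →ₗ[F] M'} {p : ℕ → Module.End F M}
    {p' : ℕ → Module.End F M'} (h : ∀ j m, f (p j m) = p' j (f m)) (k : ℕ) (m : M) :
    f (esymmOfPsum F p k m) = esymmOfPsum F p' k (f m) := by
  induction k using Nat.strong_induction_on generalizing m with
  | _ k ih =>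
    cases k with
    | zero => simp [esymmOfPsum_zero]
    | succ k =>
      simp only [esymmOfPsum_succ, LinearMap.smul_apply, LinearMap.sum_apply, map_smul, map_sum,
        Module.End.mul_apply]
      exact congrArg _ (sum_congr rfl fun i hi => by
        rw [map_neg_one_pow_apply, ih i (mem_range.1 hi), h])

end EsymmOfPsum

section MapCoeff

variable {F R C : Type*} [CommRing F] [Ring R] [Algebra F R] [Ring C] [Algebra F C]

/-- The coefficientwise extension of a linear map to polynomials. -/
noncomputable def mapCoeff (T : R →ₗ[F] C) : R[X] →ₗ[F] C[X] where
  toFun p := p.sum fun i a => monomial i (T a)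
  map_add' p q := sum_add_index p q _ (by simp) (by simp)
  map_smul' r p := (sum_smul_index' p r _ (by simp)).trans <| by
    simp_rw [map_smul, RingHom.id_apply, ← smul_monomial, Polynomial.smul_sum]

@[simp]
theorem coeff_mapCoeff (T : R →ₗ[F] C) (p : R[X]) (i : ℕ) :
    (mapCoeff T p).coeff i = T (p.coeff i) := by
  change (p.sum fun i a => monomial i (T a)).coeff i = _
  simp +contextual [Polynomial.sum, coeff_monomial]

@[simp]
theorem evalNatCast_monomial (t i : ℕ) (a : R) :
    evalNatCast F t (monomial i a) = t ^ i • a := by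
  rw [nsmul_eq_mul, Nat.cast_comm, Nat.cast_pow]
  exact eval_monomial

theorem evalNatCast_mapCoeff (T : R →ₗ[F] C) (t : ℕ) (p : R[X]) :
    evalNatCast F t (mapCoeff T p) = T (evalNatCast F t p) := by
  induction p using Polynomial.induction_on' with
  | add p q hp hq => simp only [map_add, hp, hq]
  | monomial i a =>
    have : mapCoeff T (monomial i a) = monomial i (T a) := by
      ext j
      simp [coeff_monomial, apply_ite T]
    rw [this, evalNatCast_monomial, evalNatCast_monomial, map_nsmul]

end MapCoeff

section CayleyHamilton

variable {F R C : Type*} [CommRing F] [Algebra ℚ F] [Ring R] [Algebra F R] [Ring C]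
  [Algebra F C]

/-- `T` satisfies the Cayley–Hamilton identity of degree `n`: with respect to `T`, every element
is a root of the characteristic polynomial of degree `n` that Newton's identities
compute from its power traces `T (x ^ j)`. -/
def IsCayleyHamilton (n : ℕ) (T : R →ₗ[F] C) : Prop :=
  ∀ a b x : R, ∑ k ∈ range (n + 1),
    (-1) ^ k * esymmOfPsum F (fun j => T (x ^ j)) k * T (a * x ^ (n - k) * b) = 0

variable {n : ℕ} {T : R →ₗ[F] C}

-- The identity holds at every natural value of the indeterminate.
theorem IsCayleyHamilton.mapCoeff (hT : IsCayleyHamilton n T) :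
    IsCayleyHamilton n (mapCoeff T) := by
  intro p q g
  ext i
  rw [coeff_zero, ← Submodule.mem_bot F]
  refine coeff_mem_of_forall_evalNatCast_mem (fun t => (Submodule.mem_bot F).2 ?_) i
  rw [← hT (evalNatCast F t p) (evalNatCast F t q) (evalNatCast F t g)]
  simp only [map_sum, map_mul, map_pow, map_neg, map_one, map_esymmOfPsum, evalNatCast_mapCoeff]

theorem IsCayleyHamilton.apply_mul_pow_mul (hT : IsCayleyHamilton n T) (a b x : R) :
    T (a * x ^ n * b) = -∑ k ∈ range n,
      (-1) ^ (k + 1) * esymmOfPsum F (fun j => T (x ^ j)) (k + 1) *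
        T (a * x ^ (n - (k + 1)) * b) := by
  have := hT a b x
  rw [sum_range_succ'] at this
  simpa [esymmOfPsum_zero, eq_neg_iff_add_eq_zero, add_comm] using this

end CayleyHamilton

section Shirshov

variable {F R C : Type*} [CommRing F] [Ring R] [Algebra F R] [CommRing C] [Algebra F C]

/-- The augmentation ideal of the Rees algebra of the filtration `V ^ i`: the polynomials without
constant term whose `i`-th coefficient lies in `V ^ i`. -/
def reesAugmentation (V : Submodule F R) : NonUnitalSubalgebra F R[X] where
  carrier := {g | g.coeff 0 = 0 ∧ ∀ i, g.coeff i ∈ V ^ i}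
  zero_mem' := by simp
  add_mem' hf hg := ⟨by simp [hf.1, hg.1], fun i => by simpa using add_mem (hf.2 i) (hg.2 i)⟩
  smul_mem' r g hg := ⟨by simp [hg.1], fun i => by simpa using (V ^ i).smul_mem r (hg.2 i)⟩
  mul_mem' {f g} hf hg := ⟨by simp [mul_coeff_zero, hf.1], fun i => by
    rw [coeff_mul]
    refine sum_mem fun p hp => ?_
    rw [← mem_antidiagonal.1 hp, pow_add]
    exact Submodule.mul_mem_mul (hf.2 _) (hg.2 _)⟩

variable {V : Submodule F R}

theorem mem_reesAugmentation {g : R[X]} :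
    g ∈ reesAugmentation V ↔ g.coeff 0 = 0 ∧ ∀ i, g.coeff i ∈ V ^ i :=
  Iff.rfl

theorem coeff_pow_mem_pow {g : R[X]} (hg : g ∈ reesAugmentation V) (j i : ℕ) :
    (g ^ j).coeff i ∈ V ^ i := by
  induction j generalizing i with
  | zero =>
    rw [pow_zero, coeff_one]
    split_ifs with hi
    · subst hi
      exact Submodule.one_le.1 (pow_zero V).ge
    · exact zero_mem _
  | succ j ih =>
    rw [pow_succ, coeff_mul]
    refine sum_mem fun p hp => ?_
    rw [← mem_antidiagonal.1 hp, pow_add]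
    exact Submodule.mul_mem_mul (ih p.1) (hg.2 p.2)

theorem monomial_mem_reesAugmentation_pow {d : ℕ} {x : R} (hx : x ∈ V ^ d) :
    monomial d x ∈ (reesAugmentation V).toSubmodule ^ d := by
  induction d generalizing x with
  | zero =>
    rw [pow_zero, Submodule.mem_one] at hx ⊢
    obtain ⟨r, rfl⟩ := hx
    exact ⟨r, rfl⟩
  | succ d ih =>
    rw [pow_succ] at hx ⊢
    induction hx using Submodule.mul_induction_on' with
    | mem_mul_mem y hy v hv =>
      rw [← monomial_mul_monomial]
      refine Submodule.mul_mem_mul (ih hy) <|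
        mem_reesAugmentation.2 ⟨by simp [coeff_monomial], fun i => ?_⟩
      obtain rfl | hi := eq_or_ne i 1
      · simpa
      · simp [coeff_monomial_of_ne v hi]
    | add x _ y _ hx hy => simpa only [map_add] using add_mem hx hy

/-- The polynomials over `C` whose coefficients up to degree `L` lie in `B`. -/
def truncatedLifts (B : Subalgebra F C) (L : ℕ) : Subalgebra F C[X] where
  carrier := {p | ∀ i ≤ L, p.coeff i ∈ B}
  add_mem' hp hq i hi := by simpa using add_mem (hp i hi) (hq i hi)
  mul_mem' {p q} hp hq i hi := by
    rw [coeff_mul]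
    refine sum_mem fun j hj => mul_mem (hp _ ?_) (hq _ ?_) <;>
    · have := mem_antidiagonal.1 hj
      lia
  algebraMap_mem' r i _ := by
    rw [Polynomial.algebraMap_apply, coeff_C]
    split_ifs
    exacts [B.algebraMap_mem r, B.zero_mem]

/-- The subalgebra of `C` generated by the traces of the products of `L` elements of `V`. -/
abbrev traceAlgebra (T : R →ₗ[F] C) (V : Submodule F R) (L : ℕ) : Subalgebra F C :=
  Algebra.adjoin F ((V ^ L).map T : Set C)

/-- The polynomials whose coefficients `g.coeff l` have, inside every product
`V ^ a * g.coeff l * V ^ (b + 1)` of total degree `L + 1`, traces in the algebra generated by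
traces of degree `L`. -/
def reducible (T : R →ₗ[F] C) (V : Submodule F R) (L : ℕ) : Submodule F R[X] where
  carrier := {g | ∀ a l b, a + l + b = L → ∀ u ∈ V ^ a, ∀ v ∈ V ^ (b + 1),
    T (u * g.coeff l * v) ∈ traceAlgebra T V L}
  zero_mem' := by simp
  add_mem' hf hg a l b h u hu v hv := by
    simpa [mul_add, add_mul] using add_mem (hf a l b h u hu v hv) (hg a l b h u hu v hv)
  smul_mem' r g hg a l b h u hu v hv := by
    simpa using Subalgebra.smul_mem _ (hg a l b h u hu v hv) r

theorem absorbs_reesAugmentation_reducible (T : R →ₗ[F] C) (V : Submodule F R) (L : ℕ) :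
    Absorbs (reesAugmentation V) (reducible T V L) where
  mul_mem_left {s g} hs hg a l b h u hu v hv := by
    rw [coeff_mul, mul_sum, sum_mul, map_sum]
    refine sum_mem fun p hp => ?_
    rw [HasAntidiagonal.mem_antidiagonal] at hp
    rw [← mul_assoc]
    refine hg (a + p.1) p.2 b (by lia) _ ?_ v hv
    rw [pow_add]
    exact Submodule.mul_mem_mul hu (hs.2 _)
  mul_mem_right {s g} hs hg a l b h u hu v hv := by
    rw [coeff_mul, mul_sum, sum_mul, map_sum]
    refine sum_mem fun p hp => ?_
    rw [HasAntidiagonal.mem_antidiagonal] at hp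
    rw [← mul_assoc, mul_assoc _ (s.coeff p.2)]
    refine hg a p.1 (p.2 + b) (by lia) u hu _ ?_
    rw [add_assoc, pow_add]
    exact Submodule.mul_mem_mul (hs.2 _) hv

theorem exists_mem_pow_of_adjoin_eq_top {s : Set R} (hs : Algebra.adjoin F s = ⊤)
    (hV : 1 ≤ V) (hsV : s ⊆ V) (x : R) : ∃ L, x ∈ V ^ L := by
  induction hs.symm ▸ Algebra.mem_top (R := F) (x := x) using Algebra.adjoin_induction with
  | mem x hx => exact ⟨1, by simpa using hsV hx⟩
  | algebraMap r => exact ⟨0, by simp [Submodule.mem_one]⟩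
  | add x y _ _ hx hy =>
    obtain ⟨i, hi⟩ := hx
    obtain ⟨j, hj⟩ := hy
    exact ⟨max i j, add_mem (pow_le_pow_right₀ hV (le_max_left i j) hi)
      (pow_le_pow_right₀ hV (le_max_right i j) hj)⟩
  | mul x y _ _ hx hy =>
    obtain ⟨i, hi⟩ := hx
    obtain ⟨j, hj⟩ := hy
    exact ⟨i + j, pow_add V i j ▸ Submodule.mul_mem_mul hi hj⟩

theorem map_pow_le_map_pow (T : R →ₗ[F] C) (hV : 1 ≤ V) {i j : ℕ} (hij : i ≤ j) :
    (V ^ i).map T ≤ (V ^ j).map T :=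
  Submodule.map_mono (pow_le_pow_right₀ hV hij)

variable [Algebra ℚ F] {n L : ℕ} {T : R →ₗ[F] C}

theorem pow_mem_reducible (hV : 1 ≤ V) (hT : IsCayleyHamilton n T) {g : R[X]}
    (hg : g ∈ reesAugmentation V) : g ^ n ∈ reducible T V L := by
  intro a l b h u hu v hv
  let p : ℕ → C[X] := fun j => mapCoeff T (g ^ j)
  have hp_mem (k : ℕ) : esymmOfPsum F p k ∈ truncatedLifts (traceAlgebra T V L) L := by
    refine esymmOfPsum_mem (fun j _ => ?_) k
    intro i hi
    exact Algebra.subset_adjoin <| map_pow_le_map_pow T hV hi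
      ⟨_, coeff_pow_mem_pow hg j i, (coeff_mapCoeff ..).symm⟩
  have hp_zero (k : ℕ) : (esymmOfPsum F p (k + 1)).coeff 0 = 0 := by
    refine X_dvd_iff.1 (Ideal.mem_span_singleton.1 (esymmOfPsum_succ_mem_ideal (fun j hj => ?_) k))
    obtain ⟨j, rfl⟩ := Nat.exists_eq_add_of_le' hj
    simp [p, Ideal.mem_span_singleton, X_dvd_iff, pow_succ, mul_coeff_zero, hg.1]
  have hCH := congrArg (fun f => f.coeff l)
    (hT.mapCoeff.apply_mul_pow_mul (Polynomial.C u) (Polynomial.C v) g)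
  simp only [coeff_mapCoeff, coeff_mul_C, coeff_C_mul] at hCH
  rw [hCH, coeff_neg, finsetSum_coeff]
  refine neg_mem (sum_mem fun k _ => ?_)
  rw [coeff_mul]
  refine sum_mem fun q hq => ?_
  rw [HasAntidiagonal.mem_antidiagonal] at hq
  have hq_mem : ((-1) ^ (k + 1) * esymmOfPsum F p (k + 1)).coeff q.1 ∈ traceAlgebra T V L :=
    mul_mem (pow_mem (neg_mem (one_mem _)) _) (hp_mem (k + 1)) q.1 (by lia)
  obtain hq₁ | hq₁ := Nat.eq_zero_or_pos q.1
  · rw [hq₁, mul_coeff_zero, hp_zero, mul_zero, zero_mul]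
    exact zero_mem _
  · refine mul_mem hq_mem (Algebra.subset_adjoin <| map_pow_le_map_pow T hV
      (show a + q.2 + (b + 1) ≤ L by lia) ⟨_, ?_, (coeff_mapCoeff ..).symm⟩)
    rw [coeff_mul_C, coeff_C_mul, pow_add, pow_add]
    exact Submodule.mul_mem_mul (Submodule.mul_mem_mul hu (coeff_pow_mem_pow hg _ _)) hv

theorem traceAlgebra_succ_le (hV : 1 ≤ V) (hT : IsCayleyHamilton n T) (hL : 2 ^ n - 1 ≤ L) :
    traceAlgebra T V (L + 1) ≤ traceAlgebra T V L := by
  obtain ⟨a, rfl⟩ := Nat.exists_eq_add_of_le' hL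
  refine Algebra.adjoin_le (Set.image_subset_iff.2 ?_)
  change V ^ (a + (2 ^ n - 1) + 1) ≤ (traceAlgebra T V (a + (2 ^ n - 1))).toSubmodule.comap T
  rw [pow_succ, pow_add]
  refine Submodule.mul_le.2 fun w hw v hv => ?_
  induction hw using Submodule.mul_induction_on' with
  | mem_mul_mem u hu x hx =>
    have hred := nagata_higman n (absorbs_reesAugmentation_reducible T V (a + (2 ^ n - 1)))
      (fun g hg => pow_mem_reducible hV hT hg) (monomial_mem_reesAugmentation_pow hx)
    simpa using hred a _ 0 rfl u hu v (by simpa using hv)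
  | add w₁ _ w₂ _ h₁ h₂ => simpa only [add_mul] using add_mem h₁ h₂

theorem IsCayleyHamilton.fg_adjoin_range [Algebra.FiniteType F R] (hT : IsCayleyHamilton n T) :
    (Algebra.adjoin F (Set.range T)).FG := by
  obtain ⟨s, hs⟩ := Algebra.FiniteType.out (R := F) (A := R)
  let V : Submodule F R := Submodule.span F (insert 1 s)
  have hV : 1 ≤ V := Submodule.one_le.2 (Submodule.subset_span (Set.mem_insert 1 _))
  let D := 2 ^ n - 1
  have hle {L : ℕ} (hL : D ≤ L) : traceAlgebra T V L ≤ traceAlgebra T V D :=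
    Nat.le_induction le_rfl (fun L hL ih => (traceAlgebra_succ_le hV hT hL).trans ih) L hL
  have heq : Algebra.adjoin F (Set.range T) = traceAlgebra T V D := by
    refine le_antisymm (Algebra.adjoin_le ?_) (Algebra.adjoin_mono (by rintro _ ⟨x, -, rfl⟩; simp))
    rintro _ ⟨x, rfl⟩
    obtain ⟨L, hL⟩ := exists_mem_pow_of_adjoin_eq_top hs hV
      ((Set.subset_insert 1 _).trans Submodule.subset_span) x
    exact hle (le_max_right L D) (Algebra.subset_adjoin
      (map_pow_le_map_pow T hV (le_max_left L D) ⟨x, hL, rfl⟩))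
  have hV_fg : V.FG := Submodule.fg_span (s.finite_toSet.insert 1)
  obtain ⟨t, ht⟩ := (hV_fg.pow D).map T
  rw [heq, traceAlgebra, ← ht, Algebra.adjoin_span]
  exact Subalgebra.fg_adjoin_finset t

end Shirshov

section NoetherianTraces

variable {F R C Q : Type*} [CommRing F] [Algebra ℚ F] [Ring R] [Algebra F R] [CommRing C]
  [Algebra F C] [AddCommGroup Q] [Module F Q] [Module C Q] [IsScalarTower F C Q]
  {ρ : R →ₗ[F] Module.End C Q} {T : R →ₗ[F] C} {N : NonUnitalSubalgebra F R} {n : ℕ}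

theorem range_le_nilradical_smul_top (hρ : ∀ a b, ρ (a * b) = ρ b * ρ a)
    (hCH : ∀ x, ∑ k ∈ range (n + 1),
      ((-1) ^ k * esymmOfPsum F (fun j => T (x ^ j)) k) • ρ (x ^ (n - k)) = 0)
    (hN : ∀ z ∈ N, IsNilpotent (T z)) {x : R} (hx : x ∈ N.toSubmodule ^ (2 ^ n - 1)) :
    LinearMap.range (ρ x) ≤ nilradical C • (⊤ : Submodule C Q) := by
  let I := nilradical C
  let G : Submodule F R :=
    { carrier := {x | ∀ q, ρ x q ∈ I • (⊤ : Submodule C Q)}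
      zero_mem' := by simp
      add_mem' := fun hx hy q => by simpa using add_mem (hx q) (hy q)
      smul_mem' := fun r x hx q => by
        simpa using Submodule.smul_of_tower_mem _ r (hx q) }
  have hG : Absorbs N G :=
    { mul_mem_left := fun {s g} _ hg q => by
        rw [hρ]
        exact hg (ρ s q)
      mul_mem_right := fun {s g} _ hg q => by
        have := Submodule.mem_map_of_mem (f := ρ s) (hg q)
        rw [Submodule.map_smul''] at this
        rw [hρ]
        exact Submodule.smul_mono le_rfl le_top this }
  have hpow : ∀ x ∈ N, x ^ n ∈ G := fun x hx q => by
    have hmem (k : ℕ) : esymmOfPsum F (fun j => T (x ^ j)) (k + 1) ∈ I :=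
      esymmOfPsum_succ_mem_ideal (fun j hj => by
        obtain ⟨j, rfl⟩ := Nat.exists_eq_add_of_le' hj
        exact hN _ (pow_succ_mem hx j)) k
    have := congrArg (· q) (hCH x)
    simp only [sum_range_succ', esymmOfPsum_zero, pow_zero, one_mul, one_smul, Nat.sub_zero,
      LinearMap.add_apply, LinearMap.sum_apply, LinearMap.smul_apply, LinearMap.zero_apply] at this
    rw [eq_neg_of_add_eq_zero_right this]
    exact neg_mem (sum_mem fun k _ => Submodule.smul_mem_smul (I.mul_mem_left _ (hmem k)) trivial)
  rintro _ ⟨q, rfl⟩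
  exact nagata_higman n hG hpow hx q

theorem exists_pow_le_ker [IsNoetherianRing C] (hρ : ∀ a b, ρ (a * b) = ρ b * ρ a)
    (hCH : ∀ x, ∑ k ∈ range (n + 1),
      ((-1) ^ k * esymmOfPsum F (fun j => T (x ^ j)) k) • ρ (x ^ (n - k)) = 0)
    (hN : ∀ z ∈ N, IsNilpotent (T z)) :
    ∃ d, N.toSubmodule ^ d ≤ LinearMap.ker ρ := by
  obtain ⟨r, hr⟩ := IsNoetherianRing.isNilpotent_nilradical C
  let I := nilradical C
  let P := N.toSubmodule ^ (2 ^ n - 1)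
  have hrange (j : ℕ) : ∀ x ∈ P ^ j, LinearMap.range (ρ x) ≤ I ^ j • (⊤ : Submodule C Q) := by
    induction j with
    | zero => simp
    | succ j ih =>
      intro x hx
      rw [pow_succ'] at hx
      induction hx using Submodule.mul_induction_on' with
      | mem_mul_mem g hg y hy =>
        rw [hρ, Module.End.mul_eq_comp, LinearMap.range_comp]
        calc (LinearMap.range (ρ g)).map (ρ y)
            ≤ (I • (⊤ : Submodule C Q)).map (ρ y) :=
              Submodule.map_mono (range_le_nilradical_smul_top hρ hCH hN hg)
          _ = I • LinearMap.range (ρ y) := by rw [Submodule.map_smul'', Submodule.map_top]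
          _ ≤ I • (I ^ j • ⊤) := Submodule.smul_mono le_rfl (ih y hy)
          _ = I ^ (j + 1) • ⊤ := by rw [← Submodule.mul_smul, pow_succ']
      | add x _ y _ hx hy =>
        rw [map_add]
        exact (LinearMap.range_add_le _ _).trans (sup_le hx hy)
  refine ⟨(2 ^ n - 1) * r, fun x hx => ?_⟩
  have := hrange r x (by rwa [← pow_mul])
  rwa [hr, zero_smul, Submodule.zero_eq_bot, le_bot_iff, LinearMap.range_eq_bot] at this

end NoetherianTraces

section MultiplicationAlgebra

variable (F R : Type*) [CommRing F] [Ring R] [Algebra F R]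

/-- The multiplication algebra of `R`: the linear maps `x ↦ ∑ aᵢ x bᵢ`. -/
abbrev multiplicationAlgebra : Subalgebra F (Module.End F R) :=
  (AlgHom.mulLeftRight F R).range

variable {F R}

theorem mulLeft_mem_multiplicationAlgebra (a : R) :
    LinearMap.mulLeft F a ∈ multiplicationAlgebra F R :=
  ⟨a ⊗ₜ 1, by ext; simp⟩

theorem mulRight_mem_multiplicationAlgebra (a : R) :
    LinearMap.mulRight F a ∈ multiplicationAlgebra F R :=
  ⟨1 ⊗ₜ MulOpposite.op a, by ext; simp⟩

@[elab_as_elim]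
theorem multiplicationAlgebra_induction {p : Module.End F R → Prop}
    (mulLeft_mul_mulRight : ∀ a b, p (LinearMap.mulLeft F a * LinearMap.mulRight F b))
    (add : ∀ f g, p f → p g → p (f + g)) {f : Module.End F R}
    (hf : f ∈ multiplicationAlgebra F R) : p f := by
  obtain ⟨z, rfl⟩ := hf
  induction z with
  | zero => simpa using mulLeft_mul_mulRight 0 0
  | tmul a b =>
    convert mulLeft_mul_mulRight a b.unop
    ext
    simp [mul_assoc]
  | add y z hy hz => simpa using add _ _ hy hz

theorem toLinearMap_mkPiAlgebraFin_mem (n : ℕ) (x : Fin n → R) (i : Fin n) :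
    (MultilinearMap.mkPiAlgebraFin F n R).toLinearMap x i ∈ multiplicationAlgebra F R := by
  convert mul_mem (mulLeft_mem_multiplicationAlgebra ((List.ofFn x).take i).prod)
    (mulRight_mem_multiplicationAlgebra (F := F) ((List.ofFn x).drop (i + 1)).prod)
  ext t
  have : List.ofFn (Function.update x i t) = (List.ofFn x).set i t := by
    refine List.ext_getElem (by simp) fun j h₁ h₂ => ?_
    simp [List.getElem_set, Function.update_apply, Fin.ext_iff, eq_comm]
  simp [this, List.prod_set, mul_assoc]

end MultiplicationAlgebra

section Capelli

variable (F : Type*) {R : Type*} [CommRing F] [Ring R] [Algebra F R] {n : ℕ}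

variable (R n) in
/-- The Capelli polynomial, as a multilinear function of the alternating variables `x i` with values
in the functions of the variables `y i`. -/
noncomputable def capelli : MultilinearMap F (fun _ : Fin n => R) ((Fin (n + 1) → R) → R) :=
  (MultilinearMap.alternatization <| MultilinearMap.pi fun y : Fin (n + 1) → R =>
    (LinearMap.mulLeft F (y 0)).compMultilinearMap <|
      (MultilinearMap.mkPiAlgebraFin F n R).compLinearMap fun i =>
        LinearMap.mulRight F (y i.succ)).toMultilinearMap

variable {F}

theorem capelli_apply (x : Fin n → R) (y : Fin (n + 1) → R) :
    capelli F R n x y = ∑ σ : Equiv.Perm (Fin n), ((Equiv.Perm.sign σ : ℤˣ) : ℤ) •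
      (y 0 * (List.ofFn fun i : Fin n => x (σ i) * y i.succ).prod) := by
  rw [capelli, AlternatingMap.coe_multilinearMap, MultilinearMap.alternatization_apply,
    Finset.sum_apply]
  simp [Units.smul_def]

theorem mul_prod_ofFn_mul_succ {M : Type*} [Monoid M] (x : Fin n → M) (y : Fin (n + 1) → M) :
    y 0 * (List.ofFn fun i => x i * y i.succ).prod =
      (List.ofFn fun i => y i.castSucc * x i).prod * y (Fin.last n) := by
  induction n with
  | zero => simp
  | succ n ih =>
    have := ih (fun i => x i.succ) (fun i => y i.succ)
    simp only [List.ofFn_succ, List.prod_cons, Fin.castSucc_zero, Fin.castSucc_succ,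
      Fin.succ_last] at this ⊢
    rw [mul_assoc (x 0), this]
    simp only [mul_assoc]

theorem capelli_apply' (x : Fin n → R) (y : Fin (n + 1) → R) :
    capelli F R n x y = ∑ σ : Equiv.Perm (Fin n), ((Equiv.Perm.sign σ : ℤˣ) : ℤ) •
      ((List.ofFn fun i : Fin n => y i.castSucc * x (σ i)).prod * y (Fin.last n)) := by
  simp only [capelli_apply, mul_prod_ofFn_mul_succ fun _ => x _]

theorem mul_capelli (a : R) (x : Fin n → R) (y : Fin (n + 1) → R) :
    a * capelli F R n x y = capelli F R n x (Function.update y 0 (a * y 0)) := by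
  simp only [capelli_apply, mul_sum, mul_smul_comm, mul_assoc, Function.update_self, ne_eq,
    Fin.succ_ne_zero, not_false_eq_true, Function.update_of_ne]

theorem capelli_mul (x : Fin n → R) (y : Fin (n + 1) → R) (a : R) :
    capelli F R n x y * a =
      capelli F R n x (Function.update y (Fin.last n) (y (Fin.last n) * a)) := by
  simp only [capelli_apply', sum_mul, smul_mul_assoc, mul_assoc, Function.update_self, ne_eq,
    Fin.castSucc_ne_last, not_false_eq_true, Function.update_of_ne]

theorem sum_sign_smul_cons_comp_perm {α A : Type*} [AddCommGroup A] (G : (Fin (n + 1) → α) → A)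
    (t : α) (x : Fin n → α) :
    ∑ σ : Equiv.Perm (Fin (n + 1)), ((Equiv.Perm.sign σ : ℤˣ) : ℤ) •
        G (Fin.cons (α := fun _ => α) t x ∘ σ) =
      ∑ σ : Equiv.Perm (Fin n), ((Equiv.Perm.sign σ : ℤˣ) : ℤ) • G (Fin.cons t (x ∘ σ)) -
      ∑ k, ∑ σ : Equiv.Perm (Fin n), ((Equiv.Perm.sign σ : ℤˣ) : ℤ) •
        G (Fin.cons (x k) (Function.update x k t ∘ σ)) := by
  rw [← Equiv.sum_comp Equiv.Perm.decomposeFin.symm, Fintype.sum_prod_type, Fin.sum_univ_succ,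
    sub_eq_add_neg, ← sum_neg_distrib]
  congr 1
  · refine sum_congr rfl fun σ _ => ?_
    rw [Equiv.Perm.decomposeFin.symm_sign, if_pos rfl, one_mul]
    congr 2
    ext i
    cases i using Fin.cases <;> simp
  · refine sum_congr rfl fun k _ => ?_
    rw [← sum_neg_distrib]
    refine sum_congr rfl fun σ _ => ?_
    rw [Equiv.Perm.decomposeFin.symm_sign, if_neg (Fin.succ_ne_zero k), neg_one_mul,
      Units.val_neg, neg_smul]
    congr 3
    ext i
    cases i using Fin.cases with
    | zero => simp
    | succ i =>
      obtain h | h := eq_or_ne (σ i) k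
      · simp [h]
      · simp [h, Equiv.swap_apply_of_ne_of_ne (Fin.succ_ne_zero _) ((Fin.succ_injective n).ne h)]

theorem mul_capelli_eq_sum (hR : capelli F R (n + 1) = 0) (t : R) (x : Fin n → R)
    (y : Fin (n + 1) → R) :
    t * capelli F R n x y = ∑ k, x k * capelli F R n (Function.update x k t) y := by
  have expand := sum_sign_smul_cons_comp_perm
    (fun z => (List.ofFn fun i => z i * y i).prod) t x
  have hzero : capelli F R (n + 1) (Fin.cons t x) (Fin.cons 1 y) = 0 := by rw [hR]; rfl
  simp only [capelli_apply, Fin.cons_zero, Fin.cons_succ, one_mul] at hzero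
  simp only [Function.comp_apply, hzero] at expand
  simpa only [capelli_apply, mul_sum, mul_smul_comm, List.ofFn_succ, List.prod_cons, mul_assoc,
    Fin.cons_zero, Fin.cons_succ, Function.comp_apply] using sub_eq_zero.1 expand.symm

theorem capelli_mul_eq_sum (hR : capelli F R (n + 1) = 0) (t : R) (x : Fin n → R)
    (y : Fin (n + 1) → R) :
    capelli F R n x y * t = ∑ k, capelli F R n (Function.update x k t) y * x k := by
  let w : Fin (n + 1) → R := Fin.cons t x
  let ρ := finRotate (n + 1)
  let P (z : Fin (n + 1) → R) : R := (List.ofFn fun i => y i * z i).prod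
  have expand := sum_sign_smul_cons_comp_perm (fun z => P (z ∘ ρ)) t x
  have hzero : ∑ σ : Equiv.Perm (Fin (n + 1)), ((Equiv.Perm.sign σ : ℤˣ) : ℤ) • P (w ∘ σ) = 0 := by
    have : capelli F R (n + 1) w (Fin.snoc y 1) = 0 := by rw [hR]; rfl
    simpa only [capelli_apply', Fin.snoc_castSucc, Fin.snoc_last, mul_one, P,
      Function.comp_apply] using this
  have hrotate : ∑ σ : Equiv.Perm (Fin (n + 1)),
      ((Equiv.Perm.sign σ : ℤˣ) : ℤ) • P ((w ∘ σ) ∘ ρ) = 0 := by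
    rw [← smul_zero (Equiv.Perm.sign ρ : ℤ), ← hzero, smul_sum,
      ← Equiv.sum_comp (Equiv.mulRight ρ) fun σ => (Equiv.Perm.sign ρ : ℤ) • _]
    refine sum_congr rfl fun σ _ => ?_
    rw [Equiv.coe_mulRight, smul_smul, map_mul, mul_comm, Units.val_mul, mul_assoc,
      Int.units_coe_mul_self, mul_one]
    rfl
  rw [hrotate] at expand
  simpa only [capelli_apply', sum_mul, smul_mul_assoc, P, ρ, List.ofFn_succ', List.concat_eq_append,
    List.prod_append, List.prod_singleton, Function.comp_apply,
    finRotate_apply, Fin.coeSucc_eq_succ, Fin.last_add_one, Fin.cons_zero, Fin.cons_succ, mul_assoc]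
    using sub_eq_zero.1 expand.symm

end Capelli

section SlotAction

theorem sum_neg_one_pow_mul_esymm_mul_X_pow (F : Type*) {ι : Type*} [CommRing F] [Fintype ι]
    (i : ι) :
    ∑ k ∈ range (Fintype.card ι + 1), (-1) ^ k * MvPolynomial.esymm ι F k *
      MvPolynomial.X i ^ (Fintype.card ι - k) = 0 := by
  have vieta := congrArg (Polynomial.eval (MvPolynomial.X i))
    (Multiset.prod_X_sub_X_eq_sum_esymm (univ.val.map (MvPolynomial.X (σ := ι) (R := F))))
  rw [Multiset.map_map, ← prod_eq_multiset_prod, Polynomial.eval_prod,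
    prod_eq_zero (mem_univ i) (by simp)] at vieta
  simpa [eval_finsetSum, MvPolynomial.esymm_eq_multiset_esymm, mul_assoc] using vieta.symm

variable {F R M ι : Type*} [CommRing F] [Ring R] [Algebra F R] [AddCommGroup M] [Module F M]

/-- The action of the polynomial ring on multilinear maps whose `i`-th indeterminate
multiplies the `i`-th argument by `a` on the left. -/
noncomputable def slotAction (a : R) :
    MvPolynomial ι F →ₐ[F] Module.End F (MultilinearMap F (fun _ : ι => R) M) :=
  AddMonoidAlgebra.lift F _ _
    { toFun m := MultilinearMap.compLinearMapₗ fun i => LinearMap.mulLeft F (a ^ m.toAdd i)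
      map_one' := by
        ext h x
        simp
      map_mul' m m' := by
        ext h x
        simp [← mul_assoc, ← pow_add, add_comm] }

theorem slotAction_monomial_one (a : R) (m : ι →₀ ℕ) (h : MultilinearMap F (fun _ : ι => R) M)
    (x : ι → R) : slotAction a (MvPolynomial.monomial m 1) h x = h fun i => a ^ m i * x i := by
  have : slotAction (M := M) a (MvPolynomial.monomial m (1 : F)) = _ :=
    AddMonoidAlgebra.lift_single _ m 1
  simp [this]

variable [DecidableEq ι]

variable (F M) in
/-- The operator on multilinear maps that multiplies the `i`-th argument by `a` on the left. -/
noncomputable def slotMul (i : ι) :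
    R →ₗ[F] Module.End F (MultilinearMap F (fun _ : ι => R) M) :=
  MultilinearMap.compLinearMapMultilinear.toLinearMap (fun _ => LinearMap.id) i ∘ₗ LinearMap.mul F R

@[simp]
theorem slotMul_apply (i : ι) (a : R) (h : MultilinearMap F (fun _ : ι => R) M) (x : ι → R) :
    slotMul F M i a h x = h (Function.update x i (a * x i)) := by
  change h _ = h _
  congr 1
  ext j
  obtain rfl | hj := eq_or_ne j i <;> simp [*]

theorem slotAction_X_pow (a : R) (i : ι) (k : ℕ) :
    slotAction a (MvPolynomial.X i ^ k) = slotMul F M i (a ^ k) := by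
  ext h x
  rw [MvPolynomial.X_pow_eq_monomial, slotAction_monomial_one, slotMul_apply]
  congr 1
  ext j
  obtain rfl | hj := eq_or_ne j i <;> simp [*]

theorem isNilpotent_slotMul {z : R} (hz : IsNilpotent z) (i : ι) :
    IsNilpotent (slotMul F M i z) := by
  obtain ⟨d, hd⟩ := hz
  refine ⟨d, ?_⟩
  rw [← pow_one z, ← slotAction_X_pow, ← map_pow, pow_one, slotAction_X_pow, hd, map_zero]

variable [Fintype ι]

variable (F M ι) in
/-- The operator on multilinear maps that multiplies each argument in turn by `a` on the left and
adds up the results. -/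
noncomputable def slotSum : R →ₗ[F] Module.End F (MultilinearMap F (fun _ : ι => R) M) :=
  ∑ i, slotMul F M i

theorem slotSum_apply (a : R) (h : MultilinearMap F (fun _ : ι => R) M) (x : ι → R) :
    slotSum F M ι a h x = ∑ i, h (Function.update x i (a * x i)) := by
  simp [slotSum]

theorem slotAction_psum (a : R) (k : ℕ) :
    slotAction a (MvPolynomial.psum ι F k) = slotSum F M ι (a ^ k) := by
  simp only [MvPolynomial.psum, map_sum, slotAction_X_pow, slotSum, LinearMap.sum_apply]

theorem slotAction_esymm [Algebra ℚ F] (a : R) (k : ℕ) :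
    slotAction a (MvPolynomial.esymm ι F k) =
      esymmOfPsum F (fun j => slotSum F M ι (a ^ j)) k := by
  simp only [← esymmOfPsum_psum, map_esymmOfPsum, slotAction_psum]

theorem isNilpotent_slotSum {z : R} (hz : IsNilpotent z) : IsNilpotent (slotSum F M ι z) := by
  rw [slotSum, LinearMap.sum_apply]
  refine Commute.isNilpotent_sum (fun i _ => isNilpotent_slotMul hz i) fun i j _ _ => ?_
  rw [← pow_one z, ← slotAction_X_pow, ← slotAction_X_pow]
  exact (Commute.all _ _).map _

variable [Module R M] [IsScalarTower F R M]

omit [DecidableEq ι] [Fintype ι] in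
instance : IsScalarTower F R (MultilinearMap F (fun _ : ι => R) M) :=
  ⟨fun r a h => MultilinearMap.ext fun x => smul_assoc r a (h x)⟩

theorem slotSum_smul (a r : R) (h : MultilinearMap F (fun _ : ι => R) M) :
    slotSum F M ι a (r • h) = r • slotSum F M ι a h := by
  ext x
  simp [slotSum_apply, smul_sum]

/-- Replaces the `i`-th argument of a multilinear map by `1` and multiplies the value by it. -/
def slotToScalar (i : ι) (h : MultilinearMap F (fun _ : ι => R) M) :
    MultilinearMap F (fun _ : ι => R) M :=
  .mk' (fun x => x i • h (Function.update x i 1))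
    (fun x j a b => by
      obtain rfl | hj := eq_or_ne i j
      · simp [add_smul]
      · simp [hj, Function.update_comm hj.symm])
    (fun x j c a => by
      obtain rfl | hj := eq_or_ne i j
      · simp
      · simp [hj, Function.update_comm hj.symm, smul_comm c])

theorem sum_slotAction_esymm_smul_eq_zero {h : MultilinearMap F (fun _ : ι => R) M}
    (hh : ∀ x, h x = ∑ i, x i • h (Function.update x i 1)) (r a : R) :
    ∑ k ∈ range (Fintype.card ι + 1),
      slotAction a ((-1) ^ k * MvPolynomial.esymm ι F k) ((r * a ^ (Fintype.card ι - k)) • h) =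
        0 := by
  have hpow (k : ℕ) : (r * a ^ k) • h =
      ∑ i, slotAction a (MvPolynomial.X i ^ k) (r • slotToScalar i h) := by
    ext x
    simp [slotAction_X_pow, slotToScalar, mul_smul, hh x, smul_sum]
  simp only [hpow, map_sum]
  rw [sum_comm]
  simp only [← Module.End.mul_apply, ← map_mul, ← LinearMap.sum_apply, ← map_sum,
    sum_neg_one_pow_mul_esymm_mul_X_pow, map_zero, LinearMap.zero_apply, sum_const_zero]

end SlotAction

section Exchange

variable {F R : Type*} [CommRing F] [Ring R] [Algebra F R] {n : ℕ}

theorem proj_comp_toLinearMap_capelli_mem (x : Fin n → R) (y : Fin (n + 1) → R) (i : Fin n) :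
    (LinearMap.proj y ∘ₗ (capelli F R n).toLinearMap x i : Module.End F R) ∈
      multiplicationAlgebra F R := by
  have : (LinearMap.proj y ∘ₗ (capelli F R n).toLinearMap x i : Module.End F R) =
      ∑ σ : Equiv.Perm (Fin n), ((Equiv.Perm.sign σ : ℤˣ) : ℤ) • (LinearMap.mulLeft F (y 0) *
        ((MultilinearMap.mkPiAlgebraFin F n R).toLinearMap (fun j => x (σ j) * y j.succ) (σ⁻¹ i) *
        LinearMap.mulRight F (y (σ⁻¹ i).succ))) := by
    ext t
    have update_comp (σ : Equiv.Perm (Fin n)) :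
        (fun j => Function.update x i t (σ j) * y j.succ) =
          Function.update (fun j => x (σ j) * y j.succ) (σ⁻¹ i) (t * y (σ⁻¹ i).succ) := by
      ext j
      obtain rfl | hj := eq_or_ne j (σ⁻¹ i)
      · simp
      · rw [Function.update_of_ne hj, Function.update_of_ne fun h => hj (by simp [← h])]
    simp [capelli_apply, LinearMap.sum_apply, update_comp]
  rw [this]
  exact sum_mem fun σ _ => zsmul_mem (mul_mem (mulLeft_mem_multiplicationAlgebra _)
    (mul_mem (toLinearMap_mkPiAlgebraFin_mem _ _ _) (mulRight_mem_multiplicationAlgebra _))) _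

variable (hR : capelli F R (n + 1) = 0)
include hR

theorem apply_mul_capelli_eq_sum {f : Module.End F R} (hf : f ∈ multiplicationAlgebra F R) (t : R)
    (x : Fin n → R) (y : Fin (n + 1) → R) :
    f t * capelli F R n x y = ∑ k, f (x k) * capelli F R n (Function.update x k t) y := by
  refine multiplicationAlgebra_induction (fun a b => ?_) (fun f g hf hg => ?_) hf
  · simp [mul_assoc, mul_capelli b, mul_capelli_eq_sum hR t, mul_sum]
  · simp only [LinearMap.add_apply, add_mul, hf, hg, sum_add_distrib]

theorem capelli_mul_apply_eq_sum {f : Module.End F R} (hf : f ∈ multiplicationAlgebra F R) (t : R)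
    (x : Fin n → R) (y : Fin (n + 1) → R) :
    capelli F R n x y * f t = ∑ k, capelli F R n (Function.update x k t) y * f (x k) := by
  refine multiplicationAlgebra_induction (fun a b => ?_) (fun f g hf hg => ?_) hf
  · simp [← mul_assoc, capelli_mul _ _ a, capelli_mul_eq_sum hR t, sum_mul]
  · simp only [LinearMap.add_apply, mul_add, hf, hg, sum_add_distrib]

theorem slotSum_capelli_mul_capelli (a : R) (x x' : Fin n → R) (y y' : Fin (n + 1) → R) :
    slotSum F _ _ a (capelli F R n) x y * capelli F R n x' y' =
      capelli F R n x y * slotSum F _ _ a (capelli F R n) x' y' := by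
  simp only [slotSum_apply, Finset.sum_apply, sum_mul, mul_sum]
  have left (i : Fin n) := apply_mul_capelli_eq_sum hR
    (proj_comp_toLinearMap_capelli_mem x y i) (a * x i) x' y'
  have right (j : Fin n) := capelli_mul_apply_eq_sum hR
    (mul_mem (proj_comp_toLinearMap_capelli_mem x' y' j) (mulLeft_mem_multiplicationAlgebra a))
    (x' j) x y
  simp only [Module.End.mul_apply, LinearMap.comp_apply, MultilinearMap.toLinearMap_apply,
    LinearMap.proj_apply, LinearMap.mulLeft_apply] at left right
  simp only [left, right]
  exact sum_comm

end Exchange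

section CommutingTraces

universe u

variable {F R : Type*} [CommRing F] [Ring R] [Algebra F R]

theorem exists_commRing_of_commute {A : Type u} [Ring A] [Algebra F A] {T : R →ₗ[F] A}
    (hT : ∀ a b, Commute (T a) (T b)) :
    ∃ (C : Type u) (_ : CommRing C) (_ : Algebra F C) (φ : C →ₐ[F] A) (T' : R →ₗ[F] C),
      Function.Injective φ ∧ Algebra.adjoin F (Set.range T') = ⊤ ∧ φ.toLinearMap ∘ₗ T' = T := by
  let C := Algebra.adjoin F (Set.range T)
  have : IsMulCommutative C := Algebra.isMulCommutative_adjoin F <| by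
    rintro _ ⟨a, rfl⟩ _ ⟨b, rfl⟩
    exact hT a b
  refine ⟨C, IsMulCommutative.instCommRing, inferInstance, C.val,
    T.codRestrict C.toSubmodule fun a => Algebra.subset_adjoin ⟨a, rfl⟩,
    Subtype.val_injective, ?_, rfl⟩
  rw [← Algebra.adjoin_adjoin_coe_preimage]
  congr 1
  exact Set.ext fun c => exists_congr fun a => Subtype.ext_iff

variable [Algebra ℚ F] {n : ℕ}

theorem IsCayleyHamilton.of_comp_injective {C C' : Type*} [Ring C] [Algebra F C] [Ring C']
    [Algebra F C'] {T : R →ₗ[F] C} {φ : C →ₐ[F] C'} (hφ : Function.Injective φ)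
    (hT : IsCayleyHamilton n (φ.toLinearMap ∘ₗ T)) : IsCayleyHamilton n T := fun a b x =>
  hφ <| by simpa [map_esymmOfPsum] using hT a b x

theorem IsCayleyHamilton.isNoetherianRing {C : Type*} [CommRing C] [Algebra F C]
    [IsNoetherianRing F] [Algebra.FiniteType F R] {T : R →ₗ[F] C} (hT : IsCayleyHamilton n T)
    (hadjoin : Algebra.adjoin F (Set.range T) = ⊤) : IsNoetherianRing C :=
  have : Algebra.FiniteType F C := ⟨hadjoin ▸ hT.fg_adjoin_range⟩
  Algebra.FiniteType.isNoetherianRing F C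

variable {Q : Type*} [AddCommGroup Q] [Module F Q] {N : NonUnitalSubalgebra F R}

theorem exists_pow_le_ker_of_algHom {C : Type*} [CommRing C] [Algebra F C] [IsNoetherianRing C]
    (φ : C →ₐ[F] Module.End F Q) {T : R →ₗ[F] C} {ρ : R →ₗ[F] Module.End F Q}
    (hφρ : ∀ c b, Commute (φ c) (ρ b)) (hρ : ∀ a b, ρ (a * b) = ρ b * ρ a)
    (hCH : ∀ x, ∑ k ∈ range (n + 1),
      (-1) ^ k * esymmOfPsum F (fun j => φ (T (x ^ j))) k * ρ (x ^ (n - k)) = 0)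
    (hN : ∀ z ∈ N, IsNilpotent (T z)) :
    ∃ d, N.toSubmodule ^ d ≤ LinearMap.ker ρ := by
  let _ : Module C Q := Module.compHom Q φ.toRingHom
  have smul_def (c : C) (q : Q) : c • q = φ c q := rfl
  have : IsScalarTower F C Q := .of_algebraMap_smul fun r q => by
    rw [smul_def, AlgHom.commutes, Module.algebraMap_end_apply]
  let ρ' : R →ₗ[F] Module.End C Q :=
    { toFun b := { ρ b with map_smul' c q := (LinearMap.congr_fun (hφρ c b).eq q).symm }
      map_add' a b := by ext; simp
      map_smul' r a := by ext; simp }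
  have hker : LinearMap.ker ρ' = LinearMap.ker ρ := by
    ext b
    simp [LinearMap.ext_iff, ρ']
  rw [← hker]
  refine exists_pow_le_ker (n := n) (T := T) (fun a b => ?_) (fun x => ?_) hN
  · ext q
    exact LinearMap.congr_fun (hρ a b) q
  · ext q
    simpa [smul_def, map_esymmOfPsum, LinearMap.sum_apply, ρ'] using LinearMap.congr_fun (hCH x) q

theorem exists_pow_le_ker_of_commute [IsNoetherianRing F] [Algebra.FiniteType F R]
    {ρ T : R →ₗ[F] Module.End F Q}
    (hTT : ∀ a b, Commute (T a) (T b)) (hTρ : ∀ a b, Commute (T a) (ρ b))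
    (hρ : ∀ a b, ρ (a * b) = ρ b * ρ a) (hT : IsCayleyHamilton n T)
    (hCH : ∀ x, ∑ k ∈ range (n + 1),
      (-1) ^ k * esymmOfPsum F (fun j => T (x ^ j)) k * ρ (x ^ (n - k)) = 0)
    (hN : ∀ z ∈ N, IsNilpotent (T z)) :
    ∃ d, N.toSubmodule ^ d ≤ LinearMap.ker ρ := by
  obtain ⟨C, _, _, φ, T, hφ, hadjoin, rfl⟩ := exists_commRing_of_commute hTT
  have hT' : IsCayleyHamilton n T := .of_comp_injective hφ hT
  have : IsNoetherianRing C := hT'.isNoetherianRing hadjoin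
  refine exists_pow_le_ker_of_algHom φ (fun c b => ?_) hρ hCH fun z hz =>
    (IsNilpotent.map_iff hφ).1 (hN z hz)
  have hc : c ∈ Algebra.adjoin F (Set.range T) := hadjoin ▸ trivial
  induction hc using Algebra.adjoin_induction with
  | mem c hc =>
    obtain ⟨a, rfl⟩ := hc
    exact hTρ a b
  | algebraMap r =>
    rw [AlgHom.commutes]
    exact Algebra.commute_algebraMap_left r _
  | add c d _ _ hc hd => simpa only [map_add] using hc.add_left hd
  | mul c d _ _ hc hd => simpa only [map_mul] using hc.mul_left hd

end CommutingTraces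

section TraceModule

variable (F R : Type*) [CommRing F] [Ring R] [Algebra F R] (n : ℕ)

/-- The span of the values of the Capelli polynomial. -/
noncomputable def capelliSpan : Submodule F R :=
  Submodule.span F (Set.range fun p : (Fin n → R) × (Fin (n + 1) → R) => capelli F R n p.1 p.2)

/-- The multilinear maps `r • capelli F R n` with `r` in the square of `capelliSpan F R n`. They
carry commuting traces, given by `slotSum`, and a right action of `R`. -/
noncomputable def traceModule :
    Submodule F (MultilinearMap F (fun _ : Fin n => R) ((Fin (n + 1) → R) → R)) :=
  (capelliSpan F R n * capelliSpan F R n).map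
    ((LinearMap.toSpanSingleton R _ (capelli F R n)).restrictScalars F)

variable {F R n}

theorem capelli_mem_capelliSpan (x : Fin n → R) (y : Fin (n + 1) → R) :
    capelli F R n x y ∈ capelliSpan F R n :=
  Submodule.subset_span ⟨(x, y), rfl⟩

theorem mul_mem_capelliSpan_left (a : R) {s : R} (hs : s ∈ capelliSpan F R n) :
    a * s ∈ capelliSpan F R n := by
  refine (Submodule.span_le (p := (capelliSpan F R n).comap (LinearMap.mulLeft F a))).2 ?_ hs
  rintro _ ⟨⟨x, y⟩, rfl⟩
  simpa [mul_capelli] using capelli_mem_capelliSpan _ _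

theorem mul_mem_capelliSpan_right (a : R) {s : R} (hs : s ∈ capelliSpan F R n) :
    s * a ∈ capelliSpan F R n := by
  refine (Submodule.span_le (p := (capelliSpan F R n).comap (LinearMap.mulRight F a))).2 ?_ hs
  rintro _ ⟨⟨x, y⟩, rfl⟩
  simpa [capelli_mul] using capelli_mem_capelliSpan _ _

theorem slotSum_capelli_mem_capelliSpan (a : R) (x : Fin n → R) (y : Fin (n + 1) → R) :
    slotSum F _ _ a (capelli F R n) x y ∈ capelliSpan F R n := by
  rw [slotSum_apply, Finset.sum_apply]
  exact sum_mem fun i _ => capelli_mem_capelliSpan _ _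

theorem smul_capelli_mem_traceModule {s t : R} (hs : s ∈ capelliSpan F R n)
    (ht : t ∈ capelliSpan F R n) : (s * t) • capelli F R n ∈ traceModule F R n :=
  Submodule.mem_map_of_mem (Submodule.mul_mem_mul hs ht)

theorem traceModule_le
    {P : Submodule F (MultilinearMap F (fun _ : Fin n => R) ((Fin (n + 1) → R) → R))}
    (h : ∀ x y x' y', (capelli F R n x y * capelli F R n x' y') • capelli F R n ∈ P) :
    traceModule F R n ≤ P := by
  rw [traceModule, Submodule.map_le_iff_le_comap, capelliSpan, Submodule.span_mul_span,
    Submodule.span_le]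
  rintro _ ⟨_, ⟨⟨x, y⟩, rfl⟩, _, ⟨⟨x', y'⟩, rfl⟩, rfl⟩
  exact h x y x' y'

theorem exists_mem_multiplicationAlgebra_slotSum_capelli (x : Fin n → R) (y : Fin (n + 1) → R) :
    ∃ f ∈ multiplicationAlgebra F R, ∀ a, slotSum F _ _ a (capelli F R n) x y = f a :=
  ⟨∑ i, (LinearMap.proj y ∘ₗ (capelli F R n).toLinearMap x i) * LinearMap.mulRight F (x i),
    sum_mem fun i _ => mul_mem (proj_comp_toLinearMap_capelli_mem x y i)
      (mulRight_mem_multiplicationAlgebra _),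
    fun a => by simp [slotSum_apply, LinearMap.sum_apply]⟩

variable (hR : capelli F R (n + 1) = 0)
include hR

theorem slotSum_mul_capelli_smul (a s : R) (x : Fin n → R) (y : Fin (n + 1) → R) :
    slotSum F _ _ a ((s * capelli F R n x y) • capelli F R n) =
      (s * slotSum F _ _ a (capelli F R n) x y) • capelli F R n := by
  ext x' y'
  simp [slotSum_smul, mul_assoc, slotSum_capelli_mul_capelli hR]

theorem slotSum_capelli_mul_smul (a : R) (x : Fin n → R) (y : Fin (n + 1) → R) {s : R}
    (hs : s ∈ capelliSpan F R n) :
    slotSum F _ _ a ((capelli F R n x y * s) • capelli F R n) =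
      (slotSum F _ _ a (capelli F R n) x y * s) • capelli F R n := by
  refine Submodule.span_induction ?_ ?_ (fun s t _ _ hs ht => ?_) (fun r s _ hs => ?_) hs
  · rintro _ ⟨⟨x', y'⟩, rfl⟩
    rw [slotSum_mul_capelli_smul hR, slotSum_capelli_mul_capelli hR]
  · simp
  · simp only [mul_add, add_smul, map_add, hs, ht]
  · simp only [mul_smul_comm, smul_assoc, map_smul, hs]

theorem slotSum_mem_traceModule (a : R)
    {h : MultilinearMap F (fun _ : Fin n => R) ((Fin (n + 1) → R) → R)}
    (hh : h ∈ traceModule F R n) : slotSum F _ _ a h ∈ traceModule F R n := by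
  refine traceModule_le (P := (traceModule F R n).comap (slotSum F _ _ a))
    (fun x y x' y' => ?_) hh
  rw [Submodule.mem_comap, slotSum_mul_capelli_smul hR]
  exact smul_capelli_mem_traceModule (capelli_mem_capelliSpan x y)
    (slotSum_capelli_mem_capelliSpan a x' y')

theorem slotSum_comm_of_mem_traceModule (a b : R)
    {h : MultilinearMap F (fun _ : Fin n => R) ((Fin (n + 1) → R) → R)}
    (hh : h ∈ traceModule F R n) :
    slotSum F _ _ a (slotSum F _ _ b h) = slotSum F _ _ b (slotSum F _ _ a h) := by
  refine traceModule_le (P := LinearMap.eqLocus (slotSum F _ _ a * slotSum F _ _ b)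
    (slotSum F _ _ b * slotSum F _ _ a)) (fun x y x' y' => ?_) hh
  rw [LinearMap.mem_eqLocus, Module.End.mul_apply, Module.End.mul_apply,
    slotSum_mul_capelli_smul hR,
    slotSum_capelli_mul_smul hR a x y (slotSum_capelli_mem_capelliSpan b x' y'),
    slotSum_capelli_mul_smul hR a x y (capelli_mem_capelliSpan x' y'), slotSum_mul_capelli_smul hR]

theorem sum_esymmOfPsum_slotSum_smul_capelli_eq_zero [Algebra ℚ F] {f : Module.End F R}
    (hf : f ∈ multiplicationAlgebra F R) (a : R) :
    ∑ k ∈ range (n + 1), ((-1) ^ k * esymmOfPsum F (fun j => slotSum F _ _ (a ^ j)) k)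
      (f (a ^ (n - k)) • capelli F R n) = 0 := by
  refine multiplicationAlgebra_induction (fun r s => ?_) (fun f g hf hg => ?_) hf
  · have hs (x : Fin n → R) : (s • capelli F R n) x =
        ∑ i, x i • (s • capelli F R n) (Function.update x i 1) := by
      ext y
      simpa [mul_capelli s] using mul_capelli_eq_sum hR 1 x _
    simpa [mul_smul, slotAction_esymm] using sum_slotAction_esymm_smul_eq_zero hs r a
  · simp only [LinearMap.add_apply, add_smul, map_add, sum_add_distrib, hf, hg, add_zero]

end TraceModule

section TraceOperators

variable {F R : Type*} [CommRing F] [Ring R] [Algebra F R] {n : ℕ}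

-- Unifying the additive structures on submodules of `MultilinearMap` fails without this shortcut.
noncomputable instance : AddCommGroup (traceModule F R n) := Submodule.addCommGroup _

variable (F n) in
/-- The operator that multiplies the leading separator `y 0` by `w` on the left. -/
noncomputable def leadingMul (w : R) :
    Module.End F (MultilinearMap F (fun _ : Fin n => R) ((Fin (n + 1) → R) → R)) :=
  LinearMap.compMultilinearMapₗ F (LinearMap.funLeft F R fun y => Function.update y 0 (w * y 0))

theorem leadingMul_smul_capelli (w r : R) :
    leadingMul F n w (r • capelli F R n) = (r * w) • capelli F R n := by
  ext x y
  simp [leadingMul, LinearMap.funLeft, mul_assoc, mul_capelli]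

theorem slotSum_leadingMul (a w : R)
    (h : MultilinearMap F (fun _ : Fin n => R) ((Fin (n + 1) → R) → R)) :
    slotSum F _ _ a (leadingMul F n w h) = leadingMul F n w (slotSum F _ _ a h) := by
  ext x y
  simp [leadingMul, LinearMap.funLeft, slotSum_apply]

theorem leadingMul_mem_traceModule (w : R)
    {h : MultilinearMap F (fun _ : Fin n => R) ((Fin (n + 1) → R) → R)}
    (hh : h ∈ traceModule F R n) : leadingMul F n w h ∈ traceModule F R n := by
  refine traceModule_le (P := (traceModule F R n).comap (leadingMul F n w))
    (fun x y x' y' => ?_) hh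
  rw [Submodule.mem_comap, leadingMul_smul_capelli, mul_assoc]
  exact smul_capelli_mem_traceModule (capelli_mem_capelliSpan x y)
    (mul_mem_capelliSpan_right w (capelli_mem_capelliSpan x' y'))

variable (F R n) in
/-- The right action of `R` on `traceModule F R n`, which sends `r • capelli F R n` to
`(r * w) • capelli F R n`. -/
noncomputable def traceModuleMul : R →ₗ[F] Module.End F (traceModule F R n) where
  toFun w := (leadingMul F n w).restrict fun _ => leadingMul_mem_traceModule w
  map_add' w w' := by
    ext1 ⟨_, r, _, rfl⟩
    exact Subtype.ext <| by simp [leadingMul_smul_capelli, mul_add, add_smul]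
  map_smul' c w := by
    ext1 ⟨_, r, _, rfl⟩
    exact Subtype.ext <| by simp [leadingMul_smul_capelli]

variable (hR : capelli F R (n + 1) = 0)

/-- The trace of an element of `R`, as an operator on `traceModule F R n`. -/
noncomputable def traceOp : R →ₗ[F] Module.End F (traceModule F R n) where
  toFun a := (slotSum F _ _ a).restrict fun _ => slotSum_mem_traceModule hR a
  map_add' a b := by ext; simp
  map_smul' c a := by ext; simp

theorem isNilpotent_traceOp {z : R} (hz : IsNilpotent z) : IsNilpotent (traceOp hR z) := by
  obtain ⟨d, hd⟩ := isNilpotent_slotSum (F := F) (M := (Fin (n + 1) → R) → R) (ι := Fin n) hz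
  refine ⟨d, ?_⟩
  rw [traceOp, LinearMap.coe_mk, AddHom.coe_mk, Module.End.pow_restrict]
  ext q
  simp [hd]

theorem traceOp_commute (a b : R) : Commute (traceOp hR a) (traceOp hR b) := by
  ext1 q
  exact Subtype.ext (slotSum_comm_of_mem_traceModule hR a b q.2)

theorem traceOp_commute_traceModuleMul (a w : R) :
    Commute (traceOp hR a) (traceModuleMul F R n w) := by
  ext1 q
  exact Subtype.ext (slotSum_leadingMul a w q.1)

variable (F R n) in
theorem traceModuleMul_mul (w w' : R) :
    traceModuleMul F R n (w * w') = traceModuleMul F R n w' * traceModuleMul F R n w := by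
  ext1 ⟨_, r, _, rfl⟩
  exact Subtype.ext <| by simp [traceModuleMul, leadingMul_smul_capelli, mul_assoc]

theorem coe_sum_esymmOfPsum_traceOp_apply [Algebra ℚ F] (x : R) (q : ℕ → traceModule F R n) :
    (∑ k ∈ range (n + 1), ((-1) ^ k * esymmOfPsum F (fun j => traceOp hR (x ^ j)) k) (q k) :
      traceModule F R n) =
    ∑ k ∈ range (n + 1), ((-1) ^ k * esymmOfPsum F (fun j => slotSum F _ _ (x ^ j)) k)
      (q k : MultilinearMap F (fun _ : Fin n => R) ((Fin (n + 1) → R) → R)) := by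
  let ι := (traceModule F R n).subtype
  change ι _ = _
  rw [map_sum]
  refine sum_congr rfl fun k _ => ?_
  rw [Module.End.mul_apply, map_neg_one_pow_apply,
    map_esymmOfPsum_apply (f := ι) (p' := fun j => slotSum F _ _ (x ^ j)) fun j m => rfl]
  rfl

theorem isCayleyHamilton_traceOp [Algebra ℚ F] : IsCayleyHamilton n (traceOp hR) := by
  intro a b x
  let P : Module.End F (MultilinearMap F (fun _ : Fin n => R) ((Fin (n + 1) → R) → R)) :=
    ∑ k ∈ range (n + 1), (-1) ^ k * esymmOfPsum F (fun j => slotSum F _ _ (x ^ j)) k *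
      slotSum F _ _ (a * x ^ (n - k) * b)
  have hP : traceModule F R n ≤ LinearMap.ker P := traceModule_le fun y y' z z' => by
    obtain ⟨f, hf, hfz⟩ := exists_mem_multiplicationAlgebra_slotSum_capelli (F := F) z z'
    have hg := mul_mem (mul_mem (mul_mem (mulLeft_mem_multiplicationAlgebra (capelli F R n y y'))
      hf) (mulRight_mem_multiplicationAlgebra b)) (mulLeft_mem_multiplicationAlgebra a)
    simpa [P, LinearMap.sum_apply, slotSum_mul_capelli_smul hR, hfz] using
      sum_esymmOfPsum_slotSum_smul_capelli_eq_zero hR hg x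
  ext1 q
  refine Subtype.ext ?_
  have hq := LinearMap.mem_ker.1 (hP q.2)
  rw [LinearMap.sum_apply] at hq ⊢
  exact (coe_sum_esymmOfPsum_traceOp_apply hR x _).trans hq

theorem sum_esymmOfPsum_traceOp_mul_traceModuleMul_eq_zero [Algebra ℚ F] (x : R) :
    ∑ k ∈ range (n + 1), (-1) ^ k * esymmOfPsum F (fun j => traceOp hR (x ^ j)) k *
      traceModuleMul F R n (x ^ (n - k)) = 0 := by
  ext1 ⟨_, r, _, rfl⟩
  refine Subtype.ext ?_
  rw [LinearMap.sum_apply]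
  refine (coe_sum_esymmOfPsum_traceOp_apply hR x _).trans ?_
  simpa [traceModuleMul, leadingMul_smul_capelli] using
    sum_esymmOfPsum_slotSum_smul_capelli_eq_zero hR (mulLeft_mem_multiplicationAlgebra r) x

include hR in
theorem exists_capelliSpan_mul_pow_mul_eq_bot [IsNoetherianRing F] [Algebra ℚ F]
    [Algebra.FiniteType F R] {N : NonUnitalSubalgebra F R} (hN : ∀ z ∈ N, IsNilpotent z) :
    ∃ d, capelliSpan F R n * capelliSpan F R n * N.toSubmodule ^ d * capelliSpan F R n = ⊥ := by
  obtain ⟨d, hd⟩ := exists_pow_le_ker_of_commute (traceOp_commute hR)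
    (traceOp_commute_traceModuleMul hR) (traceModuleMul_mul F R n) (isCayleyHamilton_traceOp hR)
    (sum_esymmOfPsum_traceOp_mul_traceModuleMul_eq_zero hR)
    fun z hz => isNilpotent_traceOp hR (hN z hz)
  refine ⟨d, ?_⟩
  have hsmul (r : R) (hr : r ∈ capelliSpan F R n * capelliSpan F R n * N.toSubmodule ^ d) :
      r • capelli F R n = 0 := by
    refine Submodule.mul_induction_on hr (fun s hs w hw => ?_) fun r r' hr hr' => by
      rw [add_smul, hr, hr', add_zero]
    rw [← leadingMul_smul_capelli]
    exact congrArg Subtype.val (LinearMap.congr_fun (hd hw) ⟨_, s, hs, rfl⟩)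
  rw [eq_bot_iff, Submodule.mul_le]
  intro r hr t ht
  refine (Submodule.span_le (p := LinearMap.ker (LinearMap.mulLeft F r))).2 ?_ ht
  rintro _ ⟨⟨x, y⟩, rfl⟩
  exact congrFun (congrArg (· x) (hsmul r hr)) y

end TraceOperators

section Induction

variable {F R : Type*} [CommRing F] [Ring R] [Algebra F R]

theorem map_capelli {R' : Type*} [Ring R'] [Algebra F R'] (f : R →ₐ[F] R') {n : ℕ}
    (x : Fin n → R) (y : Fin (n + 1) → R) :
    f (capelli F R n x y) = capelli F R' n (f ∘ x) (f ∘ y) := by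
  simp [capelli_apply, map_list_prod, List.map_ofFn, Function.comp_def]

variable (F R) in
/-- The two-sided ideal generated by the values of the Capelli polynomial. -/
noncomputable def capelliIdeal (n : ℕ) : Ideal R :=
  { capelliSpan F R n with smul_mem' := fun a _ => mul_mem_capelliSpan_left a }

instance (n : ℕ) : (capelliIdeal F R n).IsTwoSided :=
  ⟨fun b => mul_mem_capelliSpan_right b⟩

theorem capelli_quotient_capelliIdeal (n : ℕ) :
    capelli F (R ⧸ capelliIdeal F R n) n = 0 := by
  ext x y
  obtain ⟨x, rfl⟩ := (Ideal.Quotient.mk_surjective (I := capelliIdeal F R n)).comp_left x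
  obtain ⟨y, rfl⟩ := (Ideal.Quotient.mk_surjective (I := capelliIdeal F R n)).comp_left y
  refine (map_capelli (Ideal.Quotient.mkₐ F (capelliIdeal F R n)) x y).symm.trans ?_
  exact Ideal.Quotient.eq_zero_iff_mem.2 (capelli_mem_capelliSpan x y)

theorem exists_pow_eq_bot_of_capelli_eq_zero [IsNoetherianRing F] [Algebra ℚ F]
    [Algebra.FiniteType F R] {m : ℕ} (hR : capelli F R m = 0) {N : NonUnitalSubalgebra F R}
    (hN : ∀ x ∈ N, IsNilpotent x) : ∃ s, N.toSubmodule ^ s = ⊥ := by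
  induction m generalizing R with
  | zero =>
    have h : capelli F R 0 0 1 = 0 := by rw [hR]; rfl
    have : Subsingleton R := subsingleton_of_zero_eq_one (by simpa [capelli_apply] using h.symm)
    exact ⟨0, Subsingleton.elim _ _⟩
  | succ n ih =>
    let π := Ideal.Quotient.mkₐ F (capelliIdeal F R n)
    have : Algebra.FiniteType F (R ⧸ capelliIdeal F R n) :=
      .of_surjective π Ideal.Quotient.mk_surjective
    obtain ⟨s, hs⟩ := ih (capelli_quotient_capelliIdeal n) (N := N.map π) <| by
      rintro _ ⟨x, hx, rfl⟩
      exact (hN x hx).map π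
    have hNs : N.toSubmodule ^ s ≤ capelliSpan F R n := fun x hx => by
      have hπx : π x ∈ (N.map π).toSubmodule ^ s :=
        Submodule.map_pow N.toSubmodule π s ▸ Submodule.mem_map_of_mem (f := π.toLinearMap) hx
      rw [hs] at hπx
      exact Ideal.Quotient.eq_zero_iff_mem.1 hπx
    obtain ⟨d, hd⟩ := exists_capelliSpan_mul_pow_mul_eq_bot hR hN
    refine ⟨s + s + d + s, eq_bot_iff.2 ?_⟩
    rw [pow_add, pow_add, pow_add, ← hd]
    gcongr

end Induction

section NilIdeals

variable {R : Type*} [Ring R]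

theorem isNilpotent_of_mem_sup {I J : TwoSidedIdeal R} (hI : ∀ x ∈ I, IsNilpotent x)
    (hJ : ∀ x ∈ J, IsNilpotent x) : ∀ x ∈ I ⊔ J, IsNilpotent x := by
  intro x hx
  obtain ⟨y, hy, z, hz, rfl⟩ := TwoSidedIdeal.mem_sup.1 hx
  obtain ⟨k, hk⟩ := hI y hy
  have hrel : J.ringCon (y + z) y := by rwa [TwoSidedIdeal.rel_iff, add_sub_cancel_left]
  have hmem : (y + z) ^ k ∈ J := by
    rw [TwoSidedIdeal.mem_iff, ← hk]
    exact J.ringCon.toCon.pow k hrel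
  exact (hJ _ hmem).of_pow

theorem isNilpotent_of_mem_sSup :
    ∀ x ∈ sSup {I : TwoSidedIdeal R | ∀ y ∈ I, IsNilpotent y}, IsNilpotent x := by
  let U : TwoSidedIdeal R := .mk' {x | ∃ I : TwoSidedIdeal R, (∀ y ∈ I, IsNilpotent y) ∧ x ∈ I}
    ⟨⊥, fun y hy => (TwoSidedIdeal.mem_bot R).1 hy ▸ .zero, zero_mem _⟩
    (fun ⟨I, hI, hx⟩ ⟨J, hJ, hy⟩ => ⟨I ⊔ J, isNilpotent_of_mem_sup hI hJ,
      add_mem (TwoSidedIdeal.mem_sup_left hx) (TwoSidedIdeal.mem_sup_right hy)⟩)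
    (fun ⟨I, hI, hx⟩ => ⟨I, hI, neg_mem hx⟩)
    (fun ⟨I, hI, hx⟩ => ⟨I, hI, I.mul_mem_left _ _ hx⟩)
    (fun ⟨I, hI, hx⟩ => ⟨I, hI, I.mul_mem_right _ _ hx⟩)
  have hle : sSup {I : TwoSidedIdeal R | ∀ y ∈ I, IsNilpotent y} ≤ U :=
    sSup_le fun I hI y hy => (TwoSidedIdeal.mem_mk' ..).2 ⟨I, hI, hy⟩
  intro x hx
  obtain ⟨I, hI, hxI⟩ := (TwoSidedIdeal.mem_mk' ..).1 (hle hx)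
  exact hI x hxI

end NilIdeals

end Razmyslov

open Razmyslov

theorem razmyslov_nil_radical_nilpotent_general {F R : Type*} [CommRing F] [IsNoetherianRing F]
    [Algebra ℚ F] [Ring R] [Algebra F R] [Algebra.FiniteType F R] {m : ℕ}
    (hCap : ∀ (y : Fin (m + 1) → R) (x : Fin m → R),
      ∑ σ : Equiv.Perm (Fin m),
        ((Equiv.Perm.sign σ : ℤˣ) : ℤ) •
          (y 0 * (List.ofFn fun i : Fin m => x (σ i) * y i.succ).prod) = 0)
    {N : NonUnitalSubalgebra F R} (hN : ∀ x ∈ N, IsNilpotent x) :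
    ∃ s : ℕ, 1 ≤ s ∧ ∀ f : Fin s → R, (∀ i, f i ∈ N) → (List.ofFn f).prod = 0 := by
  have hR : capelli F R m = 0 := by
    ext x y
    exact (capelli_apply x y).trans (hCap y x)
  obtain ⟨s, hs⟩ := exists_pow_eq_bot_of_capelli_eq_zero hR hN
  refine ⟨s + 1, s.succ_pos, fun f hf => ?_⟩
  have hprod : (List.ofFn f).prod ∈ N.toSubmodule ^ (s + 1) :=
    Submodule.pow_subset_pow _ (Set.mem_pow.2 ⟨fun i => ⟨f i, hf i⟩, rfl⟩)
  rwa [pow_succ, hs, Submodule.bot_mul] at hprod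

/-- **Razmyslov's theorem.** Let `F` be a field of characteristic `0` and let `R` be a
finitely generated `F`-algebra satisfying the Capelli identity `C_m` for some `m`. Then the
nil radical of `R` — the sum `N` (i.e. supremum) of all nil two-sided ideals of `R` — is a
nil ideal, and it is nilpotent: there is `s ≥ 1` such that every product of `s` elements of
`N` vanishes (`N ^ s = 0`). -/
theorem razmyslov_nil_radical_nilpotent (F : Type) [Field F] [CharZero F]
    (R : Type) [Ring R] [Algebra F R] (hfg : Algebra.FiniteType F R)
    (m : ℕ) (hm : 1 ≤ m)
    (hCap : ∀ (y : Fin (m + 1) → R) (x : Fin m → R),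
      ∑ σ : Equiv.Perm (Fin m),
        ((Equiv.Perm.sign σ : ℤˣ) : ℤ) •
          (y 0 * (List.ofFn fun i : Fin m => x (σ i) * y i.succ).prod) = 0) :
    (∀ x ∈ sSup {I : TwoSidedIdeal R | ∀ y ∈ I, IsNilpotent y}, IsNilpotent x) ∧
    ∃ s : ℕ, 1 ≤ s ∧ ∀ f : Fin s → R,
      (∀ i, f i ∈ sSup {I : TwoSidedIdeal R | ∀ y ∈ I, IsNilpotent y}) →
      (List.ofFn f).prod = 0 := by
  let N : NonUnitalSubalgebra F R :=
    ((sSup {I : TwoSidedIdeal R | ∀ y ∈ I, IsNilpotent y}).asIdeal.restrictScalars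
      F).toNonUnitalSubalgebra fun x _ _ => Ideal.mul_mem_left _ x
  exact ⟨isNilpotent_of_mem_sSup,
    razmyslov_nil_radical_nilpotent_general (N := N) hCap isNilpotent_of_mem_sSup⟩
end

section
/- Let F be a field (of arbitrary characteristic) and let R be a finitely generated F-algebra satisfying a nonzero polynomial identity. Then the nil radical of R is nilpotent: the sum N of all nil two-sided ideals of R satisfies N^s = 0 for some integer s ≥ 1. (Razmyslov–Braun–Kemer theorem.) -/
/-!
A polynomial identity of degree `d` can be made multilinear. If all products of fewer than `d`
generators are integral over the base ring, Shirshov's theorem on words shows that `R` is a finite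
module, and the same rewriting of words shows that a nil multiplicative subset of an algebra
which is finite over a Noetherian ring is nilpotent.

A product `u` of generators which is not integral is made integral by passing to the algebra `R'`
obtained from `R` by adjoining the coefficients of a generic monic polynomial of degree `d` and
imposing that `u` be a root of it. The kernel `K` of `R → R'` satisfies `K ^ d = 0`. Indeed, let
`J m` be the left ideal of `R` generated by the words with `m` letters and `m + 1` slots, where a
polynomial `p` divisible by the product of all `X_k - X_i` with `k + 2 ≤ i ≤ m` acts through the
powers of `u` filling the slots. Specialising the generic polynomial to one with
`X_1, …, X_m` among its roots gives `K * J m ⊆ J (m + 1)`; and `J 0 = R`, while the identity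
forces `J d = 0`.
-/

namespace RazmyslovBraunKemer

universe u v

open MvPolynomial Finset
open scoped Pointwise TensorProduct

section Words

variable {M : Type*} [Monoid M]

theorem prod_ofFn_mul_last {m : ℕ} (p : Fin (m + 1) → M) (y : Fin m → M) :
    (List.ofFn fun i => p i.castSucc * y i).prod * p (Fin.last m)
      = p 0 * (List.ofFn fun i => y i * p i.succ).prod := by
  induction m with
  | zero => simp
  | succ m ih =>
    have htail := ih (fun i => p i.succ) fun i => y i.succ
    simp only [List.ofFn_succ, List.prod_cons, mul_assoc, Fin.castSucc_zero]
    exact congrArg (fun x => p 0 * (y 0 * x)) htail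

end Words

section Slots

variable {C : Type*} {R : Type*} [CommRing C] [Ring R] [Algebra C R]

/-- `u ^ a₀ * y₀ * u ^ a₁ * y₁ * ⋯ * y_{m-1} * u ^ a_m`. -/
def slotMonomial (u : R) {m : ℕ} (y : Fin m → R) (a : Fin (m + 1) → ℕ) : R :=
  (List.ofFn fun i => u ^ a i.castSucc * y i).prod * u ^ a (Fin.last m)

theorem slotMonomial_eq (u : R) {m : ℕ} (y : Fin m → R) (a : Fin (m + 1) → ℕ) :
    slotMonomial u y a = u ^ a 0 * (List.ofFn fun i => y i * u ^ a i.succ).prod :=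
  prod_ofFn_mul_last (fun i => u ^ a i) y

theorem slotMonomial_cons (u v : R) {m : ℕ} (y : Fin m → R) (a : Fin (m + 2) → ℕ) :
    slotMonomial u (Fin.cons v y) a = u ^ a 0 * v * slotMonomial u y (Fin.tail a) := by
  simp [slotMonomial, List.ofFn_succ, mul_assoc, Fin.tail, Fin.castSucc_succ]

theorem slotMonomial_add_single_castSucc (u : R) {m : ℕ} (y : Fin m → R)
    (a : Fin (m + 1) → ℕ) (j : Fin m) :
    slotMonomial u y (a + Pi.single j.castSucc 1)
      = slotMonomial u (Function.update y j (u * y j)) a := by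
  have hslot (i : Fin m) :
      u ^ (a i.castSucc + (Pi.single j.castSucc 1 : Fin (m + 1) → ℕ) i.castSucc) * y i
      = u ^ a i.castSucc * Function.update y j (u * y j) i := by
    obtain rfl | hij := eq_or_ne i j
    · simp [pow_succ, mul_assoc]
    · simp [hij]
  simp [slotMonomial, hslot, (Fin.castSucc_lt_last j).ne']

theorem slotMonomial_add_single_succ (u : R) {m : ℕ} (y : Fin m → R)
    (a : Fin (m + 1) → ℕ) (j : Fin m) :
    slotMonomial u y (a + Pi.single j.succ 1)
      = slotMonomial u (Function.update y j (y j * u)) a := by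
  have hslot (i : Fin m) :
      y i * u ^ (a i.succ + (Pi.single j.succ 1 : Fin (m + 1) → ℕ) i.succ)
      = Function.update y j (y j * u) i * u ^ a i.succ := by
    obtain rfl | hij := eq_or_ne i j
    · simp [pow_succ', mul_assoc]
    · simp [hij]
  simp [slotMonomial_eq, hslot, (Fin.succ_ne_zero j).symm]

variable (C) in
/-- The `C`-linear map sending a polynomial `∑ cₐ X ^ a` to
`∑ cₐ u ^ a₀ * y₀ * u ^ a₁ * ⋯ * y_{m-1} * u ^ a_m`: the variables of the polynomial act as
powers of `u` filling the `m + 1` slots around the `m` letters `y`. -/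
noncomputable def slot (u : R) {m : ℕ} (y : Fin m → R) : MvPolynomial (Fin (m + 1)) C →ₗ[C] R :=
  (basisMonomials (Fin (m + 1)) C).constr C fun a => slotMonomial u y a

@[simp]
theorem slot_monomial (u : R) {m : ℕ} (y : Fin m → R) (a : Fin (m + 1) →₀ ℕ) :
    slot C u y (monomial a 1) = slotMonomial u y a := by
  simpa [slot] using (basisMonomials (Fin (m + 1)) C).constr_basis C (fun a => slotMonomial u y a) a

theorem slot_one (u : R) {m : ℕ} (y : Fin m → R) : slot C u y 1 = (List.ofFn y).prod := by
  rw [one_def, slot_monomial]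
  simp [slotMonomial]

theorem slot_mul_X_castSucc (u : R) {m : ℕ} (y : Fin m → R) (j : Fin m)
    (p : MvPolynomial (Fin (m + 1)) C) :
    slot C u y (p * X j.castSucc) = slot C u (Function.update y j (u * y j)) p := by
  suffices slot C u y ∘ₗ LinearMap.mulRight C (X j.castSucc)
      = slot C u (Function.update y j (u * y j)) from LinearMap.congr_fun this p
  refine (basisMonomials _ C).ext fun a => ?_
  simp [X, monomial_mul, ← slotMonomial_add_single_castSucc, Finsupp.single_eq_pi_single]

theorem slot_mul_X_succ (u : R) {m : ℕ} (y : Fin m → R) (j : Fin m)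
    (p : MvPolynomial (Fin (m + 1)) C) :
    slot C u y (p * X j.succ) = slot C u (Function.update y j (y j * u)) p := by
  suffices slot C u y ∘ₗ LinearMap.mulRight C (X j.succ)
      = slot C u (Function.update y j (y j * u)) from LinearMap.congr_fun this p
  refine (basisMonomials _ C).ext fun a => ?_
  simp [X, monomial_mul, ← slotMonomial_add_single_succ, Finsupp.single_eq_pi_single]

theorem slot_cons_X_zero_pow_mul_rename (u v : R) {m : ℕ} (y : Fin m → R) (k : ℕ)
    (p : MvPolynomial (Fin (m + 1)) C) :
    slot C u (Fin.cons v y : Fin (m + 1) → R) (X 0 ^ k * rename Fin.succ p)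
      = u ^ k * v * slot C u y p := by
  suffices slot C u (Fin.cons v y : Fin (m + 1) → R) ∘ₗ LinearMap.mulLeft C (X 0 ^ k) ∘ₗ
      (rename Fin.succ : MvPolynomial (Fin (m + 1)) C →ₐ[C] _).toLinearMap
      = LinearMap.mulLeft C (u ^ k * v) ∘ₗ slot C u y from LinearMap.congr_fun this p
  refine (basisMonomials _ C).ext fun a => ?_
  have hzero : a.mapDomain Fin.succ (0 : Fin (m + 2)) = 0 :=
    Finsupp.mapDomain_of_notMem_range _ _ (by simp)
  have htail :
      Fin.tail (⇑(Finsupp.single 0 k) + ⇑(a.mapDomain Fin.succ) : Fin (m + 2) → ℕ) = a := by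
    funext i
    simp [Fin.tail, Finsupp.mapDomain_apply (Fin.succ_injective _)]
  simp [rename_monomial, X_pow_eq_monomial, monomial_mul, slotMonomial_cons, mul_assoc,
    hzero, htail]

end Slots

theorem exists_succ_lt_castSucc_of_ne_one {n : ℕ} {σ : Equiv.Perm (Fin (n + 1))} (hσ : σ ≠ 1) :
    ∃ j : Fin n, σ j.succ < σ j.castSucc := by
  contrapose! hσ
  exact σ.monotone_iff.1 (Fin.monotone_iff_le_succ.2 hσ)

section Identity

variable {C : Type*} {R : Type*} [CommRing C] [Ring R] [Algebra C R]
  {d : ℕ} {α : Equiv.Perm (Fin d) → C}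

variable (R) in
/-- The multilinear polynomial `∑ σ, α σ • x_{σ 0} * ⋯ * x_{σ (d - 1)}` is an identity of `R` and
its coefficient at `x₀ * ⋯ * x_{d - 1}` is `1`. -/
structure IsMonicMultilinearIdentity (α : Equiv.Perm (Fin d) → C) : Prop where
  coeff_one : α 1 = 1
  sum_smul_prod (x : Fin d → R) : ∑ σ, α σ • (List.ofFn (x ∘ σ)).prod = 0

theorem IsMonicMultilinearIdentity.subsingleton {α : Equiv.Perm (Fin 0) → C}
    (h : IsMonicMultilinearIdentity R α) : Subsingleton R := by
  have hone : α default • (1 : R) = 0 := by simpa using h.sum_smul_prod Fin.elim0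
  rw [Subsingleton.elim default 1, h.coeff_one, one_smul] at hone
  exact subsingleton_of_zero_eq_one hone.symm

/-- The slot to the left (`Sum.inl i`) or to the right (`Sum.inr i`) of the letter `x_i` in the
word `x_{σ 0} * ⋯ * x_{σ (d - 1)}`. -/
def slotIndex (σ : Equiv.Perm (Fin d)) : Fin d ⊕ Fin d → Fin (d + 1) :=
  Sum.elim (fun i => (σ.symm i).castSucc) fun i => (σ.symm i).succ

/-- Replacing `x_i` by `u * x_i` or `x_i * u` shifts the exponents of the slots next to `x_i`,
simultaneously for all the words of the identity. -/
theorem sum_smul_slot_rename_eq_zero (h : ∀ x : Fin d → R, ∑ σ, α σ • (List.ofFn (x ∘ σ)).prod = 0)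
    (u : R) (y : Fin d → R) (g : MvPolynomial (Fin d ⊕ Fin d) C) :
    ∑ σ, α σ • slot C u (y ∘ σ) (rename (slotIndex σ) g) = 0 := by
  induction g using MvPolynomial.induction_on generalizing y with
  | C c =>
    have hconst (σ : Equiv.Perm (Fin d)) :
        α σ • slot C u (y ∘ σ) (rename (slotIndex σ) (MvPolynomial.C c))
          = c • α σ • (List.ofFn (y ∘ σ)).prod := by
      rw [rename_C, ← mul_one (MvPolynomial.C c), ← smul_eq_C_mul, map_smul, slot_one, smul_comm]
    simp_rw [hconst, ← Finset.smul_sum, h y, smul_zero]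
  | add p q hp hq => simp only [map_add, smul_add, sum_add_distrib, hp, hq, add_zero]
  | mul_X p i hp =>
    rcases i with i | i
    · rw [← hp (Function.update y i (u * y i))]
      simp [slotIndex, slot_mul_X_castSucc, Function.update_comp_equiv]
    · rw [← hp (Function.update y i (y i * u))]
      simp [slotIndex, slot_mul_X_succ, Function.update_comp_equiv]

variable (C) in
/-- The product of the differences `X_k - X_i` over all pairs with `k + 2 ≤ i ≤ m`. -/
noncomputable def gapProduct (m : ℕ) : MvPolynomial (Fin (m + 1)) C :=
  ∏ k : Fin m, ∏ i ∈ Ioi k, (X k.castSucc - X i.succ)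

theorem gapProduct_zero : gapProduct C 0 = 1 := by simp [gapProduct]

theorem gapProduct_succ (m : ℕ) :
    gapProduct C (m + 1)
      = (∏ i : Fin m, (X 0 - X i.succ.succ)) * rename Fin.succ (gapProduct C m) := by
  simp [gapProduct, Fin.prod_univ_succ, Fin.prod_Ioi_succ]

/-- A permutation `σ ≠ 1` has a descent, so that the left slot of one letter is the right slot of
a smaller one and the corresponding factor of the product vanishes: only the leading word of the
identity survives. -/
theorem IsMonicMultilinearIdentity.slot_mul_gapProduct (h : IsMonicMultilinearIdentity R α)
    (u : R) (y : Fin d → R) (q : MvPolynomial (Fin (d + 1)) C) :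
    slot C u y (q * gapProduct C d) = 0 := by
  obtain _ | n := d
  · have := h.subsingleton
    exact Subsingleton.elim _ _
  let g : MvPolynomial (Fin (n + 1) ⊕ Fin (n + 1)) C :=
    ∏ k, ∏ i ∈ Ioi k, (X (Sum.inl k) - X (Sum.inr i))
  let q' := rename (Fin.cons (Sum.inl 0) Sum.inr : Fin (n + 2) → Fin (n + 1) ⊕ Fin (n + 1)) q
  have hg : rename (slotIndex 1) g = gapProduct C (n + 1) := by
    simp [g, gapProduct, slotIndex, ← Equiv.Perm.inv_def]
  have hq : rename (slotIndex 1) q' = q := by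
    have hindex : slotIndex 1 ∘ (Fin.cons (Sum.inl 0) Sum.inr : Fin (n + 2) → _) = id := by
      funext i
      cases i using Fin.cases <;> simp [slotIndex, ← Equiv.Perm.inv_def]
    rw [rename_rename, hindex, rename_id_apply]
  have hvanish {σ : Equiv.Perm (Fin (n + 1))} (hσ : σ ≠ 1) : rename (slotIndex σ) g = 0 := by
    obtain ⟨j, hj⟩ := exists_succ_lt_castSucc_of_ne_one hσ
    simp only [g, map_prod, map_sub, rename_X]
    refine prod_eq_zero (mem_univ (σ j.succ)) (prod_eq_zero (mem_Ioi.2 hj) ?_)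
    simp [slotIndex]
  have hsum := sum_smul_slot_rename_eq_zero h.sum_smul_prod u y (q' * g)
  rw [Fintype.sum_eq_single 1 fun σ hσ => by simp [hvanish hσ]] at hsum
  simpa [hq, hg, h.coeff_one] using hsum

end Identity

section GenericAdjunction

variable {C : Type*} {R : Type*} [CommRing C] [Ring R] [Algebra C R] {d : ℕ}

/-- The generic monic polynomial is specialised to `X ^ (d - m) * ∏ i, (X - X_{i + 1})`, which is
then evaluated at a new variable. -/
theorem exists_algHom_eval₂_freeMonic {m : ℕ} (hm : m ≤ d) :
    ∃ E : MvPolynomial (Fin d) C →ₐ[C] MvPolynomial (Fin (m + 1)) C,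
      (Polynomial.freeMonic C d).eval₂ ((rename Fin.succ).comp E : _ →ₐ[C] _).toRingHom (X 0)
        = X 0 ^ (d - m) * ∏ i : Fin m, (X 0 - X i.succ.succ) := by
  obtain hC | hC := subsingleton_or_nontrivial C
  · exact ⟨aeval 0, Subsingleton.elim _ _⟩
  let D : Polynomial (MvPolynomial (Fin (m + 1)) C) := ∏ i : Fin m, (.X - .C (X i.succ))
  have hD : D.Monic := Polynomial.monic_prod_of_monic _ _ fun i _ => Polynomial.monic_X_sub_C _
  have hdeg : (.X ^ (d - m) * D).natDegree = d := by
    rw [(Polynomial.monic_X_pow _).natDegree_mul hD, Polynomial.natDegree_X_pow,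
      Polynomial.natDegree_prod_of_monic _ _ fun i _ => Polynomial.monic_X_sub_C _]
    simp [hm]
  let p := Polynomial.MonicDegreeEq.mk _ ((Polynomial.monic_X_pow (d - m)).mul hD) hdeg
  let E := (mapEquivMonic C (MvPolynomial (Fin (m + 1)) C) d).symm p
  have hE : (Polynomial.freeMonic C d).map E.toRingHom = .X ^ (d - m) * D :=
    congrArg Subtype.val ((mapEquivMonic C (MvPolynomial (Fin (m + 1)) C) d).apply_symm_apply p)
  refine ⟨E, ?_⟩
  have heval : (Polynomial.freeMonic C d).eval₂
      ((rename Fin.succ).comp E : _ →ₐ[C] MvPolynomial (Fin (m + 2)) C).toRingHom (X 0)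
      = (((Polynomial.freeMonic C d).map E.toRingHom).eval₂
        (rename Fin.succ : _ →ₐ[C] MvPolynomial (Fin (m + 2)) C).toRingHom (X 0)) :=
    (Polynomial.eval₂_map ..).symm
  rw [heval, hE]
  simp [D, Polynomial.eval₂_mul, Polynomial.eval₂_finsetProd]

variable (C d) in
/-- The generic monic polynomial of degree `d`, whose coefficients are indeterminates, at `u`. -/
noncomputable def genericMonicAt (u : R) : MvPolynomial (Fin d) C ⊗[C] R :=
  Polynomial.aeval (1 ⊗ₜ u) (Polynomial.freeMonic C d)

variable (C d) in
/-- The `MvPolynomial (Fin d) C`-algebra obtained from `R` by making `u` a root of the generic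
monic polynomial of degree `d`. -/
def GenericAdjunction (u : R) : Type _ :=
  (TwoSidedIdeal.span {genericMonicAt C d u}).ringCon.Quotient

noncomputable instance (u : R) : Ring (GenericAdjunction C d u) :=
  inferInstanceAs (Ring (TwoSidedIdeal.span {genericMonicAt C d u}).ringCon.Quotient)

noncomputable instance (u : R) : Algebra (MvPolynomial (Fin d) C) (GenericAdjunction C d u) :=
  inferInstanceAs (Algebra _ (TwoSidedIdeal.span {genericMonicAt C d u}).ringCon.Quotient)

noncomputable instance (u : R) : Algebra C (GenericAdjunction C d u) :=
  inferInstanceAs (Algebra C (TwoSidedIdeal.span {genericMonicAt C d u}).ringCon.Quotient)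

instance (u : R) : IsScalarTower C (MvPolynomial (Fin d) C) (GenericAdjunction C d u) :=
  inferInstanceAs (IsScalarTower C (MvPolynomial (Fin d) C)
    (TwoSidedIdeal.span {genericMonicAt C d u}).ringCon.Quotient)

namespace GenericAdjunction

variable (C d) in
/-- The quotient map onto `GenericAdjunction C d u`. -/
noncomputable def mk (u : R) :
    MvPolynomial (Fin d) C ⊗[C] R →ₐ[MvPolynomial (Fin d) C] GenericAdjunction C d u :=
  RingCon.mkₐ _ _

variable (C d) in
/-- The canonical map from `R` to the algebra in which `u` is a root of a generic polynomial. -/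
noncomputable def of (u : R) : R →ₐ[C] GenericAdjunction C d u :=
  ((mk C d u).restrictScalars C).comp Algebra.TensorProduct.includeRight

theorem mk_surjective (u : R) : Function.Surjective (mk C d u) :=
  RingCon.mkₐ_surjective _

theorem mk_eq_zero_iff {u : R} {z : MvPolynomial (Fin d) C ⊗[C] R} :
    mk C d u z = 0 ↔ z ∈ TwoSidedIdeal.span {genericMonicAt C d u} := by
  rw [TwoSidedIdeal.mem_iff, ← RingCon.eq]
  rfl

theorem isIntegral_of (u : R) : IsIntegral (MvPolynomial (Fin d) C) (of C d u u) := by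
  refine ⟨Polynomial.freeMonic C d, Polynomial.monic_freeMonic C d, ?_⟩
  have hroot : mk C d u (genericMonicAt C d u) = 0 :=
    mk_eq_zero_iff.2 (TwoSidedIdeal.subset_span rfl)
  rwa [genericMonicAt, ← Polynomial.aeval_algHom_apply] at hroot

theorem span_range_of (u : R) :
    Submodule.span (MvPolynomial (Fin d) C) (Set.range (of C d u)) = ⊤ := by
  refine Submodule.eq_top_iff'.2 fun x => ?_
  obtain ⟨x, rfl⟩ := mk_surjective u x
  induction x using TensorProduct.induction_on with
  | zero => simp
  | add x y hx hy => simpa using add_mem hx hy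
  | tmul c a =>
    have htmul : c ⊗ₜ[C] a = c • (1 ⊗ₜ a) := by simp [TensorProduct.smul_tmul']
    rw [htmul, map_smul]
    exact Submodule.smul_mem _ _ (Submodule.subset_span ⟨a, rfl⟩)

end GenericAdjunction

/-- The linear map `c ⊗ a ↦ a * slot C u y (E c * s)`. -/
noncomputable def slotContraction {P : Type*} [CommRing P] [Algebra C P] {m : ℕ}
    (E : P →ₐ[C] MvPolynomial (Fin (m + 1)) C) (u : R) (y : Fin m → R)
    (s : MvPolynomial (Fin (m + 1)) C) : P ⊗[C] R →ₗ[C] R :=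
  TensorProduct.lift
    ((LinearMap.mul C R).flip ∘ₗ slot C u y ∘ₗ LinearMap.mulRight C s ∘ₗ E.toLinearMap)

@[simp]
theorem slotContraction_tmul {P : Type*} [CommRing P] [Algebra C P] {m : ℕ}
    (E : P →ₐ[C] MvPolynomial (Fin (m + 1)) C) (u : R) (y : Fin m → R)
    (s : MvPolynomial (Fin (m + 1)) C) (c : P) (a : R) :
    slotContraction E u y s (c ⊗ₜ a) = a * slot C u y (E c * s) := by
  simp [slotContraction]

/-- The powers of `u` produced by evaluating a polynomial at `1 ⊗ u` go to a new slot. -/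
theorem slotContraction_tmul_mul_aeval_mul_tmul {P : Type*} [CommRing P] [Algebra C P] {m : ℕ}
    (E : P →ₐ[C] MvPolynomial (Fin (m + 1)) C) (u : R) (y : Fin m → R)
    (s : MvPolynomial (Fin (m + 1)) C) (p : Polynomial P) (c c' : P) (a b : R) :
    slotContraction E u y s (c ⊗ₜ a * Polynomial.aeval (1 ⊗ₜ u) p * c' ⊗ₜ b)
      = a * slot C u (Fin.cons b y : Fin (m + 1) → R)
        (p.eval₂ ((rename Fin.succ).comp E : _ →ₐ[C] _).toRingHom (X 0)
          * rename Fin.succ (E (c * c') * s)) := by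
  induction p using Polynomial.induction_on' with
  | add p q hp hq => simp only [map_add, mul_add, add_mul, hp, hq, Polynomial.eval₂_add]
  | monomial n r =>
    have haeval : c ⊗ₜ a * Polynomial.aeval (1 ⊗ₜ u) (Polynomial.monomial n r) * c' ⊗ₜ b
        = (c * r * c') ⊗ₜ[C] (a * u ^ n * b) := by
      simp [Polynomial.aeval_monomial, Algebra.TensorProduct.tmul_pow]
    have heval : (Polynomial.monomial n r).eval₂
          ((rename Fin.succ).comp E : _ →ₐ[C] MvPolynomial (Fin (m + 2)) C).toRingHom (X 0)
          * rename Fin.succ (E (c * c') * s)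
        = X 0 ^ n * rename Fin.succ (E (c * r * c') * s) := by
      simp only [Polynomial.eval₂_monomial, AlgHom.toRingHom_eq_coe, RingHom.coe_coe,
        AlgHom.comp_apply, map_mul]
      ring
    rw [haeval, heval, slotContraction_tmul, slot_cons_X_zero_pow_mul_rename]
    simp only [mul_assoc]

variable (C) in
/-- The left ideal generated by the values of `slot` on the multiples of `gapProduct C m`. -/
noncomputable def gapIdeal (u : R) (m : ℕ) : Submodule R R :=
  Submodule.span R {z | ∃ (y : Fin m → R) (q : MvPolynomial (Fin (m + 1)) C),
    slot C u y (q * gapProduct C m) = z}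

theorem one_mem_gapIdeal_zero (u : R) : 1 ∈ gapIdeal C u 0 :=
  Submodule.subset_span ⟨Fin.elim0, 1, by simp [gapProduct_zero, slot_one]⟩

theorem IsMonicMultilinearIdentity.gapIdeal_eq_bot {α : Equiv.Perm (Fin d) → C}
    (h : IsMonicMultilinearIdentity R α) (u : R) : gapIdeal C u d = ⊥ := by
  refine Submodule.span_eq_bot.2 ?_
  rintro _ ⟨y, q, rfl⟩
  exact h.slot_mul_gapProduct u y q

theorem slotContraction_mem_gapIdeal_succ {m : ℕ}
    {E : MvPolynomial (Fin d) C →ₐ[C] MvPolynomial (Fin (m + 1)) C} {k : ℕ}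
    (hE : (Polynomial.freeMonic C d).eval₂ ((rename Fin.succ).comp E : _ →ₐ[C] _).toRingHom (X 0)
      = X 0 ^ k * ∏ i : Fin m, (X 0 - X i.succ.succ))
    (u : R) (y : Fin m → R) (q : MvPolynomial (Fin (m + 1)) C)
    {z : MvPolynomial (Fin d) C ⊗[C] R} (hz : z ∈ TwoSidedIdeal.span {genericMonicAt C d u}) :
    slotContraction E u y (q * gapProduct C m) z ∈ gapIdeal C u (m + 1) := by
  rw [TwoSidedIdeal.mem_span_iff_mem_addSubgroup_closure] at hz
  induction hz using AddSubgroup.closure_induction with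
  | zero => simp
  | add x y _ _ hx hy => simpa using add_mem hx hy
  | neg x _ hx => simpa using hx
  | mem z hz =>
    obtain ⟨_, ⟨l, -, _, rfl, rfl⟩, r, -, rfl⟩ := hz
    dsimp only
    induction l using TensorProduct.induction_on with
    | zero => simp
    | add l l' hl hl' => simpa [add_mul] using add_mem hl hl'
    | tmul c a =>
    induction r using TensorProduct.induction_on with
    | zero => simp
    | add r r' hr hr' => simpa [mul_add] using add_mem hr hr'
    | tmul c' b =>
    rw [genericMonicAt, slotContraction_tmul_mul_aeval_mul_tmul, hE]
    refine Submodule.smul_mem _ a (Submodule.subset_span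
      ⟨Fin.cons b y, X 0 ^ k * rename Fin.succ (E (c * c') * q), ?_⟩)
    congr 1
    simp only [gapProduct_succ, map_mul]
    ring

theorem GenericAdjunction.mul_mem_gapIdeal_succ {m : ℕ} (hm : m ≤ d) {u x z : R}
    (hx : of C d u x = 0) (hz : z ∈ gapIdeal C u m) : x * z ∈ gapIdeal C u (m + 1) := by
  obtain ⟨E, hE⟩ := exists_algHom_eval₂_freeMonic (C := C) hm
  induction hz using Submodule.span_induction generalizing x with
  | zero => simp
  | add z z' _ _ hz hz' => simpa [mul_add] using add_mem (hz hx) (hz' hx)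
  | smul r z _ hz => simpa [mul_assoc] using hz (x := x * r) (by simp [hx])
  | mem z hz =>
    obtain ⟨y, q, rfl⟩ := hz
    simpa using slotContraction_mem_gapIdeal_succ hE u y q (mk_eq_zero_iff.1 hx)

theorem GenericAdjunction.ker_of_pow_subset_gapIdeal (u : R) {m : ℕ} (hm : m ≤ d) :
    {x : R | of C d u x = 0} ^ m ⊆ (gapIdeal C u m : Set R) := by
  induction m with
  | zero => simpa using one_mem_gapIdeal_zero u
  | succ m ih =>
    rw [pow_succ']
    rintro _ ⟨x, hx, z, hz, rfl⟩
    exact mul_mem_gapIdeal_succ (by lia) hx (ih (by lia) hz)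

theorem IsMonicMultilinearIdentity.ker_of_pow_subset {α : Equiv.Perm (Fin d) → C}
    (h : IsMonicMultilinearIdentity R α) (u : R) :
    {x : R | GenericAdjunction.of C d u x = 0} ^ d ⊆ {0} := by
  have hker := GenericAdjunction.ker_of_pow_subset_gapIdeal (C := C) u (le_refl d)
  rwa [h.gapIdeal_eq_bot u, Submodule.bot_coe] at hker

end GenericAdjunction

section Shirshov

variable {β : Type*} [LinearOrder β]

/-- `u` dominates `v` if every word starting with `u` is lexicographically greater than every word
starting with `v`. -/
def Dominates (u v : List β) : Prop := ∀ s s' : List β, v ++ s' < u ++ s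

theorem Dominates.ne {u v : List β} (h : Dominates u v) : u ≠ v := by
  simpa using (h [] []).ne'

theorem Dominates.append {u v : List β} (h : Dominates u v) (r r' : List β) :
    Dominates (u ++ r) (v ++ r') := fun s s' => by
  simpa only [List.append_assoc] using h (r ++ s) (r' ++ s')

theorem Dominates.append_left {u v : List β} (h : Dominates u v) (l : List β) :
    Dominates (l ++ u) (l ++ v) := fun s s' => by
  simpa only [List.append_assoc] using List.append_left_lt (h s s')

theorem Dominates.of_lt_of_length_eq {u v : List β} (hlen : v.length = u.length) (hlt : v < u) :
    Dominates u v := by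
  induction u generalizing v with
  | nil => exact absurd hlt (List.not_lt_nil v)
  | cons b u ih =>
    obtain _ | ⟨a, v⟩ := v
    · simp at hlen
    intro s s'
    rw [List.cons_append, List.cons_append, List.cons_lt_cons_iff]
    obtain hab | ⟨hab, huv⟩ := List.cons_lt_cons_iff.1 hlt
    · exact .inl hab
    · exact .inr ⟨hab, ih (by simpa using hlen) huv s s'⟩

theorem Dominates.flatten_of_perm {L L' : List (List β)} (hL : L.Pairwise Dominates)
    (hperm : L'.Perm L) (hne : L' ≠ L) : Dominates L.flatten L'.flatten := by
  induction L generalizing L' with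
  | nil => exact absurd hperm.eq_nil hne
  | cons u T ih =>
    obtain _ | ⟨v, T'⟩ := L'
    · exact absurd hperm.symm.eq_nil (List.cons_ne_nil u T)
    obtain rfl | hvu := eq_or_ne v u
    · exact (ih hL.of_cons hperm.cons_inv fun h => hne (h ▸ rfl)).append_left v
    · have hv : v ∈ T := List.mem_of_ne_of_mem hvu (hperm.subset List.mem_cons_self)
      exact ((List.pairwise_cons.1 hL).1 v hv).append T.flatten T'.flatten

/-- The alternative of Shirshov's theorem: `w` contains the `k`-th power of a nonempty word of
length less than `d`, or it is `d`-divided, i.e. contains `d` consecutive words each of which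
dominates the later ones. -/
def IsShirshovReducible (d k : ℕ) (w : List β) : Prop :=
  (∃ x v y, 0 < v.length ∧ v.length < d ∧ x ++ (List.replicate k v).flatten ++ y = w) ∨
  ∃ (x : List β) (vs : List (List β)) (y : List β),
    vs.length = d ∧ vs.Pairwise Dominates ∧ x ++ vs.flatten ++ y = w

theorem IsShirshovReducible.of_isInfix {d k : ℕ} {p w : List β} (h : IsShirshovReducible d k p)
    (hp : p <:+: w) : IsShirshovReducible d k w := by
  obtain ⟨s, r, rfl⟩ := hp
  obtain ⟨x, v, y, hpos, hlt, rfl⟩ | ⟨x, vs, y, hlen, hvs, rfl⟩ := h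
  · exact .inl ⟨s ++ x, v, y ++ r, hpos, hlt, by simp⟩
  · exact .inr ⟨s ++ x, vs, y ++ r, hlen, hvs, by simp⟩

/-- The set of factors of length `M` of the word `w`. -/
def factors {β : Type*} (M : ℕ) (w : List β) : Set (List β) := {p | p <:+: w ∧ p.length = M}

theorem finite_factors {β : Type*} [Finite β] (M : ℕ) (w : List β) : (factors M w).Finite :=
  (List.finite_length_eq β M).subset fun _ h => h.2

theorem replicate_take_isPrefix {β : Type*} {x : List β} {M q : ℕ}
    (hx : x.take M = (x.drop q).take M) (hq : q ≤ x.length) {j : ℕ} (hj : j * q ≤ M) :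
    (List.replicate j (x.take q)).flatten <+: x := by
  induction j with
  | zero => simp
  | succ j ih =>
    have hjM : j * q ≤ M := (Nat.mul_le_mul_right q j.le_succ).trans hj
    have htake : (List.replicate j (x.take q)).flatten <+: (x.drop q).take M :=
      hx ▸ List.prefix_take_iff.2 ⟨ih hjM, by simp [hq, hjM]⟩
    rw [List.replicate_succ, List.flatten_cons]
    conv_rhs => rw [← List.take_append_drop q x]
    exact (List.prefix_append_right_inj _).2 (htake.trans (List.take_prefix _ _))

/-- If the factors of length `k * d` starting at two of the first `d` positions coincide, then the
word is periodic from the first of these positions on. -/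
theorem IsShirshovReducible.of_ncard_factors_lt [Finite β] {d k : ℕ} {w : List β}
    (hw : k * d + d ≤ w.length) (hlt : (factors (k * d) w).ncard < d) :
    IsShirshovReducible d k w := by
  have hmem (i : Fin d) : (w.drop i).take (k * d) ∈ factors (k * d) w := by
    refine ⟨(List.take_prefix _ _).isInfix.trans (List.drop_suffix _ _).isInfix, ?_⟩
    simp only [List.length_take, List.length_drop]
    lia
  obtain ⟨i, j, hij, heq⟩ : ∃ i j : Fin d, i < j ∧
      (w.drop i).take (k * d) = (w.drop j).take (k * d) := by
    by_contra! hne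
    have hinj : Function.Injective fun i : Fin d => (w.drop i).take (k * d) :=
      .of_lt_imp_ne hne
    have hcard := Set.ncard_le_ncard (Set.range_subset_iff.2 hmem) (finite_factors _ w)
    rw [← Set.image_univ, Set.ncard_image_of_injective _ hinj, Set.ncard_univ] at hcard
    simp only [Nat.card_eq_fintype_card, Fintype.card_fin] at hcard
    lia
  have hdrop : (w.drop i).drop (j - i) = w.drop j := by
    rw [List.drop_drop, Nat.add_sub_cancel' hij.le]
  obtain ⟨r, hr⟩ := replicate_take_isPrefix (x := w.drop i) (q := j - i) (by rw [hdrop, heq])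
    (by rw [List.length_drop]; lia) (Nat.mul_le_mul_left k (by lia : (j - i : ℕ) ≤ d))
  refine .inl ⟨w.take i, (w.drop i).take (j - i), r, ?_, ?_, ?_⟩
  · simp only [List.length_take, List.length_drop]
    lia
  · simp only [List.length_take, List.length_drop]
    lia
  · rw [List.append_assoc, hr, List.take_append_drop]

theorem exists_flatten_of_forall_isInfix {β : Type*} {ℓ : ℕ} {zs : List (List β)} {x : List β}
    (h : ∀ z ∈ zs, ∀ p, p <:+: x → ℓ ≤ p.length → z <:+: p) (hx : zs.length * ℓ ≤ x.length) :
    ∃ a vs, a ++ List.flatten vs = x ∧ List.Forall₂ (· <+: ·) zs vs := by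
  induction zs generalizing x with
  | nil => exact ⟨x, [], by simp, .nil⟩
  | cons z zs ih =>
    rw [List.length_cons, Nat.succ_mul] at hx
    obtain ⟨a, vs, hvs, hprefix⟩ := ih (x := x.drop ℓ)
      (fun z hz p hp => h z (List.mem_cons_of_mem _ hz) p (hp.trans (List.drop_suffix _ _).isInfix))
      (by rw [List.length_drop]; lia)
    obtain ⟨s, r, hz⟩ := h z List.mem_cons_self (x.take ℓ) (List.take_prefix _ _).isInfix
      (by rw [List.length_take]; lia)
    refine ⟨s, (z ++ r ++ a) :: vs, ?_, .cons ⟨r ++ a, by simp⟩ hprefix⟩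
    conv_rhs => rw [← List.take_append_drop ℓ x, ← hz, ← hvs]
    simp

theorem pairwise_dominates_of_forall₂_isPrefix {zs vs : List (List β)}
    (h : List.Forall₂ (· <+: ·) zs vs) (hz : zs.Pairwise Dominates) : vs.Pairwise Dominates := by
  rw [List.forall₂_iff_get] at h
  rw [List.pairwise_iff_getElem] at hz ⊢
  intro i j hi hj hij
  obtain ⟨r, hr⟩ := h.2 i (h.1 ▸ hi) hi
  obtain ⟨r', hr'⟩ := h.2 j (h.1 ▸ hj) hj
  have hdom := (hz i j (h.1 ▸ hi) (h.1 ▸ hj) hij).append r r'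
  simp only [List.get_eq_getElem] at hr hr'
  rwa [hr, hr'] at hdom

theorem exists_pairwise_dominates {M d : ℕ} {S : Set (List β)} (hS : S.Finite) (hd : d ≤ S.ncard)
    (hlen : ∀ p ∈ S, p.length = M) :
    ∃ zs : List (List β), zs.length = d ∧ (∀ z ∈ zs, z ∈ S) ∧ zs.Pairwise Dominates := by
  rw [Set.ncard_eq_toFinset_card S hS] at hd
  obtain ⟨T, hTS, rfl⟩ := Finset.exists_subset_card_eq hd
  have hmem {z : List β} (hz : z ∈ T.sort (· ≥ ·)) : z ∈ S :=
    hS.mem_toFinset.1 (hTS ((Finset.mem_sort _).1 hz))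
  refine ⟨T.sort (· ≥ ·), Finset.length_sort _, fun z => hmem, ?_⟩
  refine T.sortedGT_sort.pairwise.imp_of_mem fun {z z'} hz hz' hlt => ?_
  exact .of_lt_of_length_eq (by rw [hlen z (hmem hz), hlen z' (hmem hz')]) hlt

/-- If all long factors of `w` have the same factors of length `k * d` as `w`, then any `d` of
these, in decreasing order, are found in `d` consecutive blocks of `w`. -/
theorem exists_forall_length_le_isShirshovReducible [Finite β] (d k : ℕ) :
    ∃ ℓ, ∀ w : List β, ℓ ≤ w.length → IsShirshovReducible d k w := by
  suffices hcard : ∀ c, ∃ ℓ, ∀ w : List β, ℓ ≤ w.length → (factors (k * d) w).ncard ≤ c →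
      IsShirshovReducible d k w by
    obtain ⟨ℓ, hℓ⟩ := hcard {p : List β | p.length = k * d}.ncard
    exact ⟨ℓ, fun w hw => hℓ w hw
      (Set.ncard_le_ncard (fun z hz => hz.2) (List.finite_length_eq β _))⟩
  intro c
  induction c with
  | zero =>
    refine ⟨k * d + d, fun w hw hc => ?_⟩
    obtain rfl | hd := d.eq_zero_or_pos
    · exact .inr ⟨[], [], w, rfl, .nil, rfl⟩
    · exact .of_ncard_factors_lt hw (by lia)
  | succ c ih =>
    obtain ⟨ℓ, hℓ⟩ := ih
    refine ⟨k * d + d + d * ℓ, fun w hw hc => ?_⟩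
    obtain hlt | hle := lt_or_ge (factors (k * d) w).ncard d
    · exact .of_ncard_factors_lt (by lia) hlt
    by_cases! hfew : ∃ p, p <:+: w ∧ ℓ ≤ p.length ∧ (factors (k * d) p).ncard ≤ c
    · obtain ⟨p, hpw, hp, hpc⟩ := hfew
      exact (hℓ p hp hpc).of_isInfix hpw
    have hfactors {p : List β} (hpw : p <:+: w) (hp : ℓ ≤ p.length) :
        factors (k * d) p = factors (k * d) w :=
      Set.eq_of_subset_of_ncard_le (fun z hz => ⟨hz.1.trans hpw, hz.2⟩)
        (hc.trans (hfew p hpw hp)) (finite_factors _ w)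
    obtain ⟨zs, rfl, hzs, hdom⟩ :=
      exists_pairwise_dominates (finite_factors (k * d) w) hle fun p hp => hp.2
    have hinfix (z : List β) (hz : z ∈ zs) (p : List β) (hpw : p <:+: w) (hp : ℓ ≤ p.length) :
        z <:+: p := by
      have hzw := hzs z hz
      rw [← hfactors hpw hp] at hzw
      exact hzw.1
    obtain ⟨a, vs, hvs, hprefix⟩ := exists_flatten_of_forall_isInfix hinfix (by lia)
    exact .inr ⟨a, vs, [], hprefix.length_eq.symm,
      pairwise_dominates_of_forall₂_isPrefix hprefix hdom, by simpa using hvs⟩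

end Shirshov

section Rewriting

variable {C R β : Type*} [CommRing C] [Ring R] [Algebra C R] {d : ℕ} {α : Equiv.Perm (Fin d) → C}

theorem IsMonicMultilinearIdentity.mul_prod_mul_mem (h : IsMonicMultilinearIdentity R α)
    {Q : Submodule C R} (x y : R) {f : Fin d → R}
    (hf : ∀ σ : Equiv.Perm (Fin d), σ ≠ 1 → x * (List.ofFn (f ∘ σ)).prod * y ∈ Q) :
    x * (List.ofFn f).prod * y ∈ Q := by
  have hsum : ∑ σ, α σ • (x * (List.ofFn (f ∘ σ)).prod * y) = 0 := by
    simpa [mul_sum, sum_mul] using congrArg (x * · * y) (h.sum_smul_prod f)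
  rw [← add_sum_erase _ _ (mem_univ 1), h.coeff_one, one_smul, Equiv.Perm.coe_one,
    Function.comp_id] at hsum
  rw [eq_neg_of_add_eq_zero_left hsum]
  exact Q.neg_mem (Q.sum_mem fun σ hσ => Q.smul_mem _ (hf σ (ne_of_mem_erase hσ)))

theorem IsMonicMultilinearIdentity.map_prod_mem [Finite β] [LinearOrder β]
    (h : IsMonicMultilinearIdentity R α) (a : β → R) {k n : ℕ} {Q : Submodule C R}
    (hred : ∀ w : List β, w.length = n → IsShirshovReducible d k w)
    (hQ : ∀ x v y : List β, 0 < v.length → v.length < d →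
      x.length + k * v.length + y.length = n →
      (x.map a).prod * (v.map a).prod ^ k * (y.map a).prod ∈ Q)
    {w : List β} (hw : w.length = n) : (w.map a).prod ∈ Q := by
  have hwf : {w : List β | w.length = n}.WellFoundedOn (· < ·) :=
    (List.finite_length_eq β n).wellFoundedOn
  refine hwf.induction (P := fun w => (w.map a).prod ∈ Q) hw fun w hw ih => ?_
  obtain ⟨x, v, y, hpos, hlt, rfl⟩ | ⟨x, vs, y, hlen, hvs, rfl⟩ := hred w hw
  · have hmem := hQ x v y hpos hlt (by simpa [add_assoc] using hw)
    simpa [List.map_flatten, List.prod_flatten, mul_assoc] using hmem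
  obtain ⟨f, rfl⟩ : ∃ f : Fin d → List β, vs = List.ofFn f := by
    subst hlen
    exact ⟨vs.get, (List.ofFn_get vs).symm⟩
  have hword (f : Fin d → List β) : ((x ++ (List.ofFn f).flatten ++ y).map a).prod
      = (x.map a).prod * (List.ofFn fun i => ((f i).map a).prod).prod * (y.map a).prod := by
    simp [List.map_flatten, List.prod_flatten, List.map_ofFn, Function.comp_def, mul_assoc]
  rw [hword]
  refine h.mul_prod_mul_mem _ _ fun σ hσ => ?_
  have hperm : (List.ofFn (f ∘ σ)).Perm (List.ofFn f) := Equiv.Perm.ofFn_comp_perm σ f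
  have hne : List.ofFn (f ∘ σ) ≠ List.ofFn f := by
    have hinj : Function.Injective f := List.nodup_ofFn.1 (hvs.imp Dominates.ne)
    exact fun heq => hσ (Equiv.ext fun i => hinj (congrFun (List.ofFn_injective heq) i))
  have hlt : x ++ (List.ofFn (f ∘ σ)).flatten ++ y < x ++ (List.ofFn f).flatten ++ y :=
    ((Dominates.flatten_of_perm hvs hperm hne).append_left x) y y
  have hmem := ih _ (by simpa [hperm.flatten.length_eq] using hw) hlt
  rwa [hword] at hmem

theorem IsMonicMultilinearIdentity.exists_forall_map_prod_mem [Finite β]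
    (h : IsMonicMultilinearIdentity R α) (a : β → R) (k : ℕ) :
    ∃ ℓ, ∀ n, ℓ ≤ n → ∀ Q : Submodule C R,
      (∀ x v y : List β, 0 < v.length → v.length < d → x.length + k * v.length + y.length = n →
        (x.map a).prod * (v.map a).prod ^ k * (y.map a).prod ∈ Q) →
      ∀ w : List β, w.length = n → (w.map a).prod ∈ Q := by
  classical
  let _ : LinearOrder β := linearOrderOfSTO WellOrderingRel
  obtain ⟨ℓ, hℓ⟩ := exists_forall_length_le_isShirshovReducible (β := β) d k
  exact ⟨ℓ, fun n hn Q hQ w => h.map_prod_mem a (fun w hw => hℓ w (hw ▸ hn)) hQ⟩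

theorem exists_monic_forall_aeval_eq_zero {ι : Type*} {s : Set ι} (hs : s.Finite) {x : ι → R}
    (hx : ∀ i ∈ s, IsIntegral C (x i)) :
    ∃ p : Polynomial C, p.Monic ∧ ∀ i ∈ s, Polynomial.aeval (x i) p = 0 := by
  choose! p hp hroot using hx
  refine ⟨∏ i ∈ hs.toFinset, p i, Polynomial.monic_prod_of_monic _ _ (by simpa using hp), ?_⟩
  intro i hi
  obtain ⟨q, hq⟩ := dvd_prod_of_mem p (hs.mem_toFinset.2 hi)
  rw [hq, map_mul, Polynomial.aeval_def, hroot i hi, zero_mul]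

theorem span_range_map_prod {a : β → R} (ha : Algebra.adjoin C (Set.range a) = ⊤) :
    Submodule.span C (Set.range fun w : List β => (w.map a).prod) = ⊤ := by
  rw [← Algebra.top_toSubmodule, ← ha, Algebra.adjoin_eq_span]
  rw [← FreeMonoid.mrange_lift, MonoidHom.coe_mrange]
  exact congrArg _ (congrArg Set.range (funext fun w => (FreeMonoid.lift_apply a w).symm))

/-- A monic equation satisfied by all the words of length less than `d` shortens the words provided
by Shirshov's theorem, so that short words span. -/
theorem IsMonicMultilinearIdentity.finite_of_isIntegral [Finite β]
    (h : IsMonicMultilinearIdentity R α) {a : β → R} (ha : Algebra.adjoin C (Set.range a) = ⊤)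
    (hint : ∀ v : List β, 0 < v.length → v.length < d → IsIntegral C (v.map a).prod) :
    Module.Finite C R := by
  obtain ⟨p, hp, hroot⟩ := exists_monic_forall_aeval_eq_zero
    (s := {v : List β | 0 < v.length ∧ v.length < d})
    ((List.finite_length_lt β d).subset fun v hv => hv.2) fun v hv => hint v hv.1 hv.2
  obtain ⟨ℓ, hℓ⟩ := h.exists_forall_map_prod_mem a p.natDegree
  let Q := Submodule.span C ((fun w => (w.map a).prod) '' {w : List β | w.length < ℓ})
  suffices hQ : ∀ w : List β, (w.map a).prod ∈ Q by
    have hfin := (List.finite_length_lt β ℓ).image fun w => (w.map a).prod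
    refine ⟨hfin.toFinset, ?_⟩
    rw [hfin.coe_toFinset, eq_top_iff, ← span_range_map_prod ha]
    exact Submodule.span_le.2 (Set.range_subset_iff.2 hQ)
  intro w
  induction hn : w.length using Nat.strong_induction_on generalizing w with
  | _ n ih =>
  obtain hlt | hle := lt_or_ge n ℓ
  · exact Submodule.subset_span ⟨w, hn.trans_lt hlt, rfl⟩
  refine hℓ n hle Q (fun x v y hpos hvd hlen => ?_) w hn
  have hpow : (v.map a).prod ^ p.natDegree
      = -∑ i ∈ range p.natDegree, p.coeff i • (v.map a).prod ^ i := by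
    have hzero := hroot v ⟨hpos, hvd⟩
    rw [hp.as_sum] at hzero
    simpa [Algebra.smul_def] using eq_neg_of_add_eq_zero_left (by simpa using hzero)
  rw [hpow, mul_neg, neg_mul, mul_sum, sum_mul]
  refine Q.neg_mem (Q.sum_mem fun i hi => ?_)
  rw [mul_smul_comm, smul_mul_assoc]
  refine Q.smul_mem _ ?_
  have hi := Nat.mul_lt_mul_of_pos_right (mem_range.1 hi) hpos
  simpa [List.map_flatten, List.prod_flatten, mul_assoc] using
    ih (x.length + i * v.length + y.length) (by lia) (x ++ (List.replicate i v).flatten ++ y)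
      (by simp [add_assoc])

theorem map_prod_mem_of_ne_nil {M : Type*} [Monoid M] {N : Subsemigroup M} {a : β → M}
    (ha : ∀ i, a i ∈ N) {v : List β} (hv : v ≠ []) : (v.map a).prod ∈ N := by
  induction v with
  | nil => exact absurd rfl hv
  | cons i v ih =>
    obtain rfl | hv' := eq_or_ne v []
    · simpa using ha i
    · simpa using N.mul_mem (ha i) (ih hv')

theorem IsMonicMultilinearIdentity.exists_pow_subset_of_finite (h : IsMonicMultilinearIdentity R α)
    {N : Subsemigroup R} (hN : ∀ x ∈ N, IsNilpotent x) {S : Set R} (hS : S.Finite)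
    (hSN : S ⊆ N) : ∃ s : ℕ, S ^ s ⊆ {0} := by
  have := hS.to_subtype
  obtain ⟨k, hk⟩ : ∃ k, ∀ v ∈ {v : List S | v.length < d}, 0 < v.length →
      (v.map Subtype.val).prod ^ k = 0 := by
    refine ((Filter.eventually_all_finite (List.finite_length_lt S d)).2 fun v hv => ?_ :
      ∀ᶠ k in Filter.atTop, _).exists
    obtain rfl | hv := eq_or_ne v []
    · simp
    obtain ⟨k, hk⟩ := hN _ (map_prod_mem_of_ne_nil (fun x : S => hSN x.2) hv)
    filter_upwards [Filter.eventually_ge_atTop k] with m hm _ using pow_eq_zero_of_le hm hk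
  obtain ⟨ℓ, hℓ⟩ := h.exists_forall_map_prod_mem ((↑) : S → R) k
  refine ⟨ℓ, fun x hx => ?_⟩
  obtain ⟨f, rfl⟩ := Set.mem_pow.1 hx
  have hmem := hℓ ℓ le_rfl ⊥ (fun x v y hpos hvd _ => by rw [hk v hvd hpos]; simp)
    (List.ofFn f) List.length_ofFn
  simpa [List.map_ofFn, Function.comp_def] using hmem

end Rewriting

section BaseChange

variable {C R C' R' : Type*} [CommRing C] [Ring R] [Algebra C R] [CommRing C'] [Ring R']
  [Algebra C' R'] [Algebra C C'] [Algebra C R'] [IsScalarTower C C' R'] {φ : R →ₐ[C] R'}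

theorem adjoin_range_comp_eq_top (hφ : Submodule.span C' (Set.range φ) = ⊤) {β : Type*} {a : β → R}
    (ha : Algebra.adjoin C (Set.range a) = ⊤) : Algebra.adjoin C' (Set.range (φ ∘ a)) = ⊤ := by
  have hrange : φ.range ≤ (Algebra.adjoin C' (Set.range (φ ∘ a))).restrictScalars C := by
    rw [← Algebra.map_top, ← ha, AlgHom.map_adjoin, ← Set.range_comp]
    exact Algebra.adjoin_le Algebra.subset_adjoin
  rw [← Algebra.toSubmodule_eq_top, eq_top_iff, ← hφ, Submodule.span_le]
  exact hrange

theorem multilinearMap_eq_zero_of_span_eq_top {ι M M' : Type*} [Finite ι] [AddCommGroup M]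
    [Module C M] [AddCommGroup M'] [Module C M'] {s : Set M} (hs : Submodule.span C s = ⊤)
    {T : MultilinearMap C (fun _ : ι => M) M'} (hT : ∀ x : ι → M, (∀ i, x i ∈ s) → T x = 0) :
    T = 0 := by
  classical
  have := Fintype.ofFinite ι
  suffices hJ : ∀ (J : Finset ι) (x : ι → M), (∀ i ∉ J, x i ∈ s) → T x = 0 from
    MultilinearMap.ext fun x => hJ univ x (by simp)
  intro J
  induction J using Finset.induction_on with
  | empty => simpa using hT
  | insert j J hj ih =>
    intro x hx
    have hlin : T.toLinearMap x j = 0 := LinearMap.ext_on hs fun m hm => by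
      refine ih _ fun i hi => ?_
      obtain rfl | hij := eq_or_ne i j
      · simpa using hm
      · simpa [hij] using hx i (by simp [hij, hi])
    simpa using LinearMap.congr_fun hlin (x j)

theorem IsMonicMultilinearIdentity.map {d : ℕ} {α : Equiv.Perm (Fin d) → C}
    (h : IsMonicMultilinearIdentity R α) (hφ : Submodule.span C' (Set.range φ) = ⊤) :
    IsMonicMultilinearIdentity R' fun σ => algebraMap C C' (α σ) := by
  let T : MultilinearMap C' (fun _ : Fin d => R') R' :=
    ∑ σ, algebraMap C C' (α σ) • (MultilinearMap.mkPiAlgebraFin C' d R').domDomCongr σ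
  have hT (x : Fin d → R') :
      T x = ∑ σ, algebraMap C C' (α σ) • (List.ofFn (x ∘ σ)).prod := by
    simp [T, Function.comp_def]
  refine ⟨by rw [h.coeff_one, map_one], fun x => ?_⟩
  rw [← hT, multilinearMap_eq_zero_of_span_eq_top (T := T) hφ, zero_apply]
  intro x hx
  choose y hy using hx
  obtain rfl : φ ∘ y = x := funext hy
  simpa [hT, map_list_prod, List.map_ofFn, Function.comp_def] using congrArg φ (h.sum_smul_prod y)

end BaseChange

section MainInduction

theorem exists_pow_subset_of_image {R R' : Type*} [Semiring R] [Semiring R'] (φ : R →+* R') {d : ℕ}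
    (hker : {x : R | φ x = 0} ^ d ⊆ {0}) {A : Set R} (hA : ∃ s : ℕ, (φ '' A) ^ s ⊆ {0}) :
    ∃ s : ℕ, A ^ s ⊆ {0} := by
  obtain ⟨s, hs⟩ := hA
  refine ⟨s * d, ?_⟩
  rw [pow_mul]
  have hmem : A ^ s ⊆ {x | φ x = 0} := by
    rw [← Set.image_pow, Set.image_subset_iff] at hs
    exact hs
  exact (Set.pow_subset_pow_left hmem).trans hker

theorem IsMonicMultilinearIdentity.exists_pow_subset_of_moduleFinite {C R : Type*} [CommRing C]
    [IsNoetherianRing C] [Ring R] [Algebra C R] [Module.Finite C R] {d : ℕ}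
    {α : Equiv.Perm (Fin d) → C} (h : IsMonicMultilinearIdentity R α) {N : Subsemigroup R}
    (hN : ∀ x ∈ N, IsNilpotent x) : ∃ s : ℕ, (N : Set R) ^ s ⊆ {0} := by
  obtain ⟨S, hSN, hspan⟩ := (Submodule.fg_span_iff_fg_span_finset_subset (R := C) (N : Set R)).1
    (IsNoetherian.noetherian _)
  obtain ⟨s, hs⟩ := h.exists_pow_subset_of_finite hN S.finite_toSet hSN
  refine ⟨s, ?_⟩
  calc (N : Set R) ^ s ⊆ (Submodule.span C (N : Set R) : Set R) ^ s :=
        Set.pow_subset_pow_left Submodule.subset_span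
    _ ⊆ (Submodule.span C ((S : Set R) ^ s) : Set R) := by
        rw [← Submodule.span_pow, ← hspan]
        exact Submodule.pow_subset_pow _
    _ ⊆ {0} := by
        rw [Submodule.span_eq_bot.2 fun x hx => hs hx, Submodule.bot_coe]

/-- The words in `W`, which need not be integral, are made integral one at a time by passing to
generic adjunctions. -/
theorem exists_pow_subset_of_isIntegral_of_notMem {d : ℕ} {β : Type*} [Finite β] (W : List (List β))
    {C : Type u} {R : Type (max u v)} [CommRing C] [IsNoetherianRing C] [Ring R] [Algebra C R]
    {α : Equiv.Perm (Fin d) → C} (h : IsMonicMultilinearIdentity R α) {a : β → R}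
    (ha : Algebra.adjoin C (Set.range a) = ⊤)
    (hW : ∀ v : List β, 0 < v.length → v.length < d → v ∉ W → IsIntegral C (v.map a).prod)
    {N : Subsemigroup R} (hN : ∀ x ∈ N, IsNilpotent x) : ∃ s : ℕ, (N : Set R) ^ s ⊆ {0} := by
  induction W generalizing C R with
  | nil =>
    have := h.finite_of_isIntegral ha fun v hpos hlt => hW v hpos hlt List.not_mem_nil
    exact h.exists_pow_subset_of_moduleFinite hN
  | cons v₀ W ih =>
    let u := (v₀.map a).prod
    let φ := GenericAdjunction.of C d u
    have hφ := GenericAdjunction.span_range_of (C := C) (d := d) u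
    have hprod (v : List β) : (v.map (φ ∘ a)).prod = φ (v.map a).prod := by
      rw [map_list_prod, List.map_map]
    have hint (v : List β) (hpos : 0 < v.length) (hlt : v.length < d) (hv : v ∉ W) :
        IsIntegral (MvPolynomial (Fin d) C) (v.map (φ ∘ a)).prod := by
      rw [hprod]
      obtain rfl | hne := eq_or_ne v v₀
      · exact GenericAdjunction.isIntegral_of u
      · exact ((hW v hpos hlt (by simp [hne, hv])).map φ).tower_top
    refine exists_pow_subset_of_image φ.toRingHom (h.ker_of_pow_subset u) ?_
    refine ih (h.map hφ) (adjoin_range_comp_eq_top hφ ha) hint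
      (N := N.map φ.toMonoidHom.toMulHom) ?_
    rintro _ ⟨x, hx, rfl⟩
    exact (hN x hx).map φ

end MainInduction

section Multilinearization

theorem sum_surjective_eq_sum_neg_one_pow_smul {C ι κ M M' : Type*} [Semiring C] [Fintype ι]
    [Fintype κ] [DecidableEq ι] [DecidableEq κ] [AddCommMonoid M] [Module C M] [AddCommGroup M']
    [Module C M']
    (T : MultilinearMap C (fun _ : ι => M) M') (g : ι → κ → M) :
    ∑ h : ι → κ with h.Surjective, T (fun i => g i (h i))
      = ∑ J : Finset κ, (-1 : ℤ) ^ #J • T fun i => ∑ j ∈ Jᶜ, g i j := by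
  let avoiding (j : κ) : Finset (ι → κ) := {h | ∀ i, h i ≠ j}
  have hsurj : univ.inf (fun j => (avoiding j)ᶜ) = ({h | h.Surjective} : Finset (ι → κ)) := by
    ext h
    rw [mem_filter_univ]
    simp [avoiding, Finset.mem_inf, Function.Surjective]
  have havoid (J : Finset κ) : J.inf avoiding = Fintype.piFinset fun _ => Jᶜ := by
    ext h
    simp only [avoiding, Finset.mem_inf, mem_filter_univ, Fintype.mem_piFinset, mem_compl]
    exact ⟨fun hJ i hi => hJ _ hi i rfl, fun hJ j hj i hij => hJ i (hij ▸ hj)⟩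
  rw [← hsurj, inclusion_exclusion_sum_inf_compl, powerset_univ]
  simp_rw [havoid, MultilinearMap.map_sum_finset]

theorem sum_surjective_prod_single {R X : Type*} [Semiring R] [DecidableEq X] {d n : ℕ} (hn : n ≤ d)
    (l : Fin d → X) (z : Fin d → R) (f : Fin n → X) :
    ∑ h : Fin n → Fin d with h.Surjective,
        (List.ofFn fun p => (Pi.single (l (h p)) (z (h p)) : X → R) (f p)).prod
      = ∑ σ : Equiv.Perm (Fin d),
        if List.ofFn (l ∘ σ) = List.ofFn f then (List.ofFn (z ∘ σ)).prod else 0 := by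
  have hprod (h : Fin n → Fin d) :
      (List.ofFn fun p => (Pi.single (l (h p)) (z (h p)) : X → R) (f p)).prod
        = if l ∘ h = f then (List.ofFn (z ∘ h)).prod else 0 := by
    split_ifs with hf
    · subst hf
      simp [Function.comp_def]
    · obtain ⟨p, hp⟩ := Function.ne_iff.1 hf
      exact List.prod_eq_zero (List.mem_ofFn.2 ⟨p, Pi.single_eq_of_ne' hp _⟩)
  simp_rw [hprod]
  obtain hlt | rfl := hn.lt_or_eq
  · have hsurj (h : Fin n → Fin d) : ¬ h.Surjective := fun hh =>
      hlt.not_ge (by simpa using Fintype.card_le_of_surjective h hh)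
    have hne (σ : Equiv.Perm (Fin d)) : List.ofFn (l ∘ σ) ≠ List.ofFn f := fun hσ =>
      hlt.ne' (by simpa using congrArg List.length hσ)
    simp [hsurj, hne]
  · simp_rw [List.ofFn_inj, sum_filter]
    refine (Fintype.sum_of_injective (fun σ : Equiv.Perm (Fin n) => (σ : Fin n → Fin n))
      DFunLike.coe_injective _ _ (fun h hh => if_neg fun hsurj => hh ?_)
      fun σ => by simp [σ.surjective]).symm
    exact ⟨.ofBijective h (Finite.surjective_iff_bijective.1 hsurj), rfl⟩

theorem sum_neg_one_pow_smul_lift_sum_single {R X : Type*} [Ring R] [DecidableEq X] {d : ℕ}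
    {w : FreeMonoid X} (hw : w.length ≤ d) (l : Fin d → X) (z : Fin d → R) :
    ∑ J : Finset (Fin d),
        (-1 : ℤ) ^ #J • FreeMonoid.lift (fun x => ∑ j ∈ Jᶜ, (Pi.single (l j) (z j) : X → R) x) w
      = ∑ σ : Equiv.Perm (Fin d), if List.ofFn (l ∘ σ) = w.toList then
          (List.ofFn (z ∘ σ)).prod else 0 := by
  obtain ⟨n, f, rfl⟩ : ∃ (n : ℕ) (f : Fin n → X), FreeMonoid.ofList (List.ofFn f) = w :=
    ⟨_, w.toList.get, by rw [List.ofFn_get, FreeMonoid.ofList_toList]⟩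
  have hpolarize := sum_surjective_eq_sum_neg_one_pow_smul (MultilinearMap.mkPiAlgebraFin ℤ n R)
    fun p j => (Pi.single (l j) (z j) : X → R) (f p)
  have hn : n ≤ d := by simpa [FreeMonoid.length] using hw
  simp only [MultilinearMap.mkPiAlgebraFin_apply, sum_surjective_prod_single hn] at hpolarize
  simp only [FreeMonoid.lift_ofList, List.map_ofFn]
  exact hpolarize.symm

theorem exists_isMonicMultilinearIdentity {C R X : Type*} [CommRing C] [Ring R] [Algebra C R]
    {c : FreeMonoid X →₀ C} {d : ℕ} {l : Fin d → X}
    (hunit : IsUnit (c (.ofList (List.ofFn l)))) (hmax : ∀ w ∈ c.support, w.length ≤ d)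
    (hid : ∀ a : X → R, c.sum (fun w r => r • FreeMonoid.lift a w) = 0) :
    ∃ α : Equiv.Perm (Fin d) → C, IsMonicMultilinearIdentity R α := by
  classical
  obtain ⟨γ, hγ⟩ := hunit
  refine ⟨fun σ => ↑γ⁻¹ * c (.ofList (List.ofFn (l ∘ σ))), by simp [← hγ], fun z => ?_⟩
  let g (J : Finset (Fin d)) (x : X) : R := ∑ j ∈ Jᶜ, (Pi.single (l j) (z j) : X → R) x
  suffices hsum : ∑ σ : Equiv.Perm (Fin d),
      c (.ofList (List.ofFn (l ∘ σ))) • (List.ofFn (z ∘ σ)).prod = 0 by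
    simp_rw [mul_smul, ← smul_sum, hsum, smul_zero]
  calc _ = ∑ w ∈ c.support, c w • ∑ J, (-1 : ℤ) ^ #J • FreeMonoid.lift (g J) w := by
        rw [sum_congr rfl fun w hw => congrArg (c w • ·) <|
          sum_neg_one_pow_smul_lift_sum_single (hmax w hw) l z]
        simp_rw [smul_sum, smul_ite, smul_zero]
        rw [sum_comm]
        simp only [← FreeMonoid.toList.symm_apply_eq, FreeMonoid.toList_symm, sum_ite_eq,
          Finsupp.mem_support_iff]
        refine sum_congr rfl fun σ _ => (ite_eq_left_iff.2 fun h => ?_).symm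
        rw [not_not.1 h, zero_smul]
    _ = ∑ J : Finset (Fin d), (-1 : ℤ) ^ #J • c.sum fun w r => r • FreeMonoid.lift (g J) w := by
        simp_rw [Finsupp.sum, smul_sum, smul_comm (c _)]
        exact sum_comm
    _ = 0 := by simp [hid]

end Multilinearization

theorem freeAlgebra_lift_apply {C R X : Type*} [CommSemiring C] [Semiring R] [Algebra C R]
    (a : X → R) (f : FreeAlgebra C X) :
    FreeAlgebra.lift C a f = (FreeAlgebra.equivMonoidAlgebraFreeMonoid f).coeff.sum
      fun w r => r • FreeMonoid.lift a w := by
  have hlift : FreeAlgebra.lift C a = (MonoidAlgebra.lift C R (FreeMonoid X)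
      (FreeMonoid.lift a)).comp FreeAlgebra.equivMonoidAlgebraFreeMonoid.toAlgHom :=
    FreeAlgebra.hom_ext <| funext fun x => by simp [FreeAlgebra.equivMonoidAlgebraFreeMonoid]
  rw [hlift]
  exact MonoidAlgebra.lift_apply ..

section NilRadical

variable {R : Type*} [Ring R]

theorem isNilpotent_of_mem_sup {I J : TwoSidedIdeal R} (hI : ∀ y ∈ I, IsNilpotent y)
    (hJ : ∀ y ∈ J, IsNilpotent y) {x : R} (hx : x ∈ I ⊔ J) : IsNilpotent x := by
  obtain ⟨y, hy, z, hz, rfl⟩ := TwoSidedIdeal.mem_sup.1 hx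
  have hpow (n : ℕ) : (y + z) ^ n - z ^ n ∈ I := by
    induction n with
    | zero => simp
    | succ n ih =>
      have hsplit : (y + z) ^ (n + 1) - z ^ (n + 1)
          = (y + z) * ((y + z) ^ n - z ^ n) + y * z ^ n := by
        rw [pow_succ', pow_succ']
        noncomm_ring
      rw [hsplit]
      exact I.add_mem (I.mul_mem_left _ _ ih) (I.mul_mem_right _ _ hy)
  obtain ⟨n, hn⟩ := hJ z hz
  have hmem := hpow n
  rw [hn, sub_zero] at hmem
  exact (hI _ hmem).of_pow

variable (R) in
/-- The nil radical: the sum of all nil two-sided ideals. -/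
def nilRadical : TwoSidedIdeal R := sSup {I | ∀ y ∈ I, IsNilpotent y}

theorem isNilpotent_of_mem_nilRadical {x : R} (hx : x ∈ nilRadical R) : IsNilpotent x := by
  let K : TwoSidedIdeal R := .mk' {x | ∃ I : TwoSidedIdeal R, (∀ y ∈ I, IsNilpotent y) ∧ x ∈ I}
    ⟨⊥, by simp [TwoSidedIdeal.mem_bot], zero_mem _⟩
    (fun ⟨I, hI, hx⟩ ⟨J, hJ, hy⟩ => ⟨I ⊔ J, fun _ => isNilpotent_of_mem_sup hI hJ,
      add_mem (TwoSidedIdeal.mem_sup_left hx) (TwoSidedIdeal.mem_sup_right hy)⟩)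
    (fun ⟨I, hI, hx⟩ => ⟨I, hI, neg_mem hx⟩)
    (fun ⟨I, hI, hx⟩ => ⟨I, hI, I.mul_mem_left _ _ hx⟩)
    (fun ⟨I, hI, hx⟩ => ⟨I, hI, I.mul_mem_right _ _ hx⟩)
  have hle : nilRadical R ≤ K :=
    sSup_le fun I hI x hx => (TwoSidedIdeal.mem_mk' ..).2 ⟨I, hI, hx⟩
  obtain ⟨I, hI, hxI⟩ := (TwoSidedIdeal.mem_mk' ..).1 (hle hx)
  exact hI x hxI

end NilRadical

theorem IsMonicMultilinearIdentity.exists_pow_subset_of_finiteType {C : Type u} {R : Type v}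
    [CommRing C] [IsNoetherianRing C] [Ring R] [Algebra C R] [Algebra.FiniteType C R] {d : ℕ}
    {α : Equiv.Perm (Fin d) → C} (h : IsMonicMultilinearIdentity R α) {N : Subsemigroup R}
    (hN : ∀ x ∈ N, IsNilpotent x) : ∃ s : ℕ, (N : Set R) ^ s ⊆ {0} := by
  let e : R ≃ₐ[C] ULift.{u} R := ULift.algEquiv.symm
  have he : Submodule.span C (Set.range e) = ⊤ := by
    rw [e.surjective.range_eq, Submodule.span_univ]
  obtain ⟨S, hS⟩ := Algebra.FiniteType.out (R := C) (A := R)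
  have hgen : Algebra.adjoin C (Set.range ((↑) : S → R)) = ⊤ := by simpa using hS
  refine exists_pow_subset_of_image e.toRingHom (d := 1) (by simp) ?_
  refine exists_pow_subset_of_isIntegral_of_notMem
    (List.finite_length_lt S d).toFinset.toList (h.map (φ := e.toAlgHom) he)
    (adjoin_range_comp_eq_top (φ := e.toAlgHom) he hgen) (fun v _ hlt hv => ?_)
    (N := N.map e.toMulEquiv) ?_
  · simp [hlt] at hv
  · rintro _ ⟨x, hx, rfl⟩
    exact (hN x hx).map e

theorem exists_forall_prod_ofFn_eq_zero {M : Type*} [MonoidWithZero M] {A : Set M}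
    (hA : ∃ s : ℕ, A ^ s ⊆ {0}) :
    ∃ s : ℕ, 1 ≤ s ∧ ∀ x : Fin s → M, (∀ i, x i ∈ A) → (List.ofFn x).prod = 0 := by
  obtain ⟨s, hs⟩ := hA
  refine ⟨s + 1, s.succ_pos, fun x hx => ?_⟩
  have htail : (List.ofFn fun i : Fin s => x i.succ).prod ∈ A ^ s :=
    Set.mem_pow.2 ⟨fun i => ⟨x i.succ, hx _⟩, rfl⟩
  rw [List.ofFn_succ, List.prod_cons, hs htail, mul_zero]

end RazmyslovBraunKemer

theorem razmyslov_braun_kemer_general {C : Type*} {R : Type*} {X : Type*} [CommRing C]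
    [IsNoetherianRing C] [Ring R] [Algebra C R] [Algebra.FiniteType C R] {f : FreeAlgebra C X}
    {w : FreeMonoid X} (hunit : IsUnit ((FreeAlgebra.equivMonoidAlgebraFreeMonoid f).coeff w))
    (hmax : ∀ v ∈ (FreeAlgebra.equivMonoidAlgebraFreeMonoid f).coeff.support, v.length ≤ w.length)
    (hf : ∀ a : X → R, FreeAlgebra.lift C a f = 0) {N : Subsemigroup R}
    (hN : ∀ x ∈ N, IsNilpotent x) :
    ∃ s : ℕ, 1 ≤ s ∧ ∀ x : Fin s → R, (∀ i, x i ∈ N) → (List.ofFn x).prod = 0 := by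
  obtain ⟨α, hα⟩ := RazmyslovBraunKemer.exists_isMonicMultilinearIdentity (R := R)
    (l := w.toList.get) (by simpa [FreeMonoid.length] using hunit) hmax
    fun a => (RazmyslovBraunKemer.freeAlgebra_lift_apply a f).symm.trans (hf a)
  exact RazmyslovBraunKemer.exists_forall_prod_ofFn_eq_zero (hα.exists_pow_subset_of_finiteType hN)

/-- **Razmyslov–Braun–Kemer theorem.** Let `F` be a field of arbitrary characteristic and
let `R` be a finitely generated `F`-algebra satisfying a nonzero polynomial identity. Then
the nil radical of `R` — the sum `N` (i.e. supremum) of all nil two-sided ideals of `R` —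
is nilpotent: there is `s ≥ 1` such that every product of `s` elements of `N` vanishes
(`N ^ s = 0`). -/
theorem razmyslov_braun_kemer (F : Type) [Field F]
    (R : Type) [Ring R] [Algebra F R] (hfg : Algebra.FiniteType F R)
    (hPI : ∃ f : FreeAlgebra F ℕ, f ≠ 0 ∧ ∀ a : ℕ → R, (FreeAlgebra.lift F a) f = 0) :
    ∃ s : ℕ, 1 ≤ s ∧ ∀ f : Fin s → R,
      (∀ i, f i ∈ sSup {I : TwoSidedIdeal R | ∀ y ∈ I, IsNilpotent y}) →
      (List.ofFn f).prod = 0 := by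
  obtain ⟨f, hf, hid⟩ := hPI
  obtain ⟨w, hw, hmax⟩ := (FreeAlgebra.equivMonoidAlgebraFreeMonoid f).coeff.support
    |>.exists_max_image FreeMonoid.length (by simpa using hf)
  let N : Subsemigroup R :=
    { carrier := RazmyslovBraunKemer.nilRadical R
      mul_mem' := fun _ hy => (RazmyslovBraunKemer.nilRadical R).mul_mem_left _ _ hy }
  exact razmyslov_braun_kemer_general (Finsupp.mem_support_iff.1 hw).isUnit hmax hid (N := N)
    fun _ => RazmyslovBraunKemer.isNilpotent_of_mem_nilRadical
end

section
/- Let R be an algebra over a field F satisfying a proper multilinear polynomial identity of degree d, i.e. an identity of the form Σ_{σ ∈ S_d} a_σ x_{σ(1)} x_{σ(2)} ⋯ x_{σ(d)} with coefficients a_σ ∈ F and a_{id} = 1. If T ⊆ R is a nil subring (a subring, not necessarily unital, all of whose elements are nilpotent), then T^{⌊d/2⌋} ⊆ N(R), where N(R) denotes the sum of all nilpotent two-sided ideals of R. (Levitzki–Amitsur theorem.) -/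
/-!
Two rewriting arguments with the identity `∑ σ, a σ • x_{σ 1} ⋯ x_{σ d} = 0`, which expresses
`x_1 ⋯ x_d` through its proper rearrangements.

*Shirshov.* A long enough word in a finite alphabet contains the `m`-th power of a word shorter
than `d`, or ends in `d` blocks whose rearrangements all make the word lexicographically smaller.
Evaluate words at finitely many elements of the nil subring `T`, with `m` such that the `m`-th
powers of all short words vanish. A lexicographically smallest nonvanishing word of a large length
`K` would have to be of the second kind, and the identity makes it a combination of smaller words,
which vanish. So the span `M` of finitely many elements of `T` satisfies `M ^ K = 0`.

*Amitsur.* Regroup `(R M ^ q R) ^ (d + 1)` as `R X_0 ⋯ X_{d - 1} R`, where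
`X_i = M ^ (q - ⌊i / 2⌋) R M ^ ⌊(i + 1) / 2⌋`; this needs `⌊d / 2⌋ ≤ q`. Any rearrangement of the
`X_i` other than the identity has adjacent factors `X_i X_j` with `j < i`, and between them
a power of `M` with exponent `⌊(i + 1) / 2⌋ + q - ⌊j / 2⌋ > q` appears. By the identity,
`(R M ^ q R) ^ (d + 1) ⊆ R M ^ (q + 1) R`. Starting at `q = ⌊d / 2⌋` and iterating until `M ^ K = 0`
shows that the ideal `R M ^ ⌊d / 2⌋ R` is nilpotent.
-/

/-- `x` comes lexicographically before `y` however the two words are continued. Over a linearly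
ordered alphabet this means that `x < y` and `x` is not a prefix of `y`. -/
def StablyLT {α : Type*} [LT α] (x y : List α) : Prop :=
  ∀ s t : List α, x ++ s < y ++ t

/-- Shirshov's `d`-decomposability of a word: `w` ends in `d` consecutive blocks, each of which
dominates all later ones lexicographically, so that every nontrivial rearrangement of the blocks
makes `w` smaller. The letters after the last block that other authors allow can be absorbed in that
block. -/
def IsDecomposable {α : Type*} [LT α] (d : ℕ) (w : List α) : Prop :=
  ∃ (u : List α) (bs : List (List α)), bs.length = d ∧ bs.Pairwise (fun b c ↦ StablyLT c b) ∧
    w = u ++ bs.flatten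

section Words

variable {α : Type*}

section LT

variable [LT α]

theorem StablyLT.of_length_eq :
    ∀ {x y : List α}, x.length = y.length → x < y → StablyLT x y
  | [], [], _, h => absurd h (List.not_lt_nil _)
  | a :: x, b :: y, hlen, h => fun s t ↦ by
    rw [List.cons_append, List.cons_append, List.cons_lt_cons_iff]
    rcases List.cons_lt_cons_iff.1 h with hab | ⟨hab, hxy⟩
    · exact Or.inl hab
    · exact Or.inr ⟨hab, of_length_eq (Nat.succ.inj hlen) hxy s t⟩

theorem StablyLT.of_isPrefix {x y x' y' : List α} (h : StablyLT x y) (hx : x <+: x')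
    (hy : y <+: y') : StablyLT x' y' := by
  obtain ⟨u, rfl⟩ := hx
  obtain ⟨v, rfl⟩ := hy
  intro s t
  simpa only [List.append_assoc] using h (u ++ s) (v ++ t)

theorem flatten_lt_flatten_of_perm_of_ne :
    ∀ {bs cs : List (List α)}, bs.Pairwise (fun b c ↦ StablyLT c b) → cs.Perm bs → cs ≠ bs →
      cs.flatten < bs.flatten
  | [], _, _, hperm, hne => absurd hperm.eq_nil hne
  | _ :: _, [], _, hperm, _ => absurd hperm.symm.eq_nil (List.cons_ne_nil _ _)
  | b :: bs, c :: cs, hpair, hperm, hne => by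
    rw [List.pairwise_cons] at hpair
    by_cases hcb : c = b
    · subst hcb
      exact List.append_left_lt <| flatten_lt_flatten_of_perm_of_ne hpair.2
        ((List.perm_cons c).1 hperm) fun h ↦ hne (congrArg (c :: ·) h)
    · have hc : c ∈ bs := List.mem_of_ne_of_mem hcb (hperm.subset List.mem_cons_self)
      exact hpair.1 c hc cs.flatten bs.flatten

theorem pairwise_stablyLT_of_forall₂_isPrefix {ws bs : List (List α)}
    (hws : ws.Pairwise (fun b c ↦ StablyLT c b)) (h : List.Forall₂ (· <+: ·) ws bs) :
    bs.Pairwise (fun b c ↦ StablyLT c b) := by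
  rw [List.forall₂_iff_get] at h
  rw [List.pairwise_iff_get] at hws ⊢
  intro i j hij
  exact (hws (i.cast h.1.symm) (j.cast h.1.symm) hij).of_isPrefix (h.2 _ _ _) (h.2 _ _ _)

end LT

theorem exists_flatten_isPrefix (L N : ℕ) {w : List α} (hw : N * L ≤ w.length) :
    ∃ B : List (List α), B.length = N ∧ (∀ b ∈ B, b.length = L) ∧ B.flatten <+: w := by
  induction N generalizing w with
  | zero => exact ⟨[], by simp⟩
  | succ N ih =>
    rw [Nat.succ_mul] at hw
    obtain ⟨B, hB, hlen, hpre⟩ := ih (w := w.drop L) (by rw [List.length_drop]; omega)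
    refine ⟨w.take L :: B, by simp [hB], ?_, ?_⟩
    · simpa only [List.forall_mem_cons, List.length_take, hlen] using ⟨by omega, fun _ ↦ hlen _⟩
    · rw [List.flatten_cons]
      conv_rhs => rw [← List.take_append_drop L w]
      exact (List.prefix_append_right_inj _).2 hpre

theorem exists_replicate_succ_sublist_of_card_mul_lt_length {β : Type*} {s : Finset β} {l : List β}
    {d : ℕ} (hl : ∀ x ∈ l, x ∈ s) (hd : s.card * d < l.length) :
    ∃ x, (List.replicate (d + 1) x).Sublist l := by
  classical
  have hcard : ∑ x ∈ s, l.count x = l.length := by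
    simpa only [Multiset.coe_count, Multiset.coe_card] using
      Multiset.sum_count_eq_card (s := s) (m := (l : Multiset β)) hl
  have hsum : ∑ _x ∈ s, d < ∑ x ∈ s, l.count x := by simpa [hcard] using hd
  obtain ⟨x, -, hx⟩ := Finset.exists_lt_of_sum_lt hsum
  exact ⟨x, List.replicate_sublist_iff.2 hx⟩

theorem exists_flatten_eq_append_of_sublist {vs ws B : List (List α)} (hvs : vs.Sublist B)
    (hws : List.Forall₂ (· <:+ ·) ws vs) :
    ∃ (u : List α) (bs : List (List α)),
      List.Forall₂ (· <+: ·) ws bs ∧ B.flatten = u ++ bs.flatten := by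
  induction hvs generalizing ws with
  | slnil => exact ⟨[], [], by simpa using hws, rfl⟩
  | cons b _ ih =>
    obtain ⟨u, bs, hbs, hB⟩ := ih hws
    exact ⟨b ++ u, bs, hbs, by rw [List.flatten_cons, hB, List.append_assoc]⟩
  | cons_cons v _ ih =>
    obtain ⟨w, ws, ⟨x, rfl⟩, htail, rfl⟩ := List.forall₂_cons_right_iff.1 hws
    obtain ⟨u, bs, hbs, hB⟩ := ih htail
    refine ⟨x, (w ++ u) :: bs, .cons (List.prefix_append w u) hbs, ?_⟩
    simp only [List.flatten_cons, hB, List.append_assoc]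

/-- The hypothesis on `v` says that `u ++ v` has period `u.length` on its first `u.length + n`
letters. -/
theorem flatten_replicate_isPrefix {u v : List α} {n : ℕ} (h : v.take n = (u ++ v).take n)
    {m : ℕ} (hm : u.length * m ≤ n) : (List.replicate m u).flatten <+: u ++ v := by
  induction m with
  | zero => simp
  | succ m ih =>
    have hle : u.length * m ≤ n := (Nat.mul_le_mul_left _ m.le_succ).trans hm
    have hpre : (List.replicate m u).flatten <+: (u ++ v).take n :=
      List.prefix_take_iff.2 ⟨ih hle, by simpa [mul_comm] using hle⟩
    rw [← h] at hpre
    rw [List.replicate_succ, List.flatten_cons]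
    exact (List.prefix_append_right_inj u).2 (hpre.trans (List.take_prefix n v))

theorem exists_power_infix_of_take_drop_eq {v : List α} {n m i j : ℕ} (hij : i < j)
    (hj : j ≤ v.length) (h : (v.drop i).take n = (v.drop j).take n) (hn : j * m ≤ n) :
    ∃ u : List α, u ≠ [] ∧ u.length ≤ j ∧ (List.replicate m u).flatten <:+: v := by
  set u := (v.drop i).take (j - i) with hu
  have hlen : u.length = j - i := by simp [hu]; omega
  have huv : u ++ v.drop j = v.drop i := by
    conv_rhs => rw [← List.take_append_drop (j - i) (v.drop i), List.drop_drop]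
    rw [hu, Nat.add_sub_cancel' hij.le]
  refine ⟨u, List.ne_nil_of_length_pos (by omega), by omega, ?_⟩
  have hpre := flatten_replicate_isPrefix (u := u) (v := v.drop j) (n := n) (m := m)
    (by rw [huv, h]) ((Nat.mul_le_mul_right m (by omega)).trans hn)
  exact (huv ▸ hpre).isInfix.trans (List.drop_suffix i v).isInfix

variable [LinearOrder α]

theorem exists_suffixes_pairwise_stablyLT {v : List α} {n d : ℕ} (hv : d + n ≤ v.length)
    (hinj : Set.InjOn (fun i ↦ (v.drop i).take n) (Finset.range d)) :
    ∃ ws : List (List α), ws.length = d ∧ (∀ w ∈ ws, w <:+ v) ∧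
      ws.Pairwise (fun b c ↦ StablyLT c b) := by
  classical
  let windows := (Finset.range d).image fun i ↦ (v.drop i).take n
  have hwindow : ∀ x ∈ windows, x.length = n ∧ ∃ w, w <:+ v ∧ x <+: w := by
    simp only [windows, Finset.forall_mem_image, Finset.mem_range]
    exact fun i hi ↦ ⟨by simp; omega, v.drop i, List.drop_suffix i v, List.take_prefix n _⟩
  choose! hlen suffixOf hsuffix hpre using hwindow
  have hsort : (windows.sort (· ≥ ·)).Pairwise (· > ·) := windows.sortedGT_sort.pairwise
  refine ⟨(windows.sort (· ≥ ·)).map suffixOf, ?_, ?_, ?_⟩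
  · simp [windows, Finset.card_image_of_injOn hinj]
  · simpa using hsuffix
  · refine List.pairwise_map.2 (hsort.imp_of_mem fun {x y} hx hy hxy ↦ ?_)
    rw [Finset.mem_sort] at hx hy
    exact (StablyLT.of_length_eq (by rw [hlen x hx, hlen y hy]) hxy).of_isPrefix
      (hpre y hy) (hpre x hx)

/-- The block of the decomposition starting in the `k`-th occurrence of `v` begins with the `k`-th
largest of the length-`n` windows of `v`. -/
theorem isDecomposable_flatten_of_replicate_sublist {v : List α} {B : List (List α)} {n d : ℕ}
    (hv : d + n ≤ v.length) (hB : (List.replicate d v).Sublist B)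
    (hinj : Set.InjOn (fun i ↦ (v.drop i).take n) (Finset.range d)) :
    IsDecomposable d B.flatten := by
  obtain ⟨ws, hlen, hsuffix, hpair⟩ := exists_suffixes_pairwise_stablyLT hv hinj
  have hws : List.Forall₂ (· <:+ ·) ws (List.replicate d v) :=
    List.forall₂_iff_get.2 ⟨by simp [hlen], fun i hi _ ↦ by
      simpa using hsuffix _ (ws.get_mem ⟨i, hi⟩)⟩
  obtain ⟨u, bs, hbs, hflat⟩ := exists_flatten_eq_append_of_sublist hB hws
  exact ⟨u, bs, hbs.length_eq.symm.trans hlen, pairwise_stablyLT_of_forall₂_isPrefix hpair hbs,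
    hflat⟩

theorem exists_power_infix_or_isDecomposable [Finite α] (d m : ℕ) :
    ∃ N, ∀ w : List α, N ≤ w.length →
      (∃ u : List α, u ≠ [] ∧ u.length < d ∧ (List.replicate m u).flatten <:+: w) ∨
        IsDecomposable d w := by
  let L := d + d * m
  let words : Finset (List α) := (List.finite_length_eq α L).toFinset
  refine ⟨(words.card * d + 1) * L, fun w hw ↦ ?_⟩
  obtain ⟨B, hBlen, hB, t, rfl⟩ := exists_flatten_isPrefix L (words.card * d + 1) hw
  obtain ⟨v, hrep⟩ : ∃ v, (List.replicate (d + 1) v).Sublist B :=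
    exists_replicate_succ_sublist_of_card_mul_lt_length (s := words)
      (by simpa [words] using hB) (by rw [hBlen]; exact Nat.lt_succ_self _)
  have hvB : v ∈ B := hrep.subset (List.mem_replicate.2 ⟨d.succ_ne_zero, rfl⟩)
  have hvL : v.length = L := hB v hvB
  by_cases hinj : Set.InjOn (fun i ↦ (v.drop i).take (d * m)) (Finset.range d)
  · right
    have hsub : (List.replicate d v).Sublist (B ++ [t]) :=
      ((List.sublist_cons_self v _).trans hrep).trans (List.sublist_append_left B [t])
    simpa using isDecomposable_flatten_of_replicate_sublist hvL.ge hsub hinj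
  · left
    obtain ⟨i, j, hij, hjd, hwin⟩ : ∃ i j, i < j ∧ j < d ∧
        (v.drop i).take (d * m) = (v.drop j).take (d * m) := by
      simp only [Set.InjOn, not_forall, Finset.coe_range, Set.mem_Iio] at hinj
      obtain ⟨i, hi, j, hj, hwin, hne⟩ := hinj
      rcases lt_or_gt_of_ne hne with hij | hji
      · exact ⟨i, j, hij, hj, hwin⟩
      · exact ⟨j, i, hji, hi, hwin.symm⟩
    obtain ⟨u, hu, huj, hpow⟩ := exists_power_infix_of_take_drop_eq hij (by omega) hwin
      (Nat.mul_le_mul_right m hjd.le)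
    have hvw : v <:+: B.flatten ++ t :=
      (List.infix_of_mem_flatten hvB).trans (List.prefix_append _ _).isInfix
    exact ⟨u, hu, huj.trans_lt hjd, hpow.trans hvw⟩

end Words

theorem exists_pow_eq_zero_of_finite {M : Type*} [MonoidWithZero M] {s : Set M} (hs : s.Finite)
    (hnil : ∀ x ∈ s, IsNilpotent x) : ∃ m, ∀ x ∈ s, x ^ m = 0 := by
  choose! k hk using hnil
  exact ⟨hs.toFinset.sup k, fun x hx ↦
    pow_eq_zero_of_le (Finset.le_sup (hs.mem_toFinset.2 hx)) (hk x hx)⟩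

theorem prod_map_eq_zero_of_isInfix {α M : Type*} [MonoidWithZero M] {f : α → M} {u w : List α}
    (huw : u <:+: w) (hu : (u.map f).prod = 0) : (w.map f).prod = 0 := by
  obtain ⟨s, t, rfl⟩ := huw
  simp [hu]

theorem prod_map_mem_of_ne_nil {α M : Type*} [Monoid M] (T : Subsemigroup M) {f : α → M}
    (hf : ∀ i, f i ∈ T) : ∀ {l : List α}, l ≠ [] → (l.map f).prod ∈ T
  | [], hl => absurd rfl hl
  | [i], _ => by simpa using hf i
  | i :: j :: l, _ => by
    rw [List.map_cons, List.prod_cons]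
    exact T.mul_mem (hf i) (prod_map_mem_of_ne_nil T hf (List.cons_ne_nil j l))

/-- Amitsur's regrouping: the `i`-th factor `x ^ q` is cut into `x ^ (i / 2) * x ^ (q - i / 2)`. -/
theorem sandwich_pow_succ {M : Type*} [Monoid M] {e : M} (he : IsIdempotentElem e)
    (x : M) {q n : ℕ} (hn : n / 2 ≤ q) :
    (e * x ^ q * e) ^ (n + 1) =
      e * (List.ofFn fun i : Fin n ↦ x ^ (q - i / 2) * e * x ^ ((i + 1 : ℕ) / 2)).prod *
        (x ^ (q - n / 2) * e) := by
  induction n with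
  | zero => simp [mul_assoc]
  | succ n ih =>
    have hq : x ^ q = x ^ ((n + 1) / 2) * x ^ (q - (n + 1) / 2) := by
      rw [← pow_add, Nat.add_sub_cancel' hn]
    rw [pow_succ, ih (by omega), List.ofFn_succ', List.concat_eq_append, List.prod_append,
      List.prod_singleton]
    simp only [Fin.val_castSucc, Fin.val_last]
    calc _ = e * (List.ofFn fun i : Fin n ↦ x ^ (q - i / 2) * e * x ^ ((i + 1 : ℕ) / 2)).prod *
        (x ^ (q - n / 2) * (e * e) * x ^ q * e) := by simp only [mul_assoc]
      _ = _ := by rw [he.eq, hq]; simp only [mul_assoc]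

theorem exists_descent_of_ne_one {d : ℕ} {σ : Equiv.Perm (Fin d)} (hσ : σ ≠ 1) :
    ∃ (i j : Fin d) (l₁ l₂ : List (Fin d)), j < i ∧ List.ofFn σ = l₁ ++ i :: j :: l₂ := by
  by_contra! hcon
  have hchain : (List.ofFn σ).IsChain (· < ·) :=
    List.isChain_iff_forall_rel_of_append_cons_cons.2 fun i j l₁ l₂ hl ↦ by
      refine lt_of_le_of_ne (not_lt.1 fun hji ↦ hcon i j l₁ l₂ hji hl) fun hij ↦ ?_
      have hnodup : (List.ofFn σ).Nodup := List.nodup_ofFn.2 σ.injective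
      simp [hl, hij, List.nodup_append] at hnodup
  have hmono : StrictMono σ := List.sortedLT_ofFn_iff.1 hchain.sortedLT
  exact hσ (Equiv.ext fun _ ↦ hmono.apply_eq)

section Submodule

variable {F R : Type*} [CommSemiring F] [Semiring R] [Algebra F R]

theorem prod_ofFn_le_of_forall_prod_mem {n : ℕ} {X : Fin n → Submodule F R}
    {N : Submodule F R} (h : ∀ x : Fin n → R, (∀ i, x i ∈ X i) → (List.ofFn x).prod ∈ N) :
    (List.ofFn X).prod ≤ N := by
  induction n generalizing N with
  | zero => simpa [Submodule.one_le] using h Fin.elim0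
  | succ n ih =>
    rw [List.ofFn_succ, List.prod_cons, Submodule.mul_le]
    intro y hy z hz
    have htail := ih (X := fun i ↦ X i.succ) (N := N.comap (LinearMap.mulLeft F y)) fun x hx ↦ by
      simpa [List.ofFn_succ] using h (Fin.cons y x) (Fin.cases hy hx)
    exact htail hz

theorem prod_ofFn_mem_prod_ofFn {n : ℕ} {X : Fin n → Submodule F R} {x : Fin n → R}
    (hx : ∀ i, x i ∈ X i) : (List.ofFn x).prod ∈ (List.ofFn X).prod := by
  induction n with
  | zero => exact Submodule.one_le.1 (le_refl (1 : Submodule F R))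
  | succ n ih =>
    simp only [List.ofFn_succ, List.prod_cons]
    exact Submodule.mul_mem_mul (hx 0) (ih fun i ↦ hx i.succ)

theorem isIdempotentElem_top_submodule : IsIdempotentElem (⊤ : Submodule F R) :=
  top_unique fun x _ ↦ mul_one x ▸ Submodule.mul_mem_mul Submodule.mem_top Submodule.mem_top

theorem antitone_top_mul_pow_mul_top (M : Submodule F R) : Antitone fun q : ℕ ↦ ⊤ * M ^ q * ⊤ := by
  intro p q hpq
  calc ⊤ * M ^ q * ⊤ = ⊤ * M ^ p * (M ^ (q - p) * ⊤) := by
        rw [← mul_assoc, mul_assoc ⊤ (M ^ p), ← pow_add, Nat.add_sub_cancel' hpq]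
    _ ≤ ⊤ * M ^ p * ⊤ := by gcongr; exact le_top

end Submodule

/-- `∑ σ, a σ • x_{σ 1} ⋯ x_{σ d}` is a proper multilinear polynomial identity of `R`. The algebra
`R` is explicit because `a` does not determine it. -/
structure IsProperMultilinearIdentity {F : Type*} [CommRing F] (R : Type*) [Ring R] [Algebra F R]
    {d : ℕ} (a : Equiv.Perm (Fin d) → F) : Prop where
  coeff_one : a 1 = 1
  sum_eq_zero : ∀ x : Fin d → R,
    ∑ σ : Equiv.Perm (Fin d), a σ • (List.ofFn fun i : Fin d => x (σ i)).prod = 0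

section Identity

variable {F R : Type*} [CommRing F] [Ring R] [Algebra F R] {d : ℕ} {a : Equiv.Perm (Fin d) → F}

theorem IsProperMultilinearIdentity.prod_ofFn_mem
    (h : IsProperMultilinearIdentity R a) (N : Submodule F R) {x : Fin d → R}
    (hx : ∀ σ : Equiv.Perm (Fin d), σ ≠ 1 → (List.ofFn fun i ↦ x (σ i)).prod ∈ N) :
    (List.ofFn x).prod ∈ N := by
  have hsum := h.sum_eq_zero x
  rw [← Finset.add_sum_erase _ _ (Finset.mem_univ 1), h.coeff_one, one_smul] at hsum
  have hprod : (List.ofFn x).prod = _ := eq_neg_of_add_eq_zero_left hsum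
  rw [hprod]
  exact N.neg_mem <| N.sum_mem fun σ hσ ↦ N.smul_mem _ <| hx σ (Finset.ne_of_mem_erase hσ)

theorem IsProperMultilinearIdentity.prod_map_eq_zero_of_isDecomposable {α : Type*} [LinearOrder α]
    (h : IsProperMultilinearIdentity R a) {f : α → R} {w : List α} (hw : IsDecomposable d w)
    (hlt : ∀ w' : List α, w'.length = w.length → w' < w → (w'.map f).prod = 0) :
    (w.map f).prod = 0 := by
  obtain ⟨u, bs, hlen, hpair, rfl⟩ := hw
  obtain ⟨b, rfl⟩ : ∃ b : Fin d → List α, bs = List.ofFn b := by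
    subst hlen
    exact ⟨bs.get, (List.ofFn_get bs).symm⟩
  have hinj : Function.Injective b := by
    refine List.nodup_ofFn.1 <| List.Pairwise.imp (fun {b c} (hcb : StablyLT c b) hbc ↦ ?_) hpair
    subst hbc
    exact lt_irrefl _ (hcb [] [])
  have hval : ∀ c : Fin d → List α, ((u ++ (List.ofFn c).flatten).map f).prod =
      (u.map f).prod * (List.ofFn fun i ↦ ((c i).map f).prod).prod := by
    intro c
    simp [List.prod_flatten, List.map_ofFn, Function.comp_def]
  rw [hval]
  refine LinearMap.mem_ker.1 <|
    h.prod_ofFn_mem (LinearMap.ker (LinearMap.mulLeft F (u.map f).prod)) fun σ hσ ↦ ?_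
  have hperm : (List.ofFn (b ∘ σ)).Perm (List.ofFn b) := Equiv.Perm.ofFn_comp_perm σ b
  have hne : List.ofFn (b ∘ σ) ≠ List.ofFn b := fun heq ↦
    hσ <| Equiv.ext fun i ↦ hinj <| congrFun (List.ofFn_injective heq) i
  have hzero := hlt (u ++ (List.ofFn (b ∘ σ)).flatten)
    (by rw [List.length_append, List.length_append, hperm.flatten.length_eq])
    (List.append_left_lt (flatten_lt_flatten_of_perm_of_ne hpair hperm hne))
  rwa [hval] at hzero

theorem IsProperMultilinearIdentity.exists_prod_map_eq_zero {α : Type*} [LinearOrder α] [Finite α]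
    (h : IsProperMultilinearIdentity R a) {f : α → R}
    (hnil : ∀ l : List α, l ≠ [] → IsNilpotent (l.map f).prod) :
    ∃ K, ∀ w : List α, w.length = K → (w.map f).prod = 0 := by
  obtain ⟨m, hm⟩ : ∃ m, ∀ x ∈ (fun l ↦ (l.map f).prod) '' {l : List α | l.length < d ∧ l ≠ []},
      x ^ m = 0 :=
    exists_pow_eq_zero_of_finite
      (((List.finite_length_lt α d).subset fun _ hl ↦ hl.1).image _)
      (Set.forall_mem_image.2 fun l hl ↦ hnil l hl.2)
  obtain ⟨K, hK⟩ := exists_power_infix_or_isDecomposable (α := α) d m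
  have hwf : {w : List α | w.length = K}.WellFoundedOn (· < ·) :=
    (List.finite_length_eq α K).wellFoundedOn
  refine ⟨K, fun w hw ↦ hwf.induction (P := fun w ↦ (w.map f).prod = 0) hw fun w hw ih ↦ ?_⟩
  rcases hK w hw.ge with ⟨u, hu, hud, hpow⟩ | hdec
  · refine prod_map_eq_zero_of_isInfix hpow ?_
    simpa [List.prod_flatten] using hm _ ⟨u, ⟨hud, hu⟩, rfl⟩
  · exact h.prod_map_eq_zero_of_isDecomposable hdec fun w' hlen ↦ ih w' (hlen.trans hw)

open scoped Pointwise in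
theorem IsProperMultilinearIdentity.exists_span_pow_eq_bot (h : IsProperMultilinearIdentity R a)
    {S : Set R} (hS : S.Finite) (hnil : ∀ t ∈ Subsemigroup.closure S, IsNilpotent t) :
    ∃ K, Submodule.span F S ^ K = ⊥ := by
  let _ : LinearOrder S := IsWellOrder.linearOrder WellOrderingRel
  have : Finite S := hS
  obtain ⟨K, hK⟩ := h.exists_prod_map_eq_zero (f := ((↑) : S → R)) fun l hl ↦
    hnil _ <| prod_map_mem_of_ne_nil _ (fun i ↦ Subsemigroup.subset_closure i.2) hl
  refine ⟨K, ?_⟩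
  rw [Submodule.span_pow, Submodule.span_eq_bot]
  rintro y hy
  obtain ⟨g, rfl⟩ := Set.mem_pow.1 hy
  simpa only [List.map_ofFn, Function.comp_def] using hK (List.ofFn g) List.length_ofFn

theorem IsProperMultilinearIdentity.prod_ofFn_le (h : IsProperMultilinearIdentity R a)
    {X : Fin d → Submodule F R} {N : Submodule F R}
    (hX : ∀ σ : Equiv.Perm (Fin d), σ ≠ 1 → (List.ofFn fun i ↦ X (σ i)).prod ≤ N) :
    (List.ofFn X).prod ≤ N :=
  prod_ofFn_le_of_forall_prod_mem fun _ hx ↦ h.prod_ofFn_mem N fun σ hσ ↦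
    hX σ hσ (prod_ofFn_mem_prod_ofFn fun i ↦ hx (σ i))

theorem IsProperMultilinearIdentity.top_sandwich_pow_succ_le (h : IsProperMultilinearIdentity R a)
    (M : Submodule F R) {q : ℕ} (hq : d / 2 ≤ q) :
    (⊤ * M ^ q * ⊤) ^ (d + 1) ≤ ⊤ * M ^ (q + 1) * ⊤ := by
  let X : Fin d → Submodule F R := fun i ↦ M ^ (q - i / 2) * ⊤ * M ^ ((i + 1 : ℕ) / 2)
  set N := ⊤ * M ^ (q + 1) * ⊤ with hN
  have htop : IsIdempotentElem (⊤ : Submodule F R) := isIdempotentElem_top_submodule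
  have habsorb : ∀ A B P : Submodule F R, P ≤ N → A * P * B ≤ N := fun A B P hP ↦
    calc A * P * B ≤ ⊤ * N * ⊤ := by gcongr <;> exact le_top
      _ = ⊤ * ⊤ * M ^ (q + 1) * (⊤ * ⊤) := by simp only [hN, mul_assoc]
      _ = N := by rw [htop.eq]
  have hdescent : ∀ i j, j < i → X i * X j ≤ N := fun i j hji ↦
    calc X i * X j
        = M ^ (q - i / 2) * (⊤ * M ^ ((i + 1 : ℕ) / 2 + (q - j / 2)) * ⊤) *
            M ^ ((j + 1 : ℕ) / 2) := by
          simp only [X, pow_add, mul_assoc]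
      _ ≤ N := habsorb _ _ _ <| antitone_top_mul_pow_mul_top M (by have := Fin.lt_def.1 hji; omega)
  have hperm : ∀ σ : Equiv.Perm (Fin d), σ ≠ 1 → (List.ofFn fun i ↦ X (σ i)).prod ≤ N := by
    intro σ hσ
    obtain ⟨i, j, l₁, l₂, hji, hl⟩ := exists_descent_of_ne_one hσ
    have hprod : (List.ofFn fun i ↦ X (σ i)).prod =
        (l₁.map X).prod * (X i * X j) * (l₂.map X).prod := by
      change (List.ofFn (X ∘ σ)).prod = _
      rw [← List.map_ofFn, hl]
      simp [mul_assoc]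
    exact hprod ▸ habsorb _ _ _ (hdescent i j hji)
  rw [sandwich_pow_succ htop M hq]
  exact habsorb _ _ _ (h.prod_ofFn_le hperm)

theorem IsProperMultilinearIdentity.top_sandwich_pow_pow_le (h : IsProperMultilinearIdentity R a)
    (M : Submodule F R) (k : ℕ) :
    (⊤ * M ^ (d / 2) * ⊤) ^ (d + 1) ^ k ≤ ⊤ * M ^ (d / 2 + k) * ⊤ := by
  induction k with
  | zero => simp
  | succ k ih =>
    rw [pow_succ, pow_mul]
    exact (pow_le_pow_left' ih (d + 1)).trans (h.top_sandwich_pow_succ_le M (Nat.le_add_right _ k))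

end Identity

/-- The sum `N(R)` of all nilpotent two-sided ideals of `R`. Nilpotency of an ideal is phrased
through products of `s` of its elements. -/
def wedderburnRadical (R : Type*) [Ring R] : TwoSidedIdeal R :=
  sSup {I : TwoSidedIdeal R |
    ∃ s : ℕ, 1 ≤ s ∧ ∀ g : Fin s → R, (∀ i, g i ∈ I) → (List.ofFn g).prod = 0}

theorem mem_wedderburnRadical_of_pow_eq_bot {F R : Type*} [CommRing F] [Ring R]
    [Algebra F R] {M : Submodule F R} {s : ℕ} (hs : 1 ≤ s) (hM : (⊤ * M * ⊤) ^ s = ⊥) {x : R}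
    (hx : x ∈ M) : x ∈ wedderburnRadical R := by
  have hspan : ∀ y ∈ TwoSidedIdeal.span (M : Set R), y ∈ ⊤ * M * ⊤ := by
    intro y hy
    rw [TwoSidedIdeal.mem_span_iff_mem_addSubgroup_closure] at hy
    refine (AddSubgroup.closure_le (⊤ * M * ⊤).toAddSubgroup).2 ?_ hy
    rintro _ ⟨_, ⟨r, -, m, hm, rfl⟩, r', -, rfl⟩
    exact Submodule.mul_mem_mul (Submodule.mul_mem_mul Submodule.mem_top hm) Submodule.mem_top
  have hle : TwoSidedIdeal.span (M : Set R) ≤ wedderburnRadical R := by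
    refine le_sSup ⟨s, hs, fun g hg ↦ ?_⟩
    have hprod := prod_ofFn_mem_prod_ofFn fun i ↦ hspan _ (hg i)
    rwa [List.ofFn_const, List.prod_replicate, hM, Submodule.mem_bot] at hprod
  exact TwoSidedIdeal.le_iff.1 hle (TwoSidedIdeal.subset_span hx)

theorem levitzki_amitsur_general (F : Type*) [CommRing F] (R : Type*) [Ring R] [Algebra F R]
    (d : ℕ) (a : Equiv.Perm (Fin d) → F) (h : IsProperMultilinearIdentity R a)
    (T : Subsemigroup R) (hT : ∀ t ∈ T, IsNilpotent t) :
    ∀ f : Fin (d / 2) → R, (∀ i, f i ∈ T) →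
      (List.ofFn f).prod ∈ wedderburnRadical R := by
  intro f hf
  let M := Submodule.span F (Set.range f)
  have hclosure : Subsemigroup.closure (Set.range f) ≤ T :=
    Subsemigroup.closure_le.2 (Set.range_subset_iff.2 hf)
  obtain ⟨K, hK⟩ : ∃ K, M ^ K = ⊥ :=
    h.exists_span_pow_eq_bot (Set.finite_range f) fun t ht ↦ hT t (hclosure ht)
  have hnil : (⊤ * M ^ (d / 2) * ⊤) ^ (d + 1) ^ K = ⊥ :=
    le_bot_iff.1 <| (h.top_sandwich_pow_pow_le M K).trans_eq <| by
      rw [pow_add, hK, Submodule.mul_bot, Submodule.mul_bot, Submodule.bot_mul]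
  have hprod : (List.ofFn f).prod ∈ M ^ (d / 2) := by
    have hfM : ∀ i, f i ∈ M := fun i ↦ Submodule.subset_span (Set.mem_range_self i)
    simpa using prod_ofFn_mem_prod_ofFn hfM
  exact mem_wedderburnRadical_of_pow_eq_bot (Nat.one_le_pow _ _ d.succ_pos) hnil hprod

/-- **Levitzki–Amitsur theorem.** Let `R` be an `F`-algebra satisfying a proper multilinear
polynomial identity of degree `d`, i.e. `∑ σ ∈ S_d, a σ • x_{σ(1)} ⋯ x_{σ(d)} = 0` for all
substitutions, where the coefficient of the identity permutation is `1`. If `T ⊆ R` is a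
nil subring (not necessarily unital), then every product of `⌊d/2⌋` elements of `T` lies in
`N(R)`, the sum (supremum) of all nilpotent two-sided ideals of `R`; since `N(R)` is closed
under addition this says `T ^ ⌊d/2⌋ ⊆ N(R)`. -/
theorem levitzki_amitsur (F : Type*) [Field F] (R : Type*) [Ring R] [Algebra F R]
    (d : ℕ) (a : Equiv.Perm (Fin d) → F) (ha : a 1 = 1)
    (hid : ∀ x : Fin d → R,
      ∑ σ : Equiv.Perm (Fin d), a σ • (List.ofFn fun i : Fin d => x (σ i)).prod = 0)
    (T : NonUnitalSubring R) (hT : ∀ t ∈ T, IsNilpotent t) :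
    ∀ f : Fin (d / 2) → R, (∀ i, f i ∈ T) →
      (List.ofFn f).prod ∈
        sSup {I : TwoSidedIdeal R |
          ∃ s : ℕ, 1 ≤ s ∧ ∀ g : Fin s → R, (∀ i, g i ∈ I) → (List.ofFn g).prod = 0} :=
  levitzki_amitsur_general F R d a ⟨ha, hid⟩ T.toSubsemigroup hT
end
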